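/- arXiv:math/0303250 — 3 statements merged into one kernel-verified Lean document; each statement's English description precedes it below -/
import Mathlib

section
/- Let m ≥ 1 and 0 ≤ a ≤ m−1 be integers and set T_m^{(a)}(n) = (1/2)·(−1)^{n+1}·L(−2n−1, χ_{8m+4}^{(a)}), where L(s, χ_{8m+4}^{(a)}) is the entire analytic continuation of Σ_{n≥1} χ_{8m+4}^{(a)}(n) n^{−s}. Then for every K ∈ ℕ, as t → 0⁺ (t real, positive), −(1/2)·Σ_{n=1}^∞ n·χ_{8m+4}^{(a)}(n)·exp(−t·(n² − (2m−2a−1)²)/(8(2m+1))) = e^{(2m−2a−1)²·t/(8(2m+1))} · Σ_{n=0}^{K−1} (T_m^{(a)}(n)/n!)·(t/(8(2m+1)))^n + O(t^K). -/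
open scoped Topology

/-- The (8m+4)-periodic function `χ_{8m+4}^{(a)}` (for `1 ≤ m`, `a ≤ m-1`):
it equals 1 at `n ≡ 2m-2a-1, 6m+2a+5 (mod 8m+4)`, `-1` at
`n ≡ 2m+2a+3, 6m-2a+1 (mod 8m+4)`, and 0 otherwise. -/
def chiGen (m a n : ℕ) : ℤ :=
  if n % (8 * m + 4) = (2 * m - 2 * a - 1) % (8 * m + 4) then 1
  else if n % (8 * m + 4) = (6 * m + 2 * a + 5) % (8 * m + 4) then 1
  else if n % (8 * m + 4) = (2 * m + 2 * a + 3) % (8 * m + 4) then -1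
  else if n % (8 * m + 4) = (6 * m - 2 * a + 1) % (8 * m + 4) then -1
  else 0


open MeasureTheory Set Filter Polynomial in
noncomputable def gP (p : ℝ[X]) (x : ℝ) : ℝ := p.eval x * Real.exp (-x ^ 2)

noncomputable def dP (p : Polynomial ℝ) : Polynomial ℝ :=
  Polynomial.derivative p - 2 * Polynomial.X * p

lemma gP_hasDerivAt (p : Polynomial ℝ) (x : ℝ) : HasDerivAt (gP p) (gP (dP p) x) x := by
  have h1 := p.hasDerivAt x
  have h2 : HasDerivAt (fun x : ℝ => Real.exp (-x ^ 2)) (Real.exp (-x ^ 2) * (-(2 * x))) x := by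
    have := ((hasDerivAt_pow 2 x).neg).exp
    simpa using this
  have h3 := h1.mul h2
  refine h3.congr_deriv ?_
  simp [gP, dP]
  ring

lemma gP_continuous (p : Polynomial ℝ) : Continuous (gP p) :=
  continuous_iff_continuousAt.2 fun x => (gP_hasDerivAt p x).continuousAt

lemma gP_integrable (p : Polynomial ℝ) : MeasureTheory.Integrable (gP p) := by
  unfold gP
  induction p using Polynomial.induction_on' with
  | add p q hp hq =>
    simp only [Polynomial.eval_add, add_mul]
    exact hp.add hq
  | monomial n c =>
    have := integrable_rpow_mul_exp_neg_mul_sq (b := 1) one_pos (s := n)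
      (by have : (0:ℝ) ≤ n := n.cast_nonneg
          linarith)
    simp only [Polynomial.eval_monomial, mul_assoc]
    refine MeasureTheory.Integrable.const_mul ?_ c
    simpa using this

lemma gP_tendsto (p : Polynomial ℝ) : Filter.Tendsto (gP p) Filter.atTop (𝓝 0) :=
  MeasureTheory.tendsto_zero_of_hasDerivAt_of_integrableOn_Ioi (a := 0)
    (fun x _ => gP_hasDerivAt p x) (gP_integrable _).integrableOn (gP_integrable _).integrableOn

structure NiceP (T : ℝ) (X : ℝ → ℝ) : Prop where
  meas : Measurable X
  bdd : ∃ C, ∀ x, |X x| ≤ C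
  per : Function.Periodic X T
  rc : ∀ x, ContinuousWithinAt X (Set.Ioi x) x

lemma NiceP.intInt {T : ℝ} {X : ℝ → ℝ} (h : NiceP T X) (a b : ℝ) :
    IntervalIntegrable X MeasureTheory.volume a b := by
  obtain ⟨C, hC⟩ := h.bdd
  refine (intervalIntegrable_const (c := C)).mono_fun h.meas.aestronglyMeasurable ?_
  refine Filter.Eventually.of_forall fun x => ?_
  exact (hC x).trans (le_abs_self C)

lemma NiceP.integrable {T : ℝ} {X : ℝ → ℝ} (h : NiceP T X) (p : Polynomial ℝ) (ε : ℝ) :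
    MeasureTheory.Integrable (fun y => X (y / ε) * gP p y) := by
  obtain ⟨C, hC⟩ := h.bdd
  refine (gP_integrable p).bdd_mul (c := C) ?_ ?_
  · exact (h.meas.comp (measurable_id.div_const ε)).aestronglyMeasurable
  · exact Filter.Eventually.of_forall fun x => hC _

lemma NiceP.step {T : ℝ} (hT : 0 < T) {X : ℝ → ℝ} (h : NiceP T X) :
    ∃ (m : ℝ) (Y : ℝ → ℝ), NiceP T Y ∧ ∀ (p : Polynomial ℝ) (ε : ℝ), 0 < ε →
      ∫ y in Set.Ioi 0, X (y / ε) * gP p y =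
        m * (∫ y in Set.Ioi 0, gP p y) - ε * ∫ y in Set.Ioi 0, Y (y / ε) * gP (dP p) y := by
  obtain ⟨C, hC⟩ := h.bdd
  set m : ℝ := (∫ x in (0:ℝ)..T, X x) / T with hm
  have hN0 : NiceP T (fun x => X x - m) := by
    refine ⟨h.meas.sub_const m, ⟨C + |m|, fun x => ?_⟩, fun x => ?_, fun x => ?_⟩
    · exact (abs_sub _ _).trans (by linarith [hC x])
    · simp [h.per x]
    · exact (h.rc x).sub continuousWithinAt_const
  set Y : ℝ → ℝ := fun x => ∫ t in (0:ℝ)..x, (X t - m) with hY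
  have hYc : Continuous Y := intervalIntegral.continuous_primitive (fun a b => hN0.intInt a b) 0
  have hper0 : ∫ t in (0:ℝ)..T, (X t - m) = 0 := by
    rw [intervalIntegral.integral_sub (h.intInt _ _) (by simp)]
    simp [hm]; field_simp; simp
  have hYper : Function.Periodic Y T := by
    intro x
    have h1 := intervalIntegral.integral_add_adjacent_intervals (hN0.intInt 0 x) (hN0.intInt x (x+T))
    have h2 := hN0.per.intervalIntegral_add_eq x 0
    simp only [zero_add] at h2
    rw [h2, hper0] at h1
    simp only [hY]; linarith
  have hYder : ∀ x, HasDerivWithinAt Y (X x - m) (Set.Ioi x) x := by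
    intro x
    exact (intervalIntegral.integral_hasDerivWithinAt_right (hN0.intInt 0 x)
      (t := Set.Ioi x) (s := Set.Ici x)
      ⟨Set.univ, Filter.univ_mem, hN0.meas.aestronglyMeasurable⟩ (hN0.rc x)).mono
      Set.Ioi_subset_Ici_self
  have hNY : NiceP T Y := by
    refine ⟨hYc.measurable, ?_, hYper, fun x => hYc.continuousWithinAt⟩
    obtain ⟨B, hB⟩ := (isCompact_Icc (a := (0:ℝ)) (b := T)).exists_bound_of_continuousOn
      hYc.continuousOn
    refine ⟨B, fun x => ?_⟩
    obtain ⟨y, hy, hxy⟩ := hYper.exists_mem_Ico₀ hT x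
    rw [hxy]
    exact hB y ⟨hy.1, hy.2.le⟩
  refine ⟨m, Y, hNY, fun p ε hε => ?_⟩
  have hYb := hNY.bdd
  obtain ⟨B, hB⟩ := hYb
  -- integration by parts
  have hfin : ∀ R : ℝ, ∫ y in (0:ℝ)..R, (ε * Y (y / ε)) * gP (dP p) y =
      (ε * Y (R / ε)) * gP p R - (ε * Y (0 / ε)) * gP p 0 -
        ∫ y in (0:ℝ)..R, (X (y / ε) - m) * gP p y := by
    intro R
    refine intervalIntegral.integral_mul_deriv_eq_deriv_mul_of_hasDeriv_right ?_
      (gP_continuous p).continuousOn ?_ ?_ ?_ ?_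
    · exact (continuous_const.mul (hYc.comp (continuous_id.div_const ε))).continuousOn
    · intro x _
      have h1 : HasDerivWithinAt (fun y => y / ε) (1 / ε) (Set.Ioi x) x :=
        ((hasDerivAt_id x).div_const ε).hasDerivWithinAt
      have h2 := (hYder (x / ε)).comp x h1 (fun y hy => by
        simp only [Set.mem_Ioi] at hy ⊢; exact div_lt_div_of_pos_right hy hε)
      have h3 := h2.const_mul ε
      refine h3.congr_deriv ?_
      field_simp
    · intro x _
      exact (gP_hasDerivAt p x).hasDerivWithinAt
    · have hb : ∀ y, ‖X (y / ε) - m‖ ≤ C + |m| := fun y =>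
        (abs_sub _ _).trans (by linarith [hC (y / ε)])
      refine (intervalIntegrable_const (c := C + |m|)).mono_fun
        (hN0.meas.comp (measurable_id.div_const ε)).aestronglyMeasurable ?_
      exact Filter.Eventually.of_forall fun x => (hb x).trans (le_abs_self _)
    · exact (gP_continuous _).intervalIntegrable _ _
  have hi1 := (hN0.integrable p ε)
  have hi2 := (hNY.integrable (dP p) ε)
  have t1 := MeasureTheory.intervalIntegral_tendsto_integral_Ioi 0 (hi2.const_mul ε).integrableOn
    (Filter.tendsto_id (x := Filter.atTop))
  have t2 := MeasureTheory.intervalIntegral_tendsto_integral_Ioi 0 hi1.integrableOn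
    (Filter.tendsto_id (x := Filter.atTop))
  have t3 : Filter.Tendsto (fun R => (ε * Y (R / ε)) * gP p R) Filter.atTop (𝓝 0) := by
    refine squeeze_zero_norm (a := fun R => (ε * B) * |gP p R|) (fun R => ?_) ?_
    · rw [norm_mul, norm_mul, Real.norm_eq_abs, abs_of_pos hε]
      have := hB (R / ε)
      rw [Real.norm_eq_abs, Real.norm_eq_abs]
      gcongr
    · simpa using (gP_tendsto p).abs.const_mul (ε * B)
  have t4 := (t3.sub_const ((ε * Y (0 / ε)) * gP p 0)).sub t2
  have t5 : ∫ y in Set.Ioi 0, ε * (Y (y / ε) * gP (dP p) y) =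
      0 - (ε * Y (0 / ε)) * gP p 0 - ∫ y in Set.Ioi 0, (X (y / ε) - m) * gP p y := by
    refine tendsto_nhds_unique t1 (t4.congr fun R => ?_)
    have := hfin R
    simp only [id, mul_assoc] at this ⊢
    rw [this]
  have hY0 : Y (0 / ε) = 0 := by simp [hY]
  rw [hY0, MeasureTheory.integral_const_mul] at t5
  have t6 : ∫ y in Set.Ioi 0, (X (y / ε) - m) * gP p y =
      (∫ y in Set.Ioi 0, X (y / ε) * gP p y) - m * ∫ y in Set.Ioi 0, gP p y := by
    rw [← MeasureTheory.integral_const_mul, ← MeasureTheory.integral_sub]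
    · simp [sub_mul]
    · exact (h.integrable p ε).integrableOn
    · exact ((gP_integrable p).const_mul m).integrableOn
  rw [t6] at t5
  linarith

lemma NiceP.expand {T : ℝ} (hT : 0 < T) (J : ℕ) : ∀ (p : Polynomial ℝ) (X : ℝ → ℝ), NiceP T X →
    ∃ c : ℕ → ℝ, (fun ε : ℝ => (∫ y in Set.Ioi 0, X (y / ε) * gP p y)
      - ∑ j ∈ Finset.range J, c j * ε ^ j) =O[𝓝[>] (0:ℝ)] fun ε => ε ^ J := by
  induction J with
  | zero =>
    intro p X h
    refine ⟨0, ?_⟩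
    obtain ⟨C, hC⟩ := h.bdd
    simp only [Finset.range_zero, Finset.sum_empty, sub_zero, pow_zero]
    refine Asymptotics.IsBigO.of_bound (∫ y in Set.Ioi 0, C * |gP p y|) ?_
    refine Filter.Eventually.of_forall fun ε => ?_
    simp only [norm_one, mul_one]
    refine MeasureTheory.norm_integral_le_of_norm_le ((gP_integrable p).abs.const_mul C).integrableOn ?_
    refine Filter.Eventually.of_forall fun y => ?_
    rw [norm_mul]
    exact mul_le_mul_of_nonneg_right (hC _) (abs_nonneg _)
  | succ J ih =>
    intro p X h
    obtain ⟨m, Y, hY, hs⟩ := h.step hT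
    obtain ⟨c, hc⟩ := ih (dP p) Y hY
    refine ⟨fun j => Nat.casesOn j (m * ∫ y in Set.Ioi 0, gP p y) (fun i => - c i), ?_⟩
    have h1 : (fun ε : ℝ => (-ε) * ((∫ y in Set.Ioi 0, Y (y / ε) * gP (dP p) y)
      - ∑ j ∈ Finset.range J, c j * ε ^ j)) =O[𝓝[>] (0:ℝ)] fun ε => ε * ε ^ J :=
      (Asymptotics.isBigO_refl _ _).neg_left.mul hc
    refine (h1.congr' ?_ ?_)
    · filter_upwards [self_mem_nhdsWithin] with ε hε
      rw [hs p ε hε, Finset.sum_range_succ']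
      simp only [pow_zero, mul_one]
      rw [mul_sub, Finset.mul_sum]
      have : ∑ i ∈ Finset.range J, -ε * (c i * ε ^ i) = ∑ i ∈ Finset.range J, -c i * ε ^ (i + 1) :=
        Finset.sum_congr rfl fun i _ => by ring
      rw [this]
      change _ = (_ - _) - (_ + m * ∫ y in Set.Ioi 0, gP p y)
      linarith
    · exact Filter.Eventually.of_forall fun ε => by ring

noncomputable def thetaF (c : ℕ → ℝ) (u : ℝ) : ℝ :=
  ∑' n : ℕ, c n * ((n : ℝ) * Real.exp (-u * (n : ℝ) ^ 2))

structure GoodC (N : ℕ) (c : ℕ → ℝ) : Prop where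
  per : ∀ n, c (n + N) = c n
  sum : ∑ k ∈ Finset.range N, c k = 0
  zero : c 0 = 0
  bdd : ∀ n, |c n| ≤ 1

lemma summable_nexp {u : ℝ} (hu : 0 < u) :
    Summable fun n : ℕ => (n : ℝ) * Real.exp (-u * (n : ℝ) ^ 2) := by
  have h := Real.summable_pow_mul_exp_neg_nat_mul 1 hu
  refine Summable.of_nonneg_of_le (fun n => by positivity) (fun n => ?_) h
  rw [pow_one]
  refine mul_le_mul_of_nonneg_left (Real.exp_le_exp.2 ?_) n.cast_nonneg
  rcases Nat.eq_zero_or_pos n with h | h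
  · simp [h]
  · have : (1:ℝ) ≤ n := by exact_mod_cast h
    nlinarith [mul_pos hu (show (0:ℝ) < n by linarith)]

lemma GoodC.summable {N : ℕ} {c : ℕ → ℝ} (h : GoodC N c) {u : ℝ} (hu : 0 < u) :
    Summable fun n : ℕ => c n * ((n : ℝ) * Real.exp (-u * (n : ℝ) ^ 2)) := by
  refine Summable.of_norm_bounded (summable_nexp hu) fun n => ?_
  rw [norm_mul]
  have h2 : ‖(n : ℝ) * Real.exp (-u * (n : ℝ) ^ 2)‖ = (n : ℝ) * Real.exp (-u * (n : ℝ) ^ 2) :=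
    Real.norm_of_nonneg (by positivity)
  rw [h2]
  have : 0 ≤ (n : ℝ) * Real.exp (-u * (n : ℝ) ^ 2) := by positivity
  exact mul_le_of_le_one_left this (h.bdd n)

noncomputable def stepX (N : ℕ) (c : ℕ → ℝ) (x : ℝ) : ℝ :=
  ∑ k ∈ Finset.range ((⌊x⌋ % (N : ℤ)).toNat + 1), c k

lemma GoodC.sumper {N : ℕ} {c : ℕ → ℝ} (h : GoodC N c) :
    Function.Periodic (fun n => ∑ k ∈ Finset.range (n + 1), c k) N := by
  intro n
  simp only
  rw [show n + N + 1 = N + (n + 1) by ring, Finset.sum_range_add, h.sum, zero_add]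
  refine Finset.sum_congr rfl fun k _ => ?_
  rw [add_comm, h.per]

lemma GoodC.stepX_eq {N : ℕ} {c : ℕ → ℝ} (h : GoodC N c) {x : ℝ} (hx : 0 ≤ x) :
    ∑ k ∈ Finset.Icc 0 ⌊x⌋₊, c k = stepX N c x := by
  unfold stepX
  have h1 : ⌊x⌋ = ((⌊x⌋₊ : ℕ) : ℤ) := (Int.natCast_floor_eq_floor hx).symm
  rw [h1, ← Int.natCast_mod, Int.toNat_natCast]
  have := h.sumper.map_mod_nat ⌊x⌋₊
  rw [this]
  refine Finset.sum_congr ?_ fun _ _ => rfl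
  ext k; simp only [Finset.mem_range, Finset.mem_Icc]; omega

lemma GoodC.nice {N : ℕ} (hN : 0 < N) {c : ℕ → ℝ} (h : GoodC N c) : NiceP N (stepX N c) := by
  refine ⟨?_, ⟨N, fun x => ?_⟩, fun x => ?_, fun x => ?_⟩
  · exact (measurable_of_countable (fun z : ℤ => ∑ k ∈ Finset.range ((z % (N : ℤ)).toNat + 1), c k)).comp
      Int.measurable_floor
  · unfold stepX
    refine (Finset.abs_sum_le_sum_abs _ _).trans ?_
    refine (Finset.sum_le_sum fun k _ => h.bdd k).trans ?_
    simp only [Finset.sum_const, Finset.card_range, nsmul_eq_mul, mul_one]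
    have h1 := Int.emod_lt_of_pos ⌊x⌋ (show (0:ℤ) < N by exact_mod_cast hN)
    have h2 := Int.emod_nonneg ⌊x⌋ (show (N:ℤ) ≠ 0 by exact_mod_cast hN.ne')
    have h3 : (⌊x⌋ % (N : ℤ)).toNat + 1 ≤ N := by omega
    exact_mod_cast h3
  · unfold stepX
    rw [Int.floor_add_natCast, Int.add_emod_right]
  · have h1 := (tendsto_floor_right_pure_floor x).mono_left (nhdsWithin_mono x Set.Ioi_subset_Ici_self)
    have h2 : Filter.Tendsto (stepX N c) (𝓝[>] x) (pure (stepX N c x)) := by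
      rw [Filter.tendsto_pure] at h1 ⊢
      filter_upwards [h1] with y hy
      unfold stepX
      rw [hy]
    exact h2.mono_right (pure_le_nhds _)

lemma GoodC.abel {N : ℕ} (hN : 0 < N) {c : ℕ → ℝ} (h : GoodC N c) {ε : ℝ} (hε : 0 < ε) :
    ε * thetaF c (ε ^ 2) =
      - ∫ y in Set.Ioi 0, stepX N c (y / ε) * gP (dP Polynomial.X) y := by
  have hnice := h.nice hN
  obtain ⟨C, hC⟩ := hnice.bdd
  set f : ℝ → ℝ := fun x => gP Polynomial.X (ε * x) with hf
  have hfd : ∀ x, HasDerivAt f (ε * gP (dP Polynomial.X) (ε * x)) x := by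
    intro x
    have h1 : HasDerivAt (fun x => ε * x) ε x := by simpa using (hasDerivAt_id x).const_mul ε
    have := (gP_hasDerivAt Polynomial.X (ε * x)).comp x h1
    refine this.congr_deriv (mul_comm _ _)
  have hderiv : deriv f = fun x => ε * gP (dP Polynomial.X) (ε * x) := funext fun x => (hfd x).deriv
  have hint : MeasureTheory.Integrable (deriv f) := by
    rw [hderiv]
    exact ((gP_integrable (dP Polynomial.X)).comp_mul_left' hε.ne').const_mul ε
  have key := tendsto_sum_mul_atTop_nhds_one_sub_integral c (f := f) (l := 0)
    (fun t _ => (hfd t).differentiableAt) (hint.locallyIntegrable.locallyIntegrableOn _) ?_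
    (g := deriv f) ?_ (hint.integrableAtFilter _)
  · have hs : HasSum (fun k : ℕ => f k * c k) (ε * thetaF c (ε ^ 2)) := by
      have := (h.summable (u := ε ^ 2) (by positivity)).hasSum.mul_left ε
      refine this.congr_fun fun n => ?_
      simp only [hf, gP, Polynomial.eval_X]
      rw [show -(ε * (n:ℝ)) ^ 2 = -ε ^ 2 * (n:ℝ) ^ 2 by ring]
      ring
    have h2 := hs.tendsto_sum_nat.comp (Filter.tendsto_add_atTop_nat 1)
    have h3 := tendsto_nhds_unique (h2.congr fun n => by
      simp only [Function.comp]
      refine Finset.sum_congr (s₂ := Finset.Icc 0 n) ?_ fun _ _ => rfl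
      ext k; simp only [Finset.mem_range, Finset.mem_Icc]; omega) key
    rw [h3, zero_sub]
    congr 1
    have h4 := MeasureTheory.integral_comp_mul_left_Ioi
      (fun y => stepX N c (y / ε) * gP (dP Polynomial.X) y) 0 hε
    rw [mul_zero, smul_eq_mul] at h4
    have h5 : ∫ y in Set.Ioi 0, stepX N c (y / ε) * gP (dP Polynomial.X) y =
       ε * ∫ x in Set.Ioi 0, stepX N c (ε * x / ε) * gP (dP Polynomial.X) (ε * x) := by
      rw [h4]; field_simp
    rw [h5, ← MeasureTheory.integral_const_mul]
    refine MeasureTheory.setIntegral_congr_fun measurableSet_Ioi fun t ht => ?_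
    rw [h.stepX_eq (le_of_lt ht), hderiv, mul_div_cancel_left₀ _ hε.ne']
    ring
  · have hfl : Filter.Tendsto f Filter.atTop (𝓝 0) :=
      (gP_tendsto _).comp (Filter.tendsto_id.const_mul_atTop hε)
    have hfl2 := hfl.comp (tendsto_natCast_atTop_atTop (R := ℝ))
    refine squeeze_zero_norm (a := fun n : ℕ => |f n| * C) (fun n => ?_) ?_
    · rw [norm_mul]
      have h1 := h.stepX_eq (x := (n:ℝ)) n.cast_nonneg
      rw [Nat.floor_natCast] at h1
      rw [h1]
      exact mul_le_mul_of_nonneg_left (hC _) (abs_nonneg _)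
    · simpa using hfl2.abs.mul_const C
  · refine Asymptotics.IsBigO.of_bound C ?_
    filter_upwards [Filter.eventually_ge_atTop 0] with t ht
    rw [h.stepX_eq ht, norm_mul, mul_comm]
    exact mul_le_mul_of_nonneg_right (hC _) (norm_nonneg _)

/-- Expansion in powers of `√u`. -/
lemma GoodC.expand {N : ℕ} (hN : 0 < N) {c : ℕ → ℝ} (h : GoodC N c) (J : ℕ) :
    ∃ d : ℕ → ℝ, (fun u : ℝ => thetaF c u - ∑ j ∈ Finset.range J, d j * u ^ (((j:ℝ) - 1) / 2))
      =O[𝓝[>] (0:ℝ)] fun u => u ^ (((J:ℝ) - 1) / 2) := by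
  obtain ⟨d, hd⟩ := NiceP.expand (T := N) (by exact_mod_cast hN) J (dP Polynomial.X) _ (h.nice hN)
  refine ⟨fun j => - d j, ?_⟩
  have hsq : Filter.Tendsto (fun u : ℝ => √u) (𝓝[>] 0) (𝓝[>] 0) := by
    refine tendsto_nhdsWithin_iff.2 ⟨?_, ?_⟩
    · have := (Real.continuous_sqrt.tendsto 0).mono_left (nhdsWithin_le_nhds (s := Set.Ioi 0))
      simpa using this
    · filter_upwards [self_mem_nhdsWithin] with u hu
      exact Real.sqrt_pos.2 hu
  have h1 := hd.comp_tendsto hsq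
  have h2 := ((Asymptotics.isBigO_refl (fun u : ℝ => (√u)⁻¹) (𝓝[>] 0)).neg_left).mul h1
  have hpow : ∀ (u : ℝ), 0 < u → ∀ j : ℕ, (√u)⁻¹ * (√u) ^ j = u ^ (((j:ℝ) - 1) / 2) := by
    intro u hu j
    rw [Real.sqrt_eq_rpow, ← Real.rpow_neg hu.le, ← Real.rpow_natCast, ← Real.rpow_mul hu.le,
      ← Real.rpow_add hu]
    congr 1; ring
  refine h2.congr' ?_ ?_
  · filter_upwards [self_mem_nhdsWithin] with u hu
    have hu' : 0 < √u := Real.sqrt_pos.2 hu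
    have h3 := h.abel hN hu'
    rw [Real.sq_sqrt (le_of_lt hu)] at h3
    simp only [Function.comp]
    have h4 : ∫ y in Set.Ioi 0, stepX N c (y / √u) * gP (dP Polynomial.X) y
      = -(√u * thetaF c u) := by linarith
    rw [h4, mul_sub, Finset.mul_sum]
    have h5 : ∑ i ∈ Finset.range J, -(√u)⁻¹ * (d i * √u ^ i) =
        ∑ j ∈ Finset.range J, -d j * u ^ (((j:ℝ) - 1) / 2) :=
      Finset.sum_congr rfl fun j _ => by rw [← hpow u hu j]; ring
    rw [h5]
    congr 1
    field_simp
  · filter_upwards [self_mem_nhdsWithin] with u hu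
    exact hpow u hu J

lemma hasDerivAt_rGamma (k : ℕ) :
    HasDerivAt (fun s : ℂ => (Complex.Gamma s)⁻¹) ((-1) ^ k * (k.factorial : ℂ)) (-(k : ℂ)) := by
  have hd := Complex.differentiable_one_div_Gamma
  have hfun : (fun s : ℂ => (Complex.Gamma s)⁻¹) = fun s => s * (Complex.Gamma (s + 1))⁻¹ :=
    funext Complex.one_div_Gamma_eq_self_mul_one_div_Gamma_add_one
  induction k with
  | zero =>
    have h1 : HasDerivAt (fun s : ℂ => (Complex.Gamma (s + 1))⁻¹)
        (deriv (fun s : ℂ => (Complex.Gamma s)⁻¹) (0 + 1)) 0 :=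
      HasDerivAt.comp_add_const 0 1 (hd (0 + 1)).hasDerivAt
    have h2 := (hasDerivAt_id (0:ℂ)).mul h1
    rw [hfun]
    simp only [Nat.cast_zero, neg_zero]
    refine h2.congr_deriv ?_
    simp
  | succ k ih =>
    have h1 : HasDerivAt (fun s : ℂ => (Complex.Gamma (s + 1))⁻¹)
        ((-1) ^ k * (k.factorial : ℂ)) (-((k+1 : ℕ) : ℂ)) := by
      have ih2 : HasDerivAt (fun s : ℂ => (Complex.Gamma s)⁻¹) ((-1) ^ k * (k.factorial : ℂ))
          (-((k+1 : ℕ) : ℂ) + 1) := by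
        convert ih using 1
        push_cast; ring
      exact HasDerivAt.comp_add_const (-((k+1 : ℕ) : ℂ)) 1 ih2
    have h2 := (hasDerivAt_id (-((k+1 : ℕ) : ℂ))).mul h1
    rw [hfun]
    refine h2.congr_deriv ?_
    have h3 : -((k+1 : ℕ) : ℂ) + 1 = -(k:ℂ) := by push_cast; ring
    rw [h3, Complex.Gamma_neg_nat_eq_zero, Nat.factorial_succ]
    simp only [id]
    push_cast; ring

lemma GoodC.continuousOn {N : ℕ} {c : ℕ → ℝ} (h : GoodC N c) :
    ContinuousOn (thetaF c) (Set.Ioi 0) := by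
  intro u hu
  have hu : 0 < u := hu
  have hδ : 0 < u / 2 := by positivity
  have h1 : ContinuousOn (thetaF c) (Set.Ici (u / 2)) := by
    unfold thetaF
    refine continuousOn_tsum (fun n => ?_) (summable_nexp hδ) (fun n x hx => ?_)
    · fun_prop
    · rw [norm_mul]
      have h2 : ‖(n : ℝ) * Real.exp (-x * (n : ℝ) ^ 2)‖ ≤ (n : ℝ) * Real.exp (-(u/2) * (n : ℝ) ^ 2) := by
        rw [Real.norm_of_nonneg (by positivity)]
        refine mul_le_mul_of_nonneg_left (Real.exp_le_exp.2 ?_) n.cast_nonneg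
        have : u / 2 ≤ x := hx
        nlinarith [sq_nonneg (n:ℝ)]
      exact (mul_le_of_le_one_left (norm_nonneg _) (h.bdd n)).trans h2
  exact (h1.continuousAt (Ici_mem_nhds (by linarith))).continuousWithinAt

lemma GoodC.top {N : ℕ} {c : ℕ → ℝ} (h : GoodC N c) :
    thetaF c =O[Filter.atTop] fun t => Real.exp (-1 * t) := by
  refine Asymptotics.IsBigO.of_bound
    (∑' n : ℕ, Real.exp 1 * ((n : ℝ) * Real.exp (-1 * (n : ℝ) ^ 2))) ?_
  filter_upwards [Filter.eventually_ge_atTop 1] with u hu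
  have hs := ((summable_nexp one_pos).mul_left (Real.exp 1))
  rw [Real.norm_of_nonneg (Real.exp_nonneg _), ← tsum_mul_right]
  refine tsum_of_norm_bounded (hs.mul_right (Real.exp (-1 * u))).hasSum fun n => ?_
  rw [norm_mul]
  refine (mul_le_of_le_one_left (norm_nonneg _) (h.bdd n)).trans ?_
  rw [Real.norm_of_nonneg (by positivity)]
  have : Real.exp 1 * ((n:ℝ) * Real.exp (-1 * (n:ℝ) ^ 2)) * Real.exp (-1 * u)
      = n * Real.exp (1 + -1 * (n:ℝ) ^ 2 + -1 * u) := by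
    rw [Real.exp_add, Real.exp_add]; ring
  rw [this]
  rcases Nat.eq_zero_or_pos n with h0 | h0
  · simp [h0]
  refine mul_le_mul_of_nonneg_left (Real.exp_le_exp.2 ?_) n.cast_nonneg
  have h1 : (1:ℝ) ≤ n := by exact_mod_cast h0
  nlinarith [mul_nonneg (sub_nonneg.2 hu) (show (0:ℝ) ≤ (n:ℝ)^2 - 1 by nlinarith)]

lemma hasMellin_finset (S : Finset ℕ) (d : ℕ → ℂ) (a : ℕ → ℂ) :
    MeasureTheory.LocallyIntegrableOn (fun t : ℝ => ∑ j ∈ S, d j •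
      (Set.Ioc (0:ℝ) 1).indicator (fun t : ℝ => (t:ℂ) ^ a j) t) (Set.Ioi 0) ∧
    ∀ s : ℂ, (∀ j ∈ S, 0 < s.re + (a j).re) →
      HasMellin (fun t : ℝ => ∑ j ∈ S, d j •
      (Set.Ioc (0:ℝ) 1).indicator (fun t : ℝ => (t:ℂ) ^ a j) t) s (∑ j ∈ S, d j • (1 / (s + a j))) := by
  classical
  induction S using Finset.induction_on with
  | empty =>
    refine ⟨?_, fun s _ => ?_⟩
    · simp only [Finset.sum_empty]
      exact continuousOn_const.locallyIntegrableOn measurableSet_Ioi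
    · simp only [Finset.sum_empty]
      refine ⟨?_, ?_⟩
      · simp [MellinConvergent]
      · simp [mellin]
  | insert i S hi ih =>
    simp only [Finset.sum_insert hi]
    refine ⟨?_, fun s hs => ?_⟩
    · refine MeasureTheory.LocallyIntegrableOn.add ?_ ih.1
      have hc : ContinuousOn (fun t : ℝ => (t:ℂ) ^ a i) (Set.Ioi 0) := by
        intro t ht
        exact ((Complex.continuousAt_ofReal_cpow_const t (a i) (Or.inr (ne_of_gt ht)))).continuousWithinAt
      have hl := hc.locallyIntegrableOn (μ := MeasureTheory.volume) measurableSet_Ioi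
      intro x hx
      obtain ⟨t, ht, hint⟩ := hl x hx
      exact ⟨t, ht, (hint.indicator measurableSet_Ioc).smul (d i)⟩
    · have h1 := hasMellin_cpow_Ioc (a i) (hs i (Finset.mem_insert_self _ _))
      have h2 := hasMellin_const_smul h1.1 (d i)
      rw [h1.2] at h2
      have h3 := ih.2 s fun j hj => hs j (Finset.mem_insert_of_mem hj)
      have h4 := hasMellin_add h2.1 h3.1
      rwa [h2.2, h3.2] at h4

lemma GoodC.mellin_eq {N : ℕ} {c : ℕ → ℝ} (h : GoodC N c) {L : ℂ → ℂ}
    (hLs : ∀ s : ℂ, 1 < s.re →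
      HasSum (fun n : ℕ => (c (n + 1) : ℂ) / ((n : ℂ) + 1) ^ s) (L s))
    {s : ℂ} (hs : 1 < s.re) :
    mellin (fun u => (thetaF c u : ℂ)) s = Complex.Gamma s * L (2 * s - 1) := by
  have h1 : HasSum (fun n : ℕ => Complex.Gamma s * ((c n * n : ℝ) : ℂ) / (((n:ℝ) ^ 2 : ℝ) : ℂ) ^ s)
      (mellin (fun u => (thetaF c u : ℂ)) s) := by
    refine hasSum_mellin (fun n => ?_) (by linarith) (fun t ht => ?_) ?_
    · rcases Nat.eq_zero_or_pos n with h0 | h0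
      · left; simp [h0]
      · right; positivity
    · have := (h.summable (u := t) ht).hasSum
      have h2 := Complex.hasSum_ofReal.2 this
      unfold thetaF
      refine h2.congr_fun fun n => ?_
      rw [show -(n:ℝ)^2 * t = -t * (n:ℝ)^2 by ring]
      push_cast; ring
    · have hsum := Real.summable_one_div_nat_rpow.2 (show 1 < 2 * s.re - 1 by linarith)
      refine Summable.of_nonneg_of_le (fun n => by positivity) (fun n => ?_) hsum
      rcases Nat.eq_zero_or_pos n with h0 | h0
      · simp [h0]; positivity
      have hn : (0:ℝ) < n := by exact_mod_cast h0
      rw [Complex.norm_real, norm_mul, Real.norm_of_nonneg hn.le, ← Real.rpow_natCast,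
        ← Real.rpow_mul hn.le, Real.rpow_sub hn, Real.rpow_one]
      have : ‖c n‖ * (n:ℝ) ≤ n := mul_le_of_le_one_left hn.le (h.bdd n)
      rw [one_div_div]
      push_cast
      gcongr
  have h2 := (hLs (2 * s - 1) (by simp; linarith)).mul_left (Complex.Gamma s)
  have h3 := (hasSum_nat_add_iff' 1).2 h1
  simp only [Finset.range_one, Finset.sum_singleton, Nat.cast_zero, mul_zero, Complex.ofReal_zero,
    zero_div, sub_zero] at h3
  refine h3.unique (h2.congr_fun fun n => ?_)
  have hn : (0:ℝ) < (n:ℝ) + 1 := by positivity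
  have hne : ((n:ℂ) + 1) ≠ 0 := by exact_mod_cast hn.ne'
  have h4 : ((((n + 1 : ℕ):ℝ) ^ 2 : ℝ) : ℂ) ^ s = ((n:ℂ) + 1) ^ (2 * s - 1) * ((n:ℂ) + 1) := by
    have h5 : (((n + 1 : ℕ):ℝ) ^ 2 : ℝ) = ((n:ℝ) + 1) * ((n:ℝ) + 1) := by push_cast; ring
    rw [h5, Complex.ofReal_mul, Complex.mul_cpow_ofReal_nonneg hn.le hn.le]
    have h6 : (((n:ℝ) + 1 : ℝ) : ℂ) = (n:ℂ) + 1 := by push_cast; ring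
    rw [h6, Complex.cpow_sub _ _ hne, Complex.cpow_one, div_mul_cancel₀ _ hne, two_mul,
      Complex.cpow_add _ _ hne]
  have h7 : ((n:ℂ) + 1) ^ (2 * s - 1) ≠ 0 := by
    rw [Ne, Complex.cpow_eq_zero_iff]; tauto
  rw [h4]
  push_cast
  field_simp

/-- The exponents. -/
noncomputable def expo (j : ℕ) : ℝ := ((j:ℝ) - 1) / 2

lemma expo_inj {i j : ℕ} (h : expo i = expo j) : i = j := by
  unfold expo at h
  have : (i:ℝ) = j := by linarith
  exact_mod_cast this

lemma GoodC.key {N : ℕ} (hN : 0 < N) {c : ℕ → ℝ} (h : GoodC N c) {L : ℂ → ℂ}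
    (hL : Differentiable ℂ L)
    (hLs : ∀ s : ℂ, 1 < s.re →
      HasSum (fun n : ℕ => (c (n + 1) : ℂ) / ((n : ℂ) + 1) ^ s) (L s))
    (J : ℕ) (d : ℕ → ℝ)
    (hd : (fun u : ℝ => thetaF c u - ∑ j ∈ Finset.range J, d j * u ^ (expo j))
      =O[𝓝[>] (0:ℝ)] fun u => u ^ (expo J)) :
    ∃ M : ℂ → ℂ, ∀ s : ℂ, -expo J < s.re → DifferentiableAt ℂ M s ∧
      ((∀ j ∈ Finset.range J, s + (expo j : ℂ) ≠ 0) →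
        (Complex.Gamma s)⁻¹ * M s = L (2 * s - 1) -
          ∑ j ∈ Finset.range J, (d j : ℂ) * (Complex.Gamma s)⁻¹ / (s + (expo j : ℂ))) := by
  set PI : ℝ → ℂ := fun t : ℝ => ∑ j ∈ Finset.range J, (d j : ℂ) •
      (Set.Ioc (0:ℝ) 1).indicator (fun t : ℝ => (t:ℂ) ^ (expo j : ℂ)) t with hPI
  have hfin := hasMellin_finset (Finset.range J) (fun j => (d j : ℂ)) (fun j => (expo j : ℂ))
  set F : ℝ → ℂ := fun u => (thetaF c u : ℂ) with hF
  have hFl : MeasureTheory.LocallyIntegrableOn F (Set.Ioi 0) :=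
    (Complex.continuous_ofReal.comp_continuousOn h.continuousOn).locallyIntegrableOn
      measurableSet_Ioi
  have hFtop : F =O[Filter.atTop] fun t => Real.exp (-1 * t) := by
    refine Asymptotics.IsBigO.trans ?_ h.top
    exact Asymptotics.isBigO_of_le _ fun x => by simp [hF]
  have hFbot : F =O[𝓝[>] 0] fun t : ℝ => t ^ (-(1/2 : ℝ)) := by
    obtain ⟨d0, hd0⟩ := h.expand hN 0
    refine Asymptotics.IsBigO.trans (g := thetaF c) ?_ ?_
    · exact Asymptotics.isBigO_of_le _ fun x => by simp [hF]
    · refine hd0.congr (fun u => by simp) (fun u => ?_)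
      congr 1; norm_num
  set R : ℝ → ℂ := fun t => F t - PI t with hR
  have hRl : MeasureTheory.LocallyIntegrableOn R (Set.Ioi 0) := hFl.sub hfin.1
  have hRtop : R =O[Filter.atTop] fun t => Real.exp (-1 * t) := by
    refine hFtop.congr' ?_ Filter.EventuallyEq.rfl
    filter_upwards [Filter.eventually_gt_atTop 1] with t ht
    have : PI t = 0 := by
      simp only [hPI]
      refine Finset.sum_eq_zero fun j _ => ?_
      rw [Set.indicator_of_notMem (by simp [ht]), smul_zero]
    simp [hR, this]
  have hRbot : R =O[𝓝[>] 0] fun t : ℝ => t ^ (-(-expo J)) := by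
    rw [neg_neg]
    refine Asymptotics.IsBigO.trans ?_ hd
    refine Asymptotics.IsBigO.of_bound 1 ?_
    filter_upwards [Ioc_mem_nhdsGT (zero_lt_one' ℝ)] with t ht
    have : R t = ((thetaF c t - ∑ j ∈ Finset.range J, d j * t ^ (expo j) : ℝ) : ℂ) := by
      simp only [hR, hF, hPI]
      push_cast
      congr 1
      refine Finset.sum_congr rfl fun j _ => ?_
      rw [Set.indicator_of_mem ht, smul_eq_mul, Complex.ofReal_cpow ht.1.le]
    rw [this, Complex.norm_real, one_mul]
  have hMd : ∀ s : ℂ, -expo J < s.re → DifferentiableAt ℂ (mellin R) s := fun s hs =>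
    mellin_differentiableAt_of_isBigO_rpow_exp one_pos hRl hRtop hRbot hs
  have hMeq : ∀ s : ℂ, 1 < s.re → mellin R s = Complex.Gamma s * L (2 * s - 1) -
      ∑ j ∈ Finset.range J, (d j : ℂ) • (1 / (s + (expo j : ℂ))) := by
    intro s hs
    have h1 : MellinConvergent F s :=
      mellinConvergent_of_isBigO_rpow_exp one_pos hFl hFtop hFbot (by linarith)
    have h2 := hfin.2 s fun j _ => by
      rw [Complex.ofReal_re]; unfold expo
      have : (0:ℝ) ≤ j := j.cast_nonneg
      linarith
    have h3 := hasMellin_sub h1 h2.1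
    rw [h2.2, h.mellin_eq hLs hs] at h3
    exact h3.2
  refine ⟨mellin R, fun s hs => ⟨hMd s hs, fun hne => ?_⟩⟩
  -- identity theorem
  set U : Set ℂ := {s : ℂ | -expo J < s.re} with hU
  have hUo : IsOpen U := isOpen_lt continuous_const Complex.continuous_re
  have hUc : IsPreconnected U := (convex_halfSpace_re_gt _).isPreconnected
  set Q : ℂ → ℂ := fun s => ∏ j ∈ Finset.range J, (s + (expo j : ℂ)) with hQ
  have hQd : Differentiable ℂ Q := by
    simp only [hQ]
    fun_prop
  have hrG := Complex.differentiable_one_div_Gamma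
  set A : ℂ → ℂ := fun s => Q s * ((Complex.Gamma s)⁻¹ * mellin R s) with hA
  set B : ℂ → ℂ := fun s => Q s * L (2 * s - 1) - (Complex.Gamma s)⁻¹ *
    ∑ j ∈ Finset.range J, (d j : ℂ) * ∏ i ∈ (Finset.range J).erase j, (s + (expo i : ℂ)) with hB
  have hAd : DifferentiableOn ℂ A U := fun z hz =>
    ((hQd z).mul ((hrG z).mul (hMd z hz))).differentiableWithinAt
  have hBd : DifferentiableOn ℂ B U := by
    refine Differentiable.differentiableOn ?_
    refine Differentiable.sub (hQd.mul (hL.comp (by fun_prop))) (hrG.mul ?_)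
    fun_prop
  have hBQ : ∀ z : ℂ, (∀ j ∈ Finset.range J, z + (expo j : ℂ) ≠ 0) →
      B z = Q z * (L (2 * z - 1) -
        ∑ j ∈ Finset.range J, (d j : ℂ) * (Complex.Gamma z)⁻¹ / (z + (expo j : ℂ))) := by
    intro z hz
    simp only [hB]
    rw [mul_sub, Finset.mul_sum, Finset.mul_sum]
    congr 1
    refine Finset.sum_congr rfl fun j hj => ?_
    simp only [hQ]
    rw [← Finset.mul_prod_erase _ _ hj]
    have := hz j hj
    field_simp
  set z0 : ℂ := ((2 + |expo J| : ℝ) : ℂ) with hz0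
  have hzmem : z0 ∈ U := by
    simp only [hU, hz0, Set.mem_ofPred_eq, Complex.ofReal_re]
    linarith [neg_abs_le (expo J)]
  have hev : A =ᶠ[𝓝 z0] B := by
    have hopen : IsOpen {z : ℂ | 1 < z.re} := isOpen_lt continuous_const Complex.continuous_re
    have hmem : z0 ∈ {z : ℂ | 1 < z.re} := by
      simp only [hz0, Set.mem_ofPred_eq, Complex.ofReal_re]
      linarith [abs_nonneg (expo J)]
    filter_upwards [hopen.mem_nhds hmem] with z hz
    have hz : 1 < z.re := hz
    have hzne : ∀ j ∈ Finset.range J, z + (expo j : ℂ) ≠ 0 := by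
      intro j _ h0
      have := congrArg Complex.re h0
      simp only [Complex.add_re, Complex.ofReal_re, Complex.zero_re] at this
      unfold expo at this
      have : (0:ℝ) ≤ j := j.cast_nonneg
      linarith
    rw [hBQ z hzne]
    simp only [hA]
    rw [hMeq z hz]
    have hG : Complex.Gamma z ≠ 0 := Complex.Gamma_ne_zero_of_re_pos (by linarith)
    congr 1
    rw [mul_sub, inv_mul_cancel_left₀ hG, Finset.mul_sum]
    congr 1
    refine Finset.sum_congr rfl fun j _ => ?_
    rw [smul_eq_mul]; ring
  have hEq := (hAd.analyticOnNhd hUo).eqOn_of_preconnected_of_eventuallyEq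
    (hBd.analyticOnNhd hUo) hUc hzmem hev
  have h1 := hEq hs
  rw [hBQ s hne] at h1
  exact mul_left_cancel₀ (Finset.prod_ne_zero_iff.2 hne) h1

lemma GoodC.key2 {N : ℕ} (hN : 0 < N) {c : ℕ → ℝ} (h : GoodC N c) {L : ℂ → ℂ}
    (hL : Differentiable ℂ L)
    (hLs : ∀ s : ℂ, 1 < s.re →
      HasSum (fun n : ℕ => (c (n + 1) : ℂ) / ((n : ℂ) + 1) ^ s) (L s))
    (J : ℕ) (d : ℕ → ℝ)
    (hd : (fun u : ℝ => thetaF c u - ∑ j ∈ Finset.range J, d j * u ^ (expo j))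
      =O[𝓝[>] (0:ℝ)] fun u => u ^ (expo J)) (i : ℕ) (hi : i < J) :
    ∃ H : ℂ → ℂ, ContinuousAt H (-(expo i : ℂ)) ∧
      (∀ᶠ s in 𝓝[≠] (-(expo i : ℂ)), (d i : ℂ) * (Complex.Gamma s)⁻¹ = (s - (-(expo i : ℂ))) * H s) ∧
      ((Complex.Gamma (-(expo i : ℂ)))⁻¹ = 0 → H (-(expo i : ℂ)) = L (2 * (-(expo i : ℂ)) - 1)) := by
  obtain ⟨M, hM⟩ := h.key hN hL hLs J d hd
  have hrG := Complex.differentiable_one_div_Gamma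
  set s0 : ℂ := -(expo i : ℂ) with hs0
  have hre : -expo J < s0.re := by
    simp only [hs0, Complex.neg_re, Complex.ofReal_re]
    unfold expo
    have : (i:ℝ) < J := by exact_mod_cast hi
    linarith
  have hne0 : ∀ j ∈ (Finset.range J).erase i, s0 + (expo j : ℂ) ≠ 0 := by
    intro j hj h0
    have h1 : (expo j : ℂ) = (expo i : ℂ) := by
      rw [hs0] at h0; linear_combination h0
    exact (Finset.mem_erase.1 hj).1 (expo_inj (Complex.ofReal_injective h1))
  refine ⟨fun s => L (2 * s - 1) - (Complex.Gamma s)⁻¹ * M s -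
    ∑ j ∈ (Finset.range J).erase i, (d j : ℂ) * (Complex.Gamma s)⁻¹ / (s + (expo j : ℂ)),
    ?_, ?_, ?_⟩
  · refine ContinuousAt.sub (ContinuousAt.sub ?_ ?_) ?_
    · have : Continuous fun s : ℂ => L (2 * s - 1) := hL.continuous.comp (by fun_prop)
      exact this.continuousAt
    · exact (hrG s0).continuousAt.mul (hM s0 hre).1.continuousAt
    · refine tendsto_finsetSum _ fun j hj => ?_
      refine Filter.Tendsto.div (Filter.Tendsto.const_mul _ (hrG s0).continuousAt) ?_ (hne0 j hj)
      exact (continuous_id.add continuous_const).continuousAt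
  · have hU : ∀ᶠ s in 𝓝[≠] s0, -expo J < s.re :=
      nhdsWithin_le_nhds ((isOpen_lt continuous_const Complex.continuous_re).mem_nhds hre)
    have hn : ∀ᶠ s in 𝓝[≠] s0, ∀ j ∈ (Finset.range J).erase i, s + (expo j : ℂ) ≠ 0 := by
      refine nhdsWithin_le_nhds ?_
      refine (Filter.eventually_all_finset _).2 fun j hj => ?_
      have hc : ContinuousAt (fun s : ℂ => s + (expo j : ℂ)) s0 :=
        (continuous_id.add continuous_const).continuousAt
      exact hc.eventually_ne (hne0 j hj)
    filter_upwards [hU, hn, self_mem_nhdsWithin] with s h1 h2 h3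
    have h3 : s ≠ s0 := h3
    have h4 : s + (expo i : ℂ) ≠ 0 := by
      intro h0; apply h3; rw [hs0]; linear_combination h0
    have h5 := (hM s h1).2 (fun j hj => by
      by_cases hji : j = i
      · rw [hji]; exact h4
      · exact h2 j (Finset.mem_erase.2 ⟨hji, hj⟩))
    rw [← Finset.add_sum_erase _ _ (Finset.mem_range.2 hi)] at h5
    have h6 : s - s0 = s + (expo i : ℂ) := by rw [hs0]; ring
    rw [h6, h5]
    field_simp
    ring
  · intro h0
    simp only [h0]
    simp

lemma GoodC.even_coeff {N : ℕ} (hN : 0 < N) {c : ℕ → ℝ} (h : GoodC N c) {L : ℂ → ℂ}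
    (hL : Differentiable ℂ L)
    (hLs : ∀ s : ℂ, 1 < s.re →
      HasSum (fun n : ℕ => (c (n + 1) : ℂ) / ((n : ℂ) + 1) ^ s) (L s))
    (J : ℕ) (d : ℕ → ℝ)
    (hd : (fun u : ℝ => thetaF c u - ∑ j ∈ Finset.range J, d j * u ^ (expo j))
      =O[𝓝[>] (0:ℝ)] fun u => u ^ (expo J)) (k : ℕ) (hi : 2 * k < J) : d (2 * k) = 0 := by
  obtain ⟨H, hH, hev, -⟩ := h.key2 hN hL hLs J d hd _ hi
  have hrG := Complex.differentiable_one_div_Gamma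
  set s0 : ℂ := -(expo (2 * k) : ℂ) with hs0
  have t1 : Filter.Tendsto (fun s => (d (2 * k) : ℂ) * (Complex.Gamma s)⁻¹) (𝓝[≠] s0)
      (𝓝 ((d (2 * k) : ℂ) * (Complex.Gamma s0)⁻¹)) :=
    ((hrG s0).continuousAt.const_mul _ : Filter.Tendsto _ _ _).mono_left nhdsWithin_le_nhds
  have t2 : Filter.Tendsto (fun s => (s - s0) * H s) (𝓝[≠] s0) (𝓝 ((s0 - s0) * H s0)) := by
    refine Filter.Tendsto.mono_left ?_ nhdsWithin_le_nhds
    exact ((continuous_id.sub continuous_const).continuousAt (x := s0)).mul hH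
  have t3 := tendsto_nhds_unique_of_eventuallyEq t1 t2 hev
  rw [sub_self, zero_mul] at t3
  have hG : Complex.Gamma s0 ≠ 0 := by
    refine Complex.Gamma_ne_zero fun m hm => ?_
    have h1 : (expo (2 * k) : ℂ) = (m : ℝ) := by
      rw [hs0] at hm; push_cast; exact neg_injective hm
    have h2 : expo (2 * k) = m := Complex.ofReal_injective h1
    unfold expo at h2
    have h3 : (((2 * k : ℕ)):ℝ) = 2 * m + 1 := by linarith
    have h4 : 2 * k = 2 * m + 1 := by exact_mod_cast h3
    omega
  rcases mul_eq_zero.1 t3 with h0 | h0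
  · exact_mod_cast h0
  · exact absurd h0 (inv_ne_zero hG)

lemma GoodC.odd_coeff {N : ℕ} (hN : 0 < N) {c : ℕ → ℝ} (h : GoodC N c) {L : ℂ → ℂ}
    (hL : Differentiable ℂ L)
    (hLs : ∀ s : ℂ, 1 < s.re →
      HasSum (fun n : ℕ => (c (n + 1) : ℂ) / ((n : ℂ) + 1) ^ s) (L s))
    (J : ℕ) (d : ℕ → ℝ)
    (hd : (fun u : ℝ => thetaF c u - ∑ j ∈ Finset.range J, d j * u ^ (expo j))
      =O[𝓝[>] (0:ℝ)] fun u => u ^ (expo J)) (k : ℕ) (hi : 2 * k + 1 < J) :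
    (d (2 * k + 1) : ℂ) = (-1) ^ k * L (-2 * (k : ℂ) - 1) / (k.factorial : ℂ) := by
  obtain ⟨H, hH, hev, hval⟩ := h.key2 hN hL hLs J d hd _ hi
  have hs0 : (expo (2 * k + 1) : ℂ) = (k : ℂ) := by
    have : expo (2 * k + 1) = k := by unfold expo; push_cast; ring
    rw [this]; simp
  rw [hs0] at hH hev hval
  have hG0 : (Complex.Gamma (-(k:ℂ)))⁻¹ = 0 := by rw [Complex.Gamma_neg_nat_eq_zero, inv_zero]
  have hval := hval hG0
  have t1 := ((hasDerivAt_iff_tendsto_slope.1 (hasDerivAt_rGamma k))).const_mul (d (2 * k + 1) : ℂ)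
  have t2 : Filter.Tendsto H (𝓝[≠] (-(k:ℂ))) (𝓝 (H (-(k:ℂ)))) :=
    Filter.Tendsto.mono_left hH nhdsWithin_le_nhds
  have t3 := tendsto_nhds_unique_of_eventuallyEq t1 t2 (by
    filter_upwards [hev, self_mem_nhdsWithin] with s h1 h2
    have h2 : s - (-(k:ℂ)) ≠ 0 := sub_ne_zero.2 h2
    rw [slope_def_field, hG0, sub_zero, ← mul_div_assoc, h1, mul_div_cancel_left₀ _ h2])
  rw [hval, show 2 * (-(k:ℂ)) - 1 = -2 * (k:ℂ) - 1 by ring] at t3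
  have hf : (k.factorial : ℂ) ≠ 0 := by exact_mod_cast k.factorial_ne_zero
  rw [← t3, eq_div_iff hf]
  have : ((-1 : ℂ) ^ k) * (-1) ^ k = 1 := by rw [← mul_pow]; simp
  linear_combination -(d (2 * k + 1) : ℂ) * (k.factorial : ℂ) * this

lemma sum_range_odd (f : ℕ → ℝ) (K : ℕ) (hf : ∀ k, 2 * k < 2 * K + 1 → f (2 * k) = 0) :
    ∑ j ∈ Finset.range (2 * K + 1), f j = ∑ k ∈ Finset.range K, f (2 * k + 1) := by
  induction K with
  | zero => simpa using hf 0 (by omega)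
  | succ K ih =>
    rw [show 2 * (K + 1) + 1 = 2 * K + 1 + 1 + 1 by ring, Finset.sum_range_succ,
      Finset.sum_range_succ, ih (fun k hk => hf k (by omega)), Finset.sum_range_succ]
    have := hf (K + 1) (by omega)
    rw [show 2 * K + 1 + 1 = 2 * (K + 1) by ring, this, add_zero]

lemma GoodC.main {N : ℕ} (hN : 0 < N) {c : ℕ → ℝ} (h : GoodC N c) {L : ℂ → ℂ}
    (hL : Differentiable ℂ L)
    (hLs : ∀ s : ℂ, 1 < s.re →
      HasSum (fun n : ℕ => (c (n + 1) : ℂ) / ((n : ℂ) + 1) ^ s) (L s)) (K : ℕ) :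
    (fun u : ℝ => (thetaF c u : ℂ) - ∑ k ∈ Finset.range K,
      ((-1) ^ k * L (-2 * (k : ℂ) - 1) / (k.factorial : ℂ)) * (u : ℂ) ^ k)
      =O[𝓝[>] (0:ℝ)] fun u => u ^ K := by
  obtain ⟨d, hd⟩ := h.expand hN (2 * K + 1)
  have hd : (fun u : ℝ => thetaF c u - ∑ j ∈ Finset.range (2 * K + 1), d j * u ^ (expo j))
      =O[𝓝[>] (0:ℝ)] fun u => u ^ (expo (2 * K + 1)) := hd
  have he : ∀ k : ℕ, expo (2 * k + 1) = k := fun k => by unfold expo; push_cast; ring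
  have h1 : ∀ u : ℝ, ∑ j ∈ Finset.range (2 * K + 1), d j * u ^ (expo j) =
      ∑ k ∈ Finset.range K, d (2 * k + 1) * u ^ k := by
    intro u
    rw [sum_range_odd (fun j => d j * u ^ (expo j)) K fun k hk => by
      rw [h.even_coeff hN hL hLs _ d hd k hk, zero_mul]]
    refine Finset.sum_congr rfl fun k _ => ?_
    rw [he, Real.rpow_natCast]
  have h2 : ∀ u : ℝ, (thetaF c u : ℂ) - ∑ k ∈ Finset.range K,
      ((-1) ^ k * L (-2 * (k : ℂ) - 1) / (k.factorial : ℂ)) * (u : ℂ) ^ k =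
      ((thetaF c u - ∑ j ∈ Finset.range (2 * K + 1), d j * u ^ (expo j) : ℝ) : ℂ) := by
    intro u
    rw [h1]
    push_cast
    congr 1
    refine Finset.sum_congr rfl fun k hk => ?_
    rw [← h.odd_coeff hN hL hLs _ d hd k (by have := Finset.mem_range.1 hk; omega)]
  simp only [h2]
  have h3 : (fun u : ℝ => u ^ K) = fun u : ℝ => u ^ (expo (2 * K + 1)) := by
    funext u; rw [he, Real.rpow_natCast]
  rw [h3]
  exact (Asymptotics.isBigO_of_le _ fun x => by rw [Complex.norm_real]).trans hd

lemma chiGen_goodC (m a : ℕ) (ha : a < m) :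
    GoodC (8 * m + 4) (fun n => (chiGen m a n : ℝ)) := by
  have e1 : (2 * m - 2 * a - 1) % (8 * m + 4) = 2 * m - 2 * a - 1 := Nat.mod_eq_of_lt (by omega)
  have e2 : (6 * m + 2 * a + 5) % (8 * m + 4) = 6 * m + 2 * a + 5 := Nat.mod_eq_of_lt (by omega)
  have e3 : (2 * m + 2 * a + 3) % (8 * m + 4) = 2 * m + 2 * a + 3 := Nat.mod_eq_of_lt (by omega)
  have e4 : (6 * m - 2 * a + 1) % (8 * m + 4) = 6 * m - 2 * a + 1 := Nat.mod_eq_of_lt (by omega)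
  refine ⟨?_, ?_, ?_, ?_⟩
  · intro n
    simp only [chiGen, Nat.add_mod_right]
  · have h : ∀ k ∈ Finset.range (8 * m + 4), (chiGen m a k : ℝ) =
        (if k = 2 * m - 2 * a - 1 then (1:ℝ) else 0) + (if k = 6 * m + 2 * a + 5 then (1:ℝ) else 0)
        - (if k = 2 * m + 2 * a + 3 then (1:ℝ) else 0)
        - (if k = 6 * m - 2 * a + 1 then (1:ℝ) else 0) := by
      intro k hk
      have hk2 : k % (8 * m + 4) = k := Nat.mod_eq_of_lt (Finset.mem_range.mp hk)
      simp only [chiGen, e1, e2, e3, e4, hk2]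
      split_ifs <;> first | omega | norm_num
    rw [Finset.sum_congr rfl h]
    simp only [Finset.sum_sub_distrib, Finset.sum_add_distrib, Finset.sum_ite_eq', Finset.mem_range]
    rw [if_pos (by omega), if_pos (by omega), if_pos (by omega), if_pos (by omega)]
    norm_num
  · simp only [chiGen, e1, e2, e3, e4, Nat.zero_mod]
    split_ifs <;> first | contradiction | omega | norm_num
  · intro n
    simp only [chiGen]
    split_ifs <;> norm_num

lemma chiGen_tsum (m a : ℕ) (ha : a < m) (t : ℝ) (ht : 0 < t) (w : ℂ) :
    ∑' n : ℕ, ((n : ℂ) + 1) * (chiGen m a (n + 1) : ℂ) *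
            Complex.exp (-(t : ℂ) * (((n : ℂ) + 1) ^ 2 - w ^ 2) / (8 * (2 * (m : ℂ) + 1)))
    = Complex.exp (w ^ 2 * (t : ℂ) / (8 * (2 * (m : ℂ) + 1))) *
      (thetaF (fun n => (chiGen m a n : ℝ)) (t / (8 * (2 * (m : ℝ) + 1))) : ℂ) := by
  have hg := chiGen_goodC m a ha
  have hu : 0 < t / (8 * (2 * (m : ℝ) + 1)) := by positivity
  have hs := hg.summable hu
  have h1 := hs.tsum_eq_zero_add
  unfold thetaF
  rw [h1]
  simp only [Nat.cast_zero, zero_mul, mul_zero, zero_add]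
  rw [Complex.ofReal_tsum, ← tsum_mul_left]
  refine tsum_congr fun n => ?_
  have : Complex.exp (-(t : ℂ) * (((n : ℂ) + 1) ^ 2 - w ^ 2) / (8 * (2 * (m : ℂ) + 1))) =
      Complex.exp (w ^ 2 * (t : ℂ) / (8 * (2 * (m : ℂ) + 1))) *
      Complex.exp (-((t:ℂ) / (8 * (2 * (m : ℂ) + 1))) * ((n:ℂ) + 1) ^ 2) := by
    rw [← Complex.exp_add]
    congr 1
    ring
  rw [this]
  push_cast
  ring

theorem stmt_7 (m a : ℕ) (hm : 1 ≤ m) (ha : a < m)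
    (L : ℂ → ℂ) (hL : Differentiable ℂ L)
    (hLseries : ∀ s : ℂ, 1 < s.re →
      HasSum (fun n : ℕ => (chiGen m a (n + 1) : ℂ) / ((n : ℂ) + 1) ^ s) (L s))
    (K : ℕ) :
    (fun t : ℝ =>
        (-(1 / 2) : ℂ) * ∑' n : ℕ, ((n : ℂ) + 1) * (chiGen m a (n + 1) : ℂ) *
            Complex.exp (-(t : ℂ) * (((n : ℂ) + 1) ^ 2 - (2 * (m : ℂ) - 2 * a - 1) ^ 2) /
              (8 * (2 * (m : ℂ) + 1)))
          - Complex.exp ((2 * (m : ℂ) - 2 * a - 1) ^ 2 * (t : ℂ) / (8 * (2 * (m : ℂ) + 1))) *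
            ∑ n ∈ Finset.range K,
              ((1 / 2 : ℂ) * (-1) ^ (n + 1) * L (-2 * (n : ℂ) - 1)) / (n.factorial : ℂ) *
                ((t : ℂ) / (8 * (2 * (m : ℂ) + 1))) ^ n)
      =O[𝓝[>] (0 : ℝ)] fun t : ℝ => t ^ K := by
  have hg := chiGen_goodC m a ha
  have hmain := hg.main (by omega) hL (fun s hs => by simpa using hLseries s hs) K
  have hD : (0:ℝ) < 8 * (2 * (m : ℝ) + 1) := by positivity
  have htend : Filter.Tendsto (fun t : ℝ => t / (8 * (2 * (m : ℝ) + 1))) (𝓝[>] 0) (𝓝[>] 0) := by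
    refine tendsto_nhdsWithin_iff.mpr ⟨?_, ?_⟩
    · have : Filter.Tendsto (fun t : ℝ => t / (8 * (2 * (m : ℝ) + 1))) (𝓝 0)
          (𝓝 (0 / (8 * (2 * (m : ℝ) + 1)))) := Filter.Tendsto.div_const Filter.tendsto_id _
      rw [zero_div] at this
      exact this.mono_left nhdsWithin_le_nhds
    · filter_upwards [self_mem_nhdsWithin] with t ht
      exact div_pos ht hD
  have h1 := hmain.comp_tendsto htend
  have h2 : (fun t : ℝ => (-(1 / 2) : ℂ) *
      Complex.exp ((2 * (m : ℂ) - 2 * a - 1) ^ 2 * (t : ℂ) / (8 * (2 * (m : ℂ) + 1))))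
      =O[𝓝[>] (0 : ℝ)] fun _ => (1:ℝ) := by
    have hc : Continuous (fun t : ℝ => (-(1 / 2) : ℂ) *
      Complex.exp ((2 * (m : ℂ) - 2 * a - 1) ^ 2 * (t : ℂ) / (8 * (2 * (m : ℂ) + 1)))) := by
      fun_prop
    exact ((hc.tendsto 0).mono_left nhdsWithin_le_nhds).isBigO_one ℝ
  have h3 : ((fun u : ℝ => u ^ K) ∘ fun t : ℝ => t / (8 * (2 * (m : ℝ) + 1)))
      =O[𝓝[>] (0 : ℝ)] fun t : ℝ => t ^ K := by
    refine Asymptotics.IsBigO.of_bound (‖((8 * (2 * (m : ℝ) + 1)) ^ K)⁻¹‖)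
      (Filter.Eventually.of_forall fun t => ?_)
    simp only [Function.comp_apply]
    rw [div_pow, div_eq_inv_mul, norm_mul]
  have h4 := h2.mul (h1.trans h3)
  simp only [one_mul] at h4
  refine h4.congr' ?_ Filter.EventuallyEq.rfl
  filter_upwards [self_mem_nhdsWithin] with t ht
  rw [chiGen_tsum m a ha t ht]
  simp only [Function.comp_apply]
  rw [mul_sub]
  congr 1
  · ring
  · rw [Finset.mul_sum, Finset.mul_sum]
    refine Finset.sum_congr rfl fun k _ => ?_
    push_cast
    rw [pow_succ]
    ring
end

section
/- Let m ≥ 1 and 0 ≤ a ≤ m−1 be integers and q, x complex numbers with |q| < 1 and |x| < 1. Define H_m^{(a)}(x) = Σ_{k₁,…,k_m ≥ 0} (x;q)_{k_m+1} · x^{k_m} · (∏_{i=1}^{a−1} q^{k_i²} x^{2k_i} [k_{i+1} choose k_i]_q) · q^{k_a²} x^{2k_a} [k_{a+1}+1 choose k_a]_q · (∏_{i=a+1}^{m−1} q^{k_i²+k_i} x^{2k_i} [k_{i+1} choose k_i]_q), with the convention k₀ = 0 when a = 0 (so the middle factor equals 1). Then H_m^{(a)}(x) = Σ_{n=0}^∞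 χ_{8m+4}^{(a)}(n) · q^{(n² − (2m−2a−1)²)/(8(2m+1))} · x^{(n − (2m−2a−1))/2}, where on the right only n ≡ ±(2m−2a−1), ±(2m+2a+3) (mod 8m+4) contribute, so that all exponents are nonnegative integers, and both series converge absolutely. -/
/-- The finite q-Pochhammer symbol `(x;q)_n = ∏_{i=1}^n (1 - x q^{i-1})`. -/
noncomputable def qPoch (q x : ℂ) (n : ℕ) : ℂ := ∏ i ∈ Finset.range n, (1 - x * q ^ i)

/-- The Gaussian binomial coefficient `[n choose c]_q`. -/
noncomputable def qBinom (q : ℂ) (n c : ℕ) : ℂ :=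
  if c ≤ n then qPoch q q n / (qPoch q q c * qPoch q q (n - c)) else 0

/-- Extends a tuple `(k₁,…,k_m)` to all of `ℕ` by `0` (in particular `k₀ = 0`). -/
def Kfun (m : ℕ) (k : Fin m → ℕ) (i : ℕ) : ℕ :=
  if h : 1 ≤ i ∧ i ≤ m then k ⟨i - 1, by omega⟩ else 0

/-- The summand of the multiple series `H_m^{(a)}(x)`:
`(x;q)_{k_m+1} x^{k_m} (∏_{i=1}^{a-1} q^{k_i²} x^{2k_i} [k_{i+1},k_i]) ·
 q^{k_a²} x^{2k_a} [k_{a+1}+1,k_a] · (∏_{i=a+1}^{m-1} q^{k_i²+k_i} x^{2k_i} [k_{i+1},k_i])`,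
with the convention `k₀ = 0`. -/
noncomputable def Hterm (q x : ℂ) (m a : ℕ) (k : Fin m → ℕ) : ℂ :=
  qPoch q x (Kfun m k m + 1) * x ^ (Kfun m k m) *
  (∏ i ∈ Finset.Ico 1 a,
    q ^ (Kfun m k i ^ 2) * x ^ (2 * Kfun m k i) * qBinom q (Kfun m k (i + 1)) (Kfun m k i)) *
  (q ^ (Kfun m k a ^ 2) * x ^ (2 * Kfun m k a) *
    qBinom q (Kfun m k (a + 1) + 1) (Kfun m k a)) *
  (∏ i ∈ Finset.Ico (a + 1) m,
    q ^ (Kfun m k i ^ 2 + Kfun m k i) * x ^ (2 * Kfun m k i) *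
      qBinom q (Kfun m k (i + 1)) (Kfun m k i))


namespace HikamiProof

open Finset

lemma qPoch_zero (q x : ℂ) : qPoch q x 0 = 1 := by simp [qPoch]

lemma qPoch_succ (q x : ℂ) (n : ℕ) : qPoch q x (n + 1) = qPoch q x n * (1 - x * q ^ n) := by
  simp [qPoch, Finset.prod_range_succ]

lemma qPoch_succ' (q x : ℂ) (n : ℕ) : qPoch q x (n + 1) = (1 - x) * qPoch q (x * q) n := by
  simp only [qPoch, Finset.prod_range_succ']
  rw [mul_comm]
  simp only [pow_zero, mul_one]
  congr 1
  refine Finset.prod_congr rfl fun i _ => ?_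
  ring

lemma qPoch_add (q x : ℂ) (m n : ℕ) :
    qPoch q x (m + n) = qPoch q x m * qPoch q (x * q ^ m) n := by
  simp only [qPoch, Finset.prod_range_add]
  congr 1
  refine Finset.prod_congr rfl fun i _ => ?_
  ring

lemma one_sub_ne {q x : ℂ} (hq : ‖q‖ < 1) (hx : ‖x‖ < 1) (n : ℕ) : 1 - x * q ^ n ≠ 0 := by
  intro h
  have h1 : x * q ^ n = 1 := by linear_combination -h
  have h2 : ‖x * q ^ n‖ < 1 := by
    rw [norm_mul, norm_pow]
    calc ‖x‖ * ‖q‖ ^ n ≤ ‖x‖ * 1 := by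
          gcongr
          exact pow_le_one₀ (norm_nonneg _) hq.le
      _ < 1 := by simpa using hx
  rw [h1] at h2
  simp at h2

lemma qPoch_ne {q x : ℂ} (hq : ‖q‖ < 1) (hx : ‖x‖ < 1) (n : ℕ) : qPoch q x n ≠ 0 := by
  rw [qPoch, Finset.prod_ne_zero_iff]
  intro i _
  exact one_sub_ne hq hx i

lemma norm_mul_lt {q x : ℂ} (hq : ‖q‖ < 1) (hx : ‖x‖ < 1) : ‖x * q‖ < 1 := by
  rw [norm_mul]
  exact mul_lt_one_of_nonneg_of_lt_one_left (norm_nonneg _) hx hq.le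

lemma norm_sq_lt {x : ℂ} (hx : ‖x‖ < 1) : ‖x ^ 2‖ < 1 := by
  rw [pow_two]; exact norm_mul_lt hx hx

lemma one_sub_pow_ne {q : ℂ} (hq : ‖q‖ < 1) (n : ℕ) : 1 - q ^ (n + 1) ≠ 0 := by
  have := one_sub_ne hq hq n
  rwa [pow_succ']

lemma P_succ (q : ℂ) (n : ℕ) : qPoch q q (n + 1) = qPoch q q n * (1 - q ^ (n + 1)) := by
  rw [qPoch_succ, pow_succ']

lemma qBinom_le {q : ℂ} {n c : ℕ} (h : c ≤ n) :
    qBinom q n c = qPoch q q n / (qPoch q q c * qPoch q q (n - c)) := by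
  simp [qBinom, h]

lemma qBinom_gt {q : ℂ} {n c : ℕ} (h : n < c) : qBinom q n c = 0 := by
  simp [qBinom, h]

lemma qBinom_zero {q : ℂ} (hq : ‖q‖ < 1) (n : ℕ) : qBinom q n 0 = 1 := by
  have := qPoch_ne hq hq n
  simp [qBinom, qPoch_zero, this]

lemma qBinom_pascal {q : ℂ} (hq : ‖q‖ < 1) (n c : ℕ) :
    qBinom q (n + 1) (c + 1) = q ^ (c + 1) * qBinom q n (c + 1) + qBinom q n c := by
  rcases lt_trichotomy n c with h | h | h
  · rw [qBinom_gt h, qBinom_gt (by omega), qBinom_gt (by omega)]; simp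
  · subst h
    rw [qBinom_gt (Nat.lt_succ_self _), qBinom_le le_rfl, qBinom_le le_rfl]
    have h1 := qPoch_ne hq hq n
    have h2 := qPoch_ne hq hq (n + 1)
    simp [qPoch_zero, h1, h2]
  · obtain ⟨s, rfl⟩ := Nat.exists_eq_add_of_lt h
    rw [qBinom_le (by omega), qBinom_le (by omega), qBinom_le (by omega)]
    have e1 : c + s + 1 + 1 - (c + 1) = s + 1 := by omega
    have e2 : c + s + 1 - (c + 1) = s := by omega
    have e3 : c + s + 1 - c = s + 1 := by omega
    rw [e1, e2, e3, P_succ q (c + s + 1), P_succ q c, P_succ q s]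
    have h1 := qPoch_ne hq hq c
    have h2 := qPoch_ne hq hq s
    have h3 := qPoch_ne hq hq (c + s + 1)
    have h4 := one_sub_pow_ne hq c
    have h5 := one_sub_pow_ne hq s
    field_simp
    ring

/-- Terminating Cauchy / q-Vandermonde identity. -/
lemma cauchy {q : ℂ} (hq : ‖q‖ < 1) (N : ℕ) : ∀ A : ℂ,
    ∑ j ∈ range (N + 1), qBinom q N j * A ^ j * q ^ (j ^ 2) * qPoch q (A * q ^ (j + 1)) (N - j)
      = 1 := by
  induction N with
  | zero => intro A; simp [qPoch_zero, qBinom_zero hq]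
  | succ N ih =>
    intro A
    rw [Finset.sum_range_succ']
    have key : ∀ j ∈ range (N + 1), qBinom q (N + 1) (j + 1) * A ^ (j + 1) * q ^ ((j + 1) ^ 2) *
          qPoch q (A * q ^ (j + 1 + 1)) (N + 1 - (j + 1))
        = q ^ (j + 1) * qBinom q N (j + 1) * A ^ (j + 1) * q ^ ((j + 1) ^ 2) *
          qPoch q (A * q ^ (j + 1 + 1)) (N + 1 - (j + 1)) +
          (qBinom q N j * (A * q) ^ j * q ^ (j ^ 2) *
            qPoch q (A * q * q ^ (j + 1)) (N - j)) * (A * q ^ (j + 1)) := by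
      intro j hj
      rw [qBinom_pascal hq]
      have e1 : N + 1 - (j + 1) = N - j := by omega
      rw [e1, show A * q * q ^ (j + 1) = A * q ^ (j + 1 + 1) by ring]
      ring
    rw [Finset.sum_congr rfl key, Finset.sum_add_distrib]
    have h2 := Finset.sum_range_succ' (fun j => q ^ j * qBinom q N j * A ^ j * q ^ (j ^ 2) *
          qPoch q (A * q ^ (j + 1)) (N + 1 - j)) (N + 1)
    have h3 : qBinom q (N + 1) 0 * A ^ 0 * q ^ (0 ^ 2) * qPoch q (A * q ^ (0 + 1)) (N + 1 - 0)
       = q ^ 0 * qBinom q N 0 * A ^ 0 * q ^ (0 ^ 2) *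
          qPoch q (A * q ^ (0 + 1)) (N + 1 - 0) := by
      rw [qBinom_zero hq, qBinom_zero hq]; ring
    rw [h3, add_right_comm, ← h2, Finset.sum_range_succ, qBinom_gt (Nat.lt_succ_self N)]
    rw [mul_zero, zero_mul, zero_mul, zero_mul, add_zero, ← Finset.sum_add_distrib, ← ih (A * q)]
    refine Finset.sum_congr rfl fun j hj => ?_
    have hj' : j ≤ N := by simpa [Nat.lt_succ_iff] using hj
    rw [show N + 1 - j = (N - j) + 1 by omega, qPoch_succ',
      show A * q ^ (j + 1) * q = A * q * q ^ (j + 1) by ring]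
    ring

/-- The Bailey kernel. -/
noncomputable def ker (q A : ℂ) (n r : ℕ) : ℂ :=
  if r ≤ n then 1 / (qPoch q q (n - r) * qPoch q (A * q) (n + r)) else 0

lemma ker_le {q A : ℂ} {n r : ℕ} (h : r ≤ n) :
    ker q A n r = 1 / (qPoch q q (n - r) * qPoch q (A * q) (n + r)) := by simp [ker, h]

lemma ker_gt {q A : ℂ} {n r : ℕ} (h : n < r) : ker q A n r = 0 := by simp [ker, h]

lemma ker_step {q A : ℂ} (hq : ‖q‖ < 1) (hA : ‖A‖ < 1) {n r : ℕ} (hr : r ≤ n) :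
    ∑ k ∈ range (n + 1), A ^ k * q ^ (k ^ 2) / qPoch q q (n - k) * ker q A k r
      = A ^ r * q ^ (r ^ 2) * ker q A n r := by
  obtain ⟨N, rfl⟩ := Nat.exists_eq_add_of_le hr
  rw [add_assoc, Finset.sum_range_add, Finset.sum_eq_zero (s := range r), zero_add]
  swap
  · intro k hk
    rw [ker_gt (by simpa using hk), mul_zero]
  have hAq := norm_mul_lt hq hA
  rw [ker_le hr]
  have hc := cauchy hq N (A * q ^ (2 * r))
  have h0 : qPoch q q N ≠ 0 := qPoch_ne hq hq N
  have h1 : qPoch q (A * q) (r + N + r) ≠ 0 := qPoch_ne hq hAq _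
  rw [show r + N - r = N by omega]
  have : ∀ j ∈ range (N + 1), A ^ (r + j) * q ^ ((r + j) ^ 2) / qPoch q q (r + N - (r + j)) *
      ker q A (r + j) r = (A ^ r * q ^ (r ^ 2) * (1 / (qPoch q q N * qPoch q (A * q) (r + N + r)))) *
      (qBinom q N j * (A * q ^ (2 * r)) ^ j * q ^ (j ^ 2) *
        qPoch q (A * q ^ (2 * r) * q ^ (j + 1)) (N - j)) := by
    intro j hj
    have hj' : j ≤ N := by simpa [Nat.lt_succ_iff] using hj
    obtain ⟨s, rfl⟩ := Nat.exists_eq_add_of_le hj'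
    rw [ker_le (by omega), qBinom_le hj']
    rw [show r + (j + s) - (r + j) = s by omega, show r + j - r = j by omega,
      show j + s - j = s by omega, show r + (j + s) + r = (r + j + r) + s by omega,
      qPoch_add q (A * q) (r + j + r) s,
      show A * q ^ (2 * r) * q ^ (j + 1) = A * q * q ^ (r + j + r) by ring]
    have h2 := qPoch_ne hq hq s
    have h3 := qPoch_ne hq hq j
    have h4 := qPoch_ne hq hq (j + s)
    have h5 := qPoch_ne hq hAq (r + j + r)
    have h6 : qPoch q (A * q * q ^ (r + j + r)) s ≠ 0 := by
      intro h
      apply h1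
      rw [show r + (j + s) + r = (r + j + r) + s by omega, qPoch_add, h, mul_zero]
    field_simp
    ring
  rw [Finset.sum_congr rfl this, ← Finset.mul_sum, hc, mul_one]

def tri (r : ℕ) : ℕ := ∑ i ∈ range r, i

lemma tri_succ (r : ℕ) : tri (r + 1) = tri r + r := by simp [tri, Finset.sum_range_succ]

noncomputable def U (q y : ℂ) (r : ℕ) : ℂ :=
  qPoch q y r * (1 - y * q ^ (2 * r)) / (1 - y) / qPoch q q r * (-1) ^ r * q ^ tri r

noncomputable def Bail (q A : ℂ) (α : ℕ → ℂ) (n : ℕ) : ℂ :=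
  ∑ r ∈ range (n + 1), α r * ker q A n r

lemma Bail_step {q A : ℂ} (hq : ‖q‖ < 1) (hA : ‖A‖ < 1) (α : ℕ → ℂ) (n : ℕ) :
    ∑ k ∈ range (n + 1), A ^ k * q ^ (k ^ 2) / qPoch q q (n - k) * Bail q A α k
      = Bail q A (fun r => α r * (A ^ r * q ^ (r ^ 2))) n := by
  have h1 : ∀ k ∈ range (n + 1), Bail q A α k = ∑ r ∈ range (n + 1), α r * ker q A k r := by
    intro k hk
    rw [Bail]
    apply Finset.sum_subset
    · intro r; simp at hk ⊢; omega
    · intro r _ hr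
      rw [ker_gt (by simpa using hr), mul_zero]
  rw [Finset.sum_congr rfl fun k hk => by rw [h1 k hk, Finset.mul_sum], Finset.sum_comm, Bail]
  refine Finset.sum_congr rfl fun r hr => ?_
  have hr' : r ≤ n := by simpa [Nat.lt_succ_iff] using hr
  rw [mul_assoc, ← ker_step hq hA hr', Finset.mul_sum]
  refine Finset.sum_congr rfl fun k _ => by ring

lemma unit_partial {q y : ℂ} (hq : ‖q‖ < 1) (hy : ‖y‖ < 1) (N : ℕ) (R : ℕ) (hR : R ≤ N + 1) :
    ∑ r ∈ range R, U q y r * ker q y (N + 1) r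
      = (-1) ^ (R + 1) * q ^ tri R * qPoch q y R * (1 - q ^ R) /
        ((1 - y) * qPoch q q R * qPoch q q (N + 1 - R) * qPoch q (y * q) (N + R) *
          (1 - q ^ (N + 1))) := by
  induction R with
  | zero => simp
  | succ R ih =>
    rw [Finset.sum_range_succ, ih (by omega), ker_le (by omega), U]
    obtain ⟨s, hs⟩ := Nat.exists_eq_add_of_le hR
    have e : N = R + s := by omega
    subst e
    rw [show R + s + 1 - R = s + 1 by omega, show R + s + 1 - (R + 1) = s by omega,
      P_succ q s, P_succ q R, show R + s + 1 + R = R + s + R + 1 by omega, tri_succ,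
      show R + s + (R + 1) = R + s + R + 1 by omega, qPoch_succ q (y * q) (R + s + R),
      qPoch_succ q y R]
    have h1 := qPoch_ne hq hq s
    have h2 := qPoch_ne hq hq R
    have h3 := qPoch_ne hq (norm_mul_lt hq hy) (R + s + R)
    have h4 := one_sub_ne hq (norm_mul_lt hq hy) (R + s + R)
    have h5 := one_sub_pow_ne hq s
    have h6 := one_sub_pow_ne hq R
    have h7 := one_sub_pow_ne hq (R + s)
    have h8 : 1 - y ≠ 0 := by simpa using one_sub_ne hq hy 0
    field_simp
    ring

lemma unit_zero {q y : ℂ} (hq : ‖q‖ < 1) (hy : ‖y‖ < 1) (n : ℕ) :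
    Bail q y (U q y) n = if n = 0 then 1 else 0 := by
  have h8 : 1 - y ≠ 0 := by simpa using one_sub_ne hq hy 0
  rcases n with _ | N
  · simp [Bail, U, ker, qPoch_zero, tri, h8]
  · rw [Bail, Finset.sum_range_succ, unit_partial hq hy N (N + 1) le_rfl, ker_le le_rfl, U]
    rw [show N + 1 + (N + 1) = N + (N + 1) + 1 by omega, qPoch_succ q (y * q)]
    have h2 := qPoch_ne hq hq (N + 1)
    have h3 := qPoch_ne hq (norm_mul_lt hq hy) (N + (N + 1))
    have h4 := one_sub_ne hq (norm_mul_lt hq hy) (N + (N + 1))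
    have h7 := one_sub_pow_ne hq N
    simp only [Nat.sub_self, qPoch_zero]
    rw [if_neg (by omega)]
    field_simp
    ring

noncomputable def Cc (q y : ℂ) (r : ℕ) : ℂ :=
  qPoch q (y * q) r / qPoch q q r / (1 - y * q) * (-1) ^ r * q ^ tri (r + 1)

lemma twist0 {q y : ℂ} (hq : ‖q‖ < 1) (hy : ‖y‖ < 1) (n : ℕ) :
    (1 - q ^ (n + 1)) * (U q y 0 * ker q y (n + 1) 0) = Cc q y 0 * ker q (y * q) n 0 := by
  have h8 : 1 - y ≠ 0 := by simpa using one_sub_ne hq hy 0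
  have h9 : 1 - y * q ≠ 0 := by simpa using one_sub_ne hq hy 1
  rw [ker_le (by omega), ker_le (by omega), U, Cc]
  simp only [Nat.sub_zero, add_zero]
  rw [qPoch_succ' q (y * q), P_succ q n]
  have h2 := qPoch_ne hq hq n
  have h3 := qPoch_ne hq (norm_mul_lt hq (norm_mul_lt hq hy)) n
  have h7 := one_sub_pow_ne hq n
  simp [qPoch_zero, tri]
  field_simp

lemma twist1 {q y : ℂ} (hq : ‖q‖ < 1) (hy : ‖y‖ < 1) (n r : ℕ) (hr : r ≤ n) :
    (1 - q ^ (n + 1)) * (U q y (r + 1) * ker q y (n + 1) (r + 1))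
      = Cc q y (r + 1) * ker q (y * q) n (r + 1) - Cc q y r * ker q (y * q) n r := by
  have h8 : 1 - y ≠ 0 := by simpa using one_sub_ne hq hy 0
  have h9 : 1 - y * q ≠ 0 := by simpa using one_sub_ne hq hy 1
  have hyq := norm_mul_lt hq hy
  have hyqq := norm_mul_lt hq hyq
  rw [ker_le (by omega : r + 1 ≤ n + 1), ker_le hr, U, Cc, Cc]
  rw [show n + 1 + (r + 1) = n + r + 1 + 1 by omega, show n + 1 - (r + 1) = n - r by omega,
    qPoch_succ' q (y * q), P_succ q r, qPoch_succ' q y, tri_succ (r + 1),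
    qPoch_succ q (y * q) r]
  have h1 := qPoch_ne hq hq r
  have h3 := qPoch_ne hq hyqq (n + r)
  have h5 := one_sub_ne hq hyqq (n + r)
  have h6 := one_sub_pow_ne hq r
  have h10 := qPoch_ne hq hyq r
  rcases hr.eq_or_lt with h | h
  · subst h
    rw [ker_gt (Nat.lt_succ_self r), Nat.sub_self, qPoch_zero, qPoch_succ q (y * q * q) (r + r)]
    generalize hZ : qPoch q (y * q * q) (r + r) = Z at *
    generalize hD : 1 - y * q * q * q ^ (r + r) = D at *
    field_simp
    subst hD
    ring
  · obtain ⟨s, rfl⟩ := Nat.exists_eq_add_of_lt h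
    rw [ker_le (by omega), show r + s + 1 - (r + 1) = s by omega,
      show r + s + 1 - r = s + 1 by omega, P_succ q s,
      show r + s + 1 + (r + 1) = r + s + 1 + r + 1 by omega,
      qPoch_succ q (y * q * q) (r + s + 1 + r)]
    have h11 := qPoch_ne hq hq s
    have h12 := one_sub_pow_ne hq s
    generalize hZ : qPoch q (y * q * q) (r + s + 1 + r) = Z at *
    generalize hD : 1 - y * q * q * q ^ (r + s + 1 + r) = D at *
    field_simp
    subst hD
    ring

lemma twist {q y : ℂ} (hq : ‖q‖ < 1) (hy : ‖y‖ < 1) (β : ℕ → ℂ) (n : ℕ) :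
    (1 - q ^ (n + 1)) * Bail q y (fun r => U q y r * β r) (n + 1)
      = Bail q (y * q) (fun r => Cc q y r * (β r - β (r + 1))) n := by
  rw [Bail, Finset.mul_sum, Finset.sum_range_succ', Bail]
  have h0 : (1 - q ^ (n + 1)) * (U q y 0 * β 0 * ker q y (n + 1) 0)
    = β 0 * (Cc q y 0 * ker q (y * q) n 0) := by
    rw [← twist0 hq hy]; ring
  have h1 : ∀ r ∈ range (n + 1),
      (1 - q ^ (n + 1)) * (U q y (r + 1) * β (r + 1) * ker q y (n + 1) (r + 1))
      = β (r + 1) * (Cc q y (r + 1) * ker q (y * q) n (r + 1))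
        - β (r + 1) * (Cc q y r * ker q (y * q) n r) := by
    intro r hr
    have hr' : r ≤ n := by simpa [Nat.lt_succ_iff] using hr
    rw [← mul_sub, ← twist1 hq hy n r hr']; ring
  rw [h0, Finset.sum_congr rfl h1, Finset.sum_sub_distrib, sub_add_eq_add_sub,
    ← Finset.sum_range_succ' (fun r => β r * (Cc q y r * ker q (y * q) n r)),
    Finset.sum_range_succ, ker_gt (Nat.lt_succ_self n), mul_zero, mul_zero, add_zero,
    ← Finset.sum_sub_distrib]
  refine Finset.sum_congr rfl fun r _ => by ring

/-! ### Analytic bounds -/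

lemma prod_bdd {q : ℂ} (hq : ‖q‖ < 1) (u : ℕ → ℂ) (c : ℝ) (hc : 0 ≤ c)
    (hu : ∀ i, ‖u i‖ ≤ Real.exp (c * ‖q‖ ^ i)) (n : ℕ) :
    ‖∏ i ∈ range n, u i‖ ≤ Real.exp (c * (1 - ‖q‖)⁻¹) := by
  rw [norm_prod]
  calc ∏ i ∈ range n, ‖u i‖ ≤ ∏ i ∈ range n, Real.exp (c * ‖q‖ ^ i) :=
        Finset.prod_le_prod (fun i _ => norm_nonneg _) (fun i _ => hu i)
    _ = Real.exp (c * ∑ i ∈ range n, ‖q‖ ^ i) := by rw [← Real.exp_sum, Finset.mul_sum]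
    _ ≤ _ := by
        apply Real.exp_le_exp.mpr
        apply mul_le_mul_of_nonneg_left _ hc
        rw [← tsum_geometric_of_lt_one (norm_nonneg q) hq]
        exact (summable_geometric_of_lt_one (norm_nonneg q) hq).sum_le_tsum _
          (fun i _ => by positivity)

lemma qPoch_bdd {q : ℂ} (hq : ‖q‖ < 1) (x : ℂ) : ∃ C : ℝ, 0 ≤ C ∧ ∀ n, ‖qPoch q x n‖ ≤ C := by
  refine ⟨_, (Real.exp_pos _).le, prod_bdd hq (fun i => 1 - x * q ^ i) ‖x‖ (norm_nonneg _) ?_⟩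
  intro i
  calc ‖1 - x * q ^ i‖ ≤ ‖(1 : ℂ)‖ + ‖x * q ^ i‖ := norm_sub_le _ _
    _ = ‖x‖ * ‖q‖ ^ i + 1 := by rw [norm_mul, norm_pow, norm_one, add_comm]
    _ ≤ _ := Real.add_one_le_exp _

lemma qPoch_inv_bdd {q x : ℂ} (hq : ‖q‖ < 1) (hx : ‖x‖ < 1) :
    ∃ C : ℝ, 0 ≤ C ∧ ∀ n, ‖(qPoch q x n)⁻¹‖ ≤ C := by
  have hx1 : 0 < 1 - ‖x‖ := by linarith
  refine ⟨Real.exp (‖x‖ / (1 - ‖x‖) * (1 - ‖q‖)⁻¹), (Real.exp_pos _).le, fun n => ?_⟩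
  rw [qPoch, ← Finset.prod_inv_distrib]
  apply prod_bdd hq (fun i => (1 - x * q ^ i)⁻¹) (‖x‖ / (1 - ‖x‖)) (by positivity)
  intro i
  set t := ‖x‖ * ‖q‖ ^ i with ht
  have ht0 : 0 ≤ t := by positivity
  have htx : t ≤ ‖x‖ := by
    rw [ht]
    exact mul_le_of_le_one_right (norm_nonneg _) (pow_le_one₀ (norm_nonneg _) hq.le)
  have h1 : 1 - t ≤ ‖1 - x * q ^ i‖ := by
    have := norm_sub_norm_le (1 : ℂ) (x * q ^ i)
    rwa [norm_one, norm_mul, norm_pow, ← ht] at this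
  have h2 : 0 < 1 - t := by linarith
  rw [norm_inv]
  calc ‖1 - x * q ^ i‖⁻¹ ≤ (1 - t)⁻¹ := inv_anti₀ h2 h1
    _ = t / (1 - t) + 1 := by field_simp; ring
    _ ≤ t / (1 - ‖x‖) + 1 := by gcongr
    _ = ‖x‖ / (1 - ‖x‖) * ‖q‖ ^ i + 1 := by rw [ht]; ring
    _ ≤ _ := Real.add_one_le_exp _

lemma qBinom_bdd {q : ℂ} (hq : ‖q‖ < 1) : ∃ C : ℝ, 0 ≤ C ∧ ∀ n c, ‖qBinom q n c‖ ≤ C := by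
  obtain ⟨C, hC, h1⟩ := qPoch_bdd hq q
  obtain ⟨D, hD, h2⟩ := qPoch_inv_bdd hq hq
  refine ⟨C * (D * D), by positivity, fun n c => ?_⟩
  rw [qBinom]
  split_ifs
  · rw [div_eq_mul_inv, mul_inv, norm_mul, norm_mul]
    gcongr
    · exact h1 _
    · exact h2 _
    · exact h2 _
  · rw [norm_zero]; positivity

lemma ker_bdd {q A : ℂ} (hq : ‖q‖ < 1) (hA : ‖A‖ < 1) :
    ∃ C : ℝ, 0 ≤ C ∧ ∀ n r, ‖ker q A n r‖ ≤ C := by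
  obtain ⟨C, hC, h1⟩ := qPoch_inv_bdd hq (norm_mul_lt hq hA)
  obtain ⟨D, hD, h2⟩ := qPoch_inv_bdd hq hq
  refine ⟨D * C, by positivity, fun n r => ?_⟩
  rw [ker]
  split_ifs
  · rw [one_div, mul_inv, norm_mul]
    gcongr
    · exact h2 _
    · exact h1 _
  · rw [norm_zero]; positivity

lemma Cc_bdd {q y : ℂ} (hq : ‖q‖ < 1) : ∃ C : ℝ, 0 ≤ C ∧ ∀ r, ‖Cc q y r‖ ≤ C := by
  obtain ⟨C, hC, h1⟩ := qPoch_bdd hq (y * q)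
  obtain ⟨D, hD, h2⟩ := qPoch_inv_bdd hq hq
  refine ⟨C * D * ‖(1 - y * q)⁻¹‖ * 1 * 1, by positivity, fun r => ?_⟩
  rw [Cc, div_eq_mul_inv, div_eq_mul_inv, norm_mul, norm_mul, norm_mul, norm_mul]
  gcongr
  · exact h1 _
  · exact h2 _
  · simp
  · rw [norm_pow]; exact pow_le_one₀ (norm_nonneg _) hq.le

/-! ### The infinite summation -/

noncomputable def T (q x : ℂ) (r n : ℕ) : ℂ :=
  qPoch q x (n + 1) * x ^ n * qPoch q q n * ker q (x ^ 2 * q) n r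

lemma T_bdd {q x : ℂ} (hq : ‖q‖ < 1) (hx : ‖x‖ < 1) :
    ∃ C : ℝ, 0 ≤ C ∧ ∀ r n, ‖T q x r n‖ ≤ C * ‖x‖ ^ n := by
  obtain ⟨C, hC, h1⟩ := qPoch_bdd hq x
  obtain ⟨D, hD, h2⟩ := qPoch_bdd hq q
  obtain ⟨E, hE, h3⟩ := ker_bdd hq (norm_mul_lt hq (norm_sq_lt hx))
  refine ⟨C * D * E, by positivity, fun r n => ?_⟩
  rw [T, norm_mul, norm_mul, norm_mul, norm_pow,
    show C * D * E * ‖x‖ ^ n = C * ‖x‖ ^ n * D * E by ring]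
  gcongr
  · exact h1 _
  · exact h2 _
  · exact h3 _ _

lemma T_summable {q x : ℂ} (hq : ‖q‖ < 1) (hx : ‖x‖ < 1) (r : ℕ) : Summable (T q x r) := by
  obtain ⟨C, hC, h⟩ := T_bdd hq hx
  exact Summable.of_norm_bounded ((summable_geometric_of_lt_one (norm_nonneg x) hx).mul_left C)
    (h r)

lemma T_tendsto {q x : ℂ} (hq : ‖q‖ < 1) (hx : ‖x‖ < 1) (r : ℕ) :
    Filter.Tendsto (T q x r) Filter.atTop (nhds 0) :=
  (T_summable hq hx r).tendsto_atTop_zero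

noncomputable def G (q x : ℂ) (r n : ℕ) : ℂ := -(1 + x * q ^ (r + 1)) * (1 - q ^ (n - r)) * T q x r n

lemma wz {q x : ℂ} (hq : ‖q‖ < 1) (hx : ‖x‖ < 1) (r n : ℕ) :
    (1 - x ^ 2 * q * q ^ r) * T q x (r + 1) n - x * (1 - q ^ (r + 1)) * T q x r n
      = G q x r (n + 1) - G q x r n := by
  have hA := norm_mul_lt hq (norm_sq_lt hx)
  have hAq := norm_mul_lt hq hA
  rcases lt_or_ge n r with h | h
  · simp only [G, T]
    rw [ker_gt h, ker_gt (by omega : n < r + 1)]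
    rcases (Nat.succ_le_of_lt h).eq_or_lt with h' | h'
    · rw [show n + 1 - r = 0 by omega]; simp
    · rw [ker_gt (by omega : n + 1 < r)]; simp
  · obtain ⟨s, rfl⟩ := Nat.exists_eq_add_of_le h
    simp only [G, T]
    rw [ker_le (by omega : r ≤ r + s), ker_le (by omega : r ≤ r + s + 1),
      show r + s + 1 - r = s + 1 by omega, show r + s - r = s by omega,
      show r + s + 1 + r = r + s + r + 1 by omega, P_succ q s, P_succ q (r + s),
      qPoch_succ q (x ^ 2 * q * q), qPoch_succ q x (r + s + 1)]
    have h1 := qPoch_ne hq hAq (r + s + r)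
    have h2 := one_sub_ne hq hAq (r + s + r)
    have h3 := qPoch_ne hq hq s
    have h4 := one_sub_pow_ne hq s
    have key : ker q (x ^ 2 * q) (r + s) (r + 1) = (1 - q ^ s) /
        (qPoch q q s * (qPoch q (x ^ 2 * q * q) (r + s + r) *
          (1 - x ^ 2 * q * q * q ^ (r + s + r)))) := by
      rcases s with _ | s
      · rw [ker_gt (by omega)]; simp
      · rw [ker_le (by omega), show r + (s + 1) - (r + 1) = s by omega,
          show r + (s + 1) + (r + 1) = r + (s + 1) + r + 1 by omega, P_succ q s,
          qPoch_succ q (x ^ 2 * q * q)]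
        have h5 := qPoch_ne hq hq s
        have h6 := one_sub_pow_ne hq s
        generalize hZ : qPoch q (x ^ 2 * q * q) (r + (s + 1) + r) = Z at *
        generalize hD : 1 - x ^ 2 * q * q * q ^ (r + (s + 1) + r) = D at *
        field_simp
    rw [key]
    generalize hZ : qPoch q (x ^ 2 * q * q) (r + s + r) = Z at *
    generalize hD : 1 - x ^ 2 * q * q * q ^ (r + s + r) = D at *
    field_simp
    subst hD
    ring

lemma W_rec {q x : ℂ} (hq : ‖q‖ < 1) (hx : ‖x‖ < 1) (r : ℕ) :
    (1 - x ^ 2 * q * q ^ r) * ∑' n, T q x (r + 1) n = x * (1 - q ^ (r + 1)) * ∑' n, T q x r n := by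
  have h1 := (((T_summable hq hx (r + 1)).hasSum.mul_left (1 - x ^ 2 * q * q ^ r)).sub
    ((T_summable hq hx r).hasSum.mul_left (x * (1 - q ^ (r + 1))))).tendsto_sum_nat
  have h2 : Filter.Tendsto (fun n => G q x r n) Filter.atTop (nhds 0) := by
    have hT := T_tendsto hq hx r
    have hp : Filter.Tendsto (fun n => q ^ (n - r)) Filter.atTop (nhds 0) :=
      (tendsto_pow_atTop_nhds_zero_of_norm_lt_one hq).comp (Filter.tendsto_sub_atTop_nat r)
    have := ((hp.const_sub 1).const_mul (-(1 + x * q ^ (r + 1)))).mul hT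
    simpa [G] using this
  have h0 : G q x r 0 = 0 := by
    rcases r with _ | r
    · simp [G]
    · simp [G, T, ker]
  have h3 : Filter.Tendsto (fun n => ∑ i ∈ range n, ((1 - x ^ 2 * q * q ^ r) * T q x (r + 1) i -
      x * (1 - q ^ (r + 1)) * T q x r i)) Filter.atTop (nhds 0) := by
    refine h2.congr fun n => ?_
    rw [Finset.sum_congr rfl fun i _ => wz hq hx r i, Finset.sum_range_sub, h0, sub_zero]
  exact sub_eq_zero.mp (tendsto_nhds_unique h1 h3)

lemma W_zero_partial {q x : ℂ} (hq : ‖q‖ < 1) (hx : ‖x‖ < 1) (n : ℕ) :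
    ∑ i ∈ range n, T q x 0 i = (1 - x ^ 2 * q) -
      x ^ n * qPoch q (x * q) n * (1 - x ^ 2 * q * q ^ n) / qPoch q (x ^ 2 * q * q) n := by
  have hA := norm_mul_lt hq (norm_sq_lt hx)
  have hAq := norm_mul_lt hq hA
  induction n with
  | zero => simp [qPoch_zero]
  | succ n ih =>
    rw [Finset.sum_range_succ, ih, T, ker_le (by omega), qPoch_succ' q x, qPoch_succ q (x * q),
      qPoch_succ q (x ^ 2 * q * q)]
    have h1 := qPoch_ne hq hAq n
    have h2 := one_sub_ne hq hAq n
    have h3 := qPoch_ne hq hq n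
    simp only [Nat.sub_zero, add_zero]
    rw [show 1 - x ^ 2 * q * q ^ (n + 1) = 1 - x ^ 2 * q * q * q ^ n by ring]
    generalize hZ : qPoch q (x ^ 2 * q * q) n = Z at *
    generalize hD : 1 - x ^ 2 * q * q * q ^ n = D at *
    field_simp
    ring

lemma W_zero {q x : ℂ} (hq : ‖q‖ < 1) (hx : ‖x‖ < 1) : ∑' n, T q x 0 n = 1 - x ^ 2 * q := by
  have hA := norm_mul_lt hq (norm_sq_lt hx)
  have hAq := norm_mul_lt hq hA
  have h1 := (T_summable hq hx 0).hasSum.tendsto_sum_nat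
  have h2 : Filter.Tendsto (fun n => x ^ n * qPoch q (x * q) n * (1 - x ^ 2 * q * q ^ n) /
      qPoch q (x ^ 2 * q * q) n) Filter.atTop (nhds 0) := by
    obtain ⟨C, hC, b1⟩ := qPoch_bdd hq (x * q)
    obtain ⟨D, hD, b2⟩ := qPoch_inv_bdd hq hAq
    have hb : ∀ n, ‖x ^ n * qPoch q (x * q) n * (1 - x ^ 2 * q * q ^ n) /
      qPoch q (x ^ 2 * q * q) n‖ ≤ (C * 2 * D) * ‖x‖ ^ n := by
      intro n
      rw [div_eq_mul_inv, norm_mul, norm_mul, norm_mul, norm_pow,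
        show (C * 2 * D) * ‖x‖ ^ n = ‖x‖ ^ n * C * 2 * D by ring]
      gcongr
      · exact b1 n
      · calc ‖1 - x ^ 2 * q * q ^ n‖ ≤ ‖(1 : ℂ)‖ + ‖x ^ 2 * q * q ^ n‖ := norm_sub_le _ _
          _ ≤ 1 + 1 := by
            rw [norm_one]
            gcongr
            rw [norm_mul, norm_pow]
            exact mul_le_one₀ hA.le (by positivity) (pow_le_one₀ (norm_nonneg _) hq.le)
          _ = 2 := by norm_num
      · exact b2 n
    refine squeeze_zero_norm hb ?_
    have := (tendsto_pow_atTop_nhds_zero_of_lt_one (norm_nonneg x) hx).const_mul (C * 2 * D)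
    simpa using this
  have h3 := h2.const_sub (1 - x ^ 2 * q)
  rw [sub_zero] at h3
  refine tendsto_nhds_unique h1 (h3.congr fun n => ?_)
  rw [W_zero_partial hq hx]

lemma W_eq {q x : ℂ} (hq : ‖q‖ < 1) (hx : ‖x‖ < 1) (r : ℕ) :
    Cc q (x ^ 2) r * ∑' n, T q x r n = (-1) ^ r * x ^ r * q ^ tri (r + 1) := by
  have hA := norm_mul_lt hq (norm_sq_lt hx)
  have h9 : 1 - x ^ 2 * q ≠ 0 := by simpa using one_sub_ne hq hA 0
  induction r with
  | zero =>
    rw [W_zero hq hx]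
    simp [Cc, qPoch_zero, tri, h9]
  | succ r ih =>
    have h1 := one_sub_ne hq hA r
    have h2 := W_rec hq hx r
    have h3 := qPoch_ne hq hA r
    have h4 := qPoch_ne hq hq r
    have h5 := one_sub_pow_ne hq r
    rw [tri_succ (r + 1),
      show (-1 : ℂ) ^ (r + 1) * x ^ (r + 1) * q ^ (tri (r + 1) + (r + 1))
        = ((-1) ^ r * x ^ r * q ^ tri (r + 1)) * (-x * q ^ (r + 1)) by ring, ← ih]
    simp only [Cc]
    rw [qPoch_succ, P_succ, tri_succ (r + 1), pow_add q (tri (r + 1))]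
    have h6 : ∑' n, T q x (r + 1) n
        = x * (1 - q ^ (r + 1)) * (∑' n, T q x r n) / (1 - x ^ 2 * q * q ^ r) := by
      rw [eq_div_iff h1, mul_comm, h2]
    rw [h6]
    generalize (∑' n, T q x r n) = W
    generalize hD : 1 - x ^ 2 * q * q ^ r = D at *
    generalize qPoch q (x ^ 2 * q) r = Z at *
    generalize hE : 1 - x ^ 2 * q = E at *
    field_simp
    ring

lemma final_sum {q x : ℂ} (hq : ‖q‖ < 1) (hx : ‖x‖ < 1) (δ : ℕ → ℂ) (K : ℝ) (hK : 0 ≤ K)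
    (hδ : ∀ r, ‖δ r‖ ≤ K * ‖x‖ ^ r) :
    ∑' n, qPoch q x (n + 1) * x ^ n *
        (qPoch q q n * Bail q (x ^ 2 * q) (fun r => Cc q (x ^ 2) r * δ r) n)
      = ∑' r, (-1) ^ r * x ^ r * q ^ tri (r + 1) * δ r := by
  obtain ⟨C, hC, h1⟩ := T_bdd hq hx
  obtain ⟨D, hD, h2⟩ := Cc_bdd (y := x ^ 2) hq
  have hg := summable_geometric_of_lt_one (norm_nonneg x) hx
  have hs : Summable (Function.uncurry fun r n => T q x r n * (Cc q (x ^ 2) r * δ r)) := by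
    refine Summable.of_norm_bounded (g := fun p : ℕ × ℕ => (D * K * ‖x‖ ^ p.1) * (C * ‖x‖ ^ p.2))
      (Summable.mul_of_nonneg (hg.mul_left _) (hg.mul_left _)
        (fun n => by positivity) (fun n => by positivity)) ?_
    rintro ⟨r, n⟩
    simp only [Function.uncurry_apply_pair]
    rw [norm_mul, norm_mul, mul_comm]
    have h3 := h1 r n
    have h4 := h2 r
    have h5 := hδ r
    rw [mul_assoc D]
    gcongr
  rw [show (∑' r, (-1) ^ r * x ^ r * q ^ tri (r + 1) * δ r)
      = ∑' r, ∑' n, T q x r n * (Cc q (x ^ 2) r * δ r) from ?_]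
  · rw [← hs.tsum_comm]
    refine tsum_congr fun n => ?_
    rw [tsum_eq_sum (s := range (n + 1)), Bail, Finset.mul_sum, Finset.mul_sum]
    · refine Finset.sum_congr rfl fun r _ => ?_
      rw [T]; ring
    · intro r hr
      rw [T, ker_gt (by simpa using hr)]; ring
  · refine tsum_congr fun r => ?_
    rw [tsum_mul_right, ← W_eq hq hx r]; ring

/-! ### Multiple sums as iterated sums -/

noncomputable def S (w : ℕ → ℕ → ℕ → ℂ) : ℕ → ℕ → ℂ
  | 0, _ => 1
  | j + 1, n => ∑ k ∈ range (n + 2), w j k n * S w j k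

noncomputable def chain (w : ℕ → ℕ → ℕ → ℂ) (j : ℕ) (f : ℕ → ℂ) (k : Fin (j + 1) → ℕ) : ℂ :=
  f (k (Fin.last j)) * ∏ i : Fin j, w i (k i.castSucc) (k i.succ)

lemma chain_sum (w : ℕ → ℕ → ℕ → ℂ) (ρ : ℝ) (h0 : 0 ≤ ρ) (h1 : ρ < 1)
    (hw0 : ∀ j k n, n + 1 < k → w j k n = 0) (C : ℝ) (hC : 0 ≤ C)
    (hw : ∀ j k n, ‖w j k n‖ ≤ C * ρ ^ k) (j : ℕ) :
    ∀ (f : ℕ → ℂ) (D : ℝ), (∀ n, ‖f n‖ ≤ D * ρ ^ n) →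
      Summable (chain w j f) ∧ ∑' k, chain w j f k = ∑' n, f n * S w j n := by
  have hg := summable_geometric_of_lt_one h0 h1
  induction j with
  | zero =>
    intro f D hf
    have hfs : Summable f := Summable.of_norm_bounded (hg.mul_left D) hf
    have he : chain w 0 f = f ∘ (Equiv.funUnique (Fin 1) ℕ) := by
      funext k
      simp [chain]
    constructor
    · rw [he, Equiv.summable_iff]; exact hfs
    · rw [he]
      simp only [S, mul_one]
      exact (Equiv.funUnique (Fin 1) ℕ).tsum_eq f
  | succ j ih =>
    intro f D hf
    have hD : 0 ≤ D := by simpa using (norm_nonneg _).trans (hf 0)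
    let e := Fin.snocEquiv (fun _ : Fin (j + 2) => ℕ)
    have he : ∀ p : ℕ × (Fin (j + 1) → ℕ), chain w (j + 1) f (e p)
        = f p.1 * chain w j (fun k => w j k p.1) p.2 := by
      rintro ⟨n, k⟩
      have hs : ∀ i, (e (n, k)) (Fin.castSucc i) = k i := by
        intro i; simp [e, Fin.snocEquiv]
      have hl : (e (n, k)) (Fin.last (j + 1)) = n := by simp [e, Fin.snocEquiv]
      simp only [chain]
      rw [Fin.prod_univ_castSucc, hl]
      simp only [hs, Fin.succ_last, hl, Fin.val_castSucc, Fin.val_last]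
      have hs2 : ∀ i : Fin j, (e (n, k)) (i.castSucc.succ) = k i.succ := by
        intro i; rw [Fin.succ_castSucc, hs]
      simp only [hs2]
      ring
    obtain ⟨hs1, -⟩ := ih (fun k => ((C * ρ ^ k : ℝ) : ℂ)) C (fun n => by
      rw [Complex.norm_real, Real.norm_of_nonneg (by positivity)])
    have hsum : Summable (fun p : ℕ × (Fin (j + 1) → ℕ) => chain w (j + 1) f (e p)) := by
      refine Summable.of_norm_bounded (g := fun p : ℕ × (Fin (j + 1) → ℕ) =>
        (D * ρ ^ p.1) * ‖chain w j (fun k => ((C * ρ ^ k : ℝ) : ℂ)) p.2‖)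
        (Summable.mul_of_nonneg (hg.mul_left _) hs1.norm
          (fun n => by positivity) (fun n => norm_nonneg _)) ?_
      rintro ⟨n, k⟩
      rw [he, norm_mul]
      refine mul_le_mul (hf n) ?_ (norm_nonneg _) (by positivity)
      simp only [chain, norm_mul]
      refine mul_le_mul_of_nonneg_right ?_ (norm_nonneg _)
      rw [Complex.norm_real, Real.norm_of_nonneg (by positivity)]
      exact hw _ _ _
    refine ⟨(e.summable_iff (f := chain w (j + 1) f)).mp hsum, ?_⟩
    rw [← e.tsum_eq (chain w (j + 1) f), hsum.tsum_prod]
    refine tsum_congr fun n => ?_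
    simp only [he]
    rw [tsum_mul_left, (ih (fun k => w j k n) C (fun k => hw j k n)).2,
      tsum_eq_sum (s := range (n + 2)), S]
    intro k hk
    rw [hw0 j k n (by simp at hk; omega), zero_mul]

noncomputable def ww (q x : ℂ) (a i k n : ℕ) : ℂ :=
  if i + 1 < a then q ^ (k ^ 2) * x ^ (2 * k) * qBinom q n k
  else if i + 1 = a then q ^ (k ^ 2) * x ^ (2 * k) * qBinom q (n + 1) k
  else q ^ (k ^ 2 + k) * x ^ (2 * k) * qBinom q n k

lemma Hterm_eq {q : ℂ} (hq : ‖q‖ < 1) (x : ℂ) (j a : ℕ) (ha : a < j + 1) (k : Fin (j + 1) → ℕ) :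
    Hterm q x (j + 1) a k
      = chain (ww q x a) j (fun n => qPoch q x (n + 1) * x ^ n) k := by
  have hK : ∀ i (h : i < j + 1), Kfun (j + 1) k (i + 1) = k ⟨i, h⟩ := by
    intro i h
    rw [Kfun, dif_pos (by omega)]
    congr 1
  have h1 : ∏ i : Fin j, ww q x a i (k i.castSucc) (k i.succ)
      = ∏ i ∈ Ico 1 (j + 1), ww q x a (i - 1) (Kfun (j + 1) k i) (Kfun (j + 1) k (i + 1)) := by
    rw [Finset.prod_Ico_eq_prod_range, Finset.prod_range]
    refine Finset.prod_congr rfl fun i _ => ?_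
    rw [show 1 + (i : ℕ) - 1 = i by omega, add_comm 1 (i : ℕ), hK i (by omega),
      hK (i + 1) (by omega)]
    rfl
  simp only [chain]
  rw [h1, show k (Fin.last j) = Kfun (j + 1) k (j + 1) from (hK j (by omega)).symm]
  rw [Hterm]
  have h3 : ∏ i ∈ Ico (a + 1) (j + 1),
      q ^ (Kfun (j + 1) k i ^ 2 + Kfun (j + 1) k i) * x ^ (2 * Kfun (j + 1) k i) *
      qBinom q (Kfun (j + 1) k (i + 1)) (Kfun (j + 1) k i)
      = ∏ i ∈ Ico (a + 1) (j + 1),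
        ww q x a (i - 1) (Kfun (j + 1) k i) (Kfun (j + 1) k (i + 1)) := by
    refine Finset.prod_congr rfl fun i hi => ?_
    rw [Finset.mem_Ico] at hi
    rw [ww, if_neg (by omega), if_neg (by omega)]
  rw [h3]
  rcases Nat.eq_zero_or_pos a with h | h
  · subst h
    have hz : Kfun (j + 1) k 0 = 0 := by simp [Kfun]
    simp [hz, qBinom_zero hq]
  · rw [← Finset.prod_Ico_consecutive _ h ha.le, Finset.prod_eq_prod_Ico_succ_bot ha]
    have h2 : ∏ i ∈ Ico 1 a,
      q ^ (Kfun (j + 1) k i ^ 2) * x ^ (2 * Kfun (j + 1) k i) *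
        qBinom q (Kfun (j + 1) k (i + 1)) (Kfun (j + 1) k i)
      = ∏ i ∈ Ico 1 a,
        ww q x a (i - 1) (Kfun (j + 1) k i) (Kfun (j + 1) k (i + 1)) := by
      refine Finset.prod_congr rfl fun i hi => ?_
      rw [Finset.mem_Ico] at hi
      rw [ww, if_pos (by omega)]
    have h4 : ww q x a (a - 1) (Kfun (j + 1) k a) (Kfun (j + 1) k (a + 1))
      = q ^ (Kfun (j + 1) k a ^ 2) * x ^ (2 * Kfun (j + 1) k a) *
        qBinom q (Kfun (j + 1) k (a + 1) + 1) (Kfun (j + 1) k a) := by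
      rw [ww, if_neg (by omega), if_pos (by omega)]
    rw [h2, h4]
    ring

lemma ww_zero (q x : ℂ) (a j k n : ℕ) (h : n + 1 < k) : ww q x a j k n = 0 := by
  rw [ww]
  split_ifs
  · rw [qBinom_gt (by omega), mul_zero]
  · rw [qBinom_gt (by omega), mul_zero]
  · rw [qBinom_gt (by omega), mul_zero]

lemma ww_bdd {q x : ℂ} (hq : ‖q‖ < 1) (hx : ‖x‖ < 1) (a : ℕ) :
    ∃ C : ℝ, 0 ≤ C ∧ ∀ j k n, ‖ww q x a j k n‖ ≤ C * ‖x‖ ^ k := by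
  obtain ⟨C, hC, h⟩ := qBinom_bdd hq
  refine ⟨C, hC, fun j k n => ?_⟩
  have key : ∀ e n' : ℕ, ‖q ^ e * x ^ (2 * k) * qBinom q n' k‖ ≤ C * ‖x‖ ^ k := by
    intro e n'
    rw [norm_mul, norm_mul, norm_pow, norm_pow, mul_comm C]
    gcongr
    · calc ‖q‖ ^ e * ‖x‖ ^ (2 * k) ≤ 1 * ‖x‖ ^ k := by
            gcongr ?_ * ?_
            · exact pow_le_one₀ (norm_nonneg _) hq.le
            · exact pow_le_pow_of_le_one (norm_nonneg _) hx.le (by omega)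
        _ = _ := one_mul _
    · exact h _ _
  rw [ww]
  split_ifs <;> exact key _ _

/-! ### Evaluating the inner sums -/

lemma binom_mul {q : ℂ} (hq : ‖q‖ < 1) {n k : ℕ} (h : k ≤ n) (B : ℂ) :
    qBinom q n k * (qPoch q q k * B) = qPoch q q n * (1 / qPoch q q (n - k) * B) := by
  rw [qBinom_le h]
  have h1 := qPoch_ne hq hq k
  have h2 := qPoch_ne hq hq (n - k)
  field_simp

lemma step_sum {q A : ℂ} (hq : ‖q‖ < 1) (hA : ‖A‖ < 1) (α : ℕ → ℂ) (n : ℕ) :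
    ∑ k ∈ range (n + 1), A ^ k * q ^ (k ^ 2) * qBinom q n k * (qPoch q q k * Bail q A α k)
      = qPoch q q n * Bail q A (fun r => α r * (A ^ r * q ^ (r ^ 2))) n := by
  rw [← Bail_step hq hA, Finset.mul_sum]
  refine Finset.sum_congr rfl fun k hk => ?_
  rw [mul_assoc, binom_mul hq (by simpa [Nat.lt_succ_iff] using hk)]
  ring

noncomputable def αlow (q y : ℂ) (j r : ℕ) : ℂ := U q y r * (y ^ r * q ^ (r ^ 2)) ^ j

lemma αlow_succ (q y : ℂ) (j : ℕ) :
    (fun r => αlow q y j r * (y ^ r * q ^ (r ^ 2))) = αlow q y (j + 1) := by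
  funext r; simp only [αlow]; ring

lemma Bail_one {q y : ℂ} (hq : ‖q‖ < 1) (hy : ‖y‖ < 1) (n : ℕ) :
    qPoch q q n * Bail q y (αlow q y 1) n = 1 := by
  rw [← αlow_succ q y 0, ← step_sum hq hy]
  have : αlow q y 0 = U q y := by funext r; simp [αlow]
  rw [this, Finset.sum_eq_single 0]
  · rw [unit_zero hq hy, qBinom_zero hq]; simp [qPoch_zero]
  · intro k _ hk
    rw [unit_zero hq hy, if_neg hk]; ring
  · simp

lemma S_low {q x : ℂ} (hq : ‖q‖ < 1) (hx : ‖x‖ < 1) (a j : ℕ) (hj : j < a) : ∀ n,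
    S (ww q x a) j n = qPoch q q n * Bail q (x ^ 2) (αlow q (x ^ 2) (j + 1)) n := by
  induction j with
  | zero => intro n; rw [Bail_one hq (norm_sq_lt hx), S]
  | succ j ih =>
    intro n
    rw [S, Finset.sum_range_succ, ww, if_pos hj, qBinom_gt (Nat.lt_succ_self n), ← αlow_succ,
      ← step_sum hq (norm_sq_lt hx), mul_zero, zero_mul, add_zero]
    refine Finset.sum_congr rfl fun k _ => ?_
    rw [ww, if_pos hj, ih (by omega)]
    ring

noncomputable def δδ (q y : ℂ) (a d r : ℕ) : ℂ :=
  ((y ^ r * q ^ (r ^ 2)) ^ (a + 1) - (y ^ (r + 1) * q ^ ((r + 1) ^ 2)) ^ (a + 1)) *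
    ((y * q) ^ r * q ^ (r ^ 2)) ^ d

lemma S_mid {q x : ℂ} (hq : ‖q‖ < 1) (hx : ‖x‖ < 1) (a n : ℕ) :
    S (ww q x a) a n = qPoch q q n *
      Bail q (x ^ 2 * q) (fun r => Cc q (x ^ 2) r * δδ q (x ^ 2) a 0 r) n := by
  have hy := norm_sq_lt hx
  have h1 : S (ww q x a) a n
      = qPoch q q (n + 1) * Bail q (x ^ 2) (αlow q (x ^ 2) (a + 1)) (n + 1) := by
    rcases a with _ | a
    · rw [Bail_one hq hy, S]
    · rw [S, ← αlow_succ, ← step_sum hq hy]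
      refine Finset.sum_congr rfl fun k _ => ?_
      rw [ww, if_neg (by omega), if_pos rfl, S_low hq hx (a + 1) a (by omega)]
      ring
  have h2 := twist hq hy (fun r => ((x ^ 2) ^ r * q ^ (r ^ 2)) ^ (a + 1)) n
  rw [h1, P_succ, mul_assoc]
  congr 1
  simp only [δδ, pow_zero, mul_one]
  exact h2

lemma S_high {q x : ℂ} (hq : ‖q‖ < 1) (hx : ‖x‖ < 1) (a d : ℕ) : ∀ n,
    S (ww q x a) (a + d) n = qPoch q q n *
      Bail q (x ^ 2 * q) (fun r => Cc q (x ^ 2) r * δδ q (x ^ 2) a d r) n := by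
  have hy := norm_sq_lt hx
  induction d with
  | zero => intro n; exact S_mid hq hx a n
  | succ d ih =>
    intro n
    have h1 : (fun r => Cc q (x ^ 2) r * δδ q (x ^ 2) a (d + 1) r) = (fun r =>
        (Cc q (x ^ 2) r * δδ q (x ^ 2) a d r) * ((x ^ 2 * q) ^ r * q ^ (r ^ 2))) := by
      funext r; simp only [δδ]; ring
    rw [h1, ← step_sum hq (norm_mul_lt hq hy), ← add_assoc, S, Finset.sum_range_succ, ww,
      if_neg (by omega), if_neg (by omega), qBinom_gt (Nat.lt_succ_self n), mul_zero, zero_mul,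
      add_zero]
    refine Finset.sum_congr rfl fun k _ => ?_
    rw [ww, if_neg (by omega), if_neg (by omega), ih]
    ring

/-! ### The right-hand side -/

lemma two_tri (r : ℕ) : 2 * tri (r + 1) = r * (r + 1) := by
  induction r with
  | zero => simp [tri]
  | succ r ih => rw [tri_succ, mul_add, ih]; ring

noncomputable def rhsT (q x : ℂ) (m a n : ℕ) : ℂ := (chiGen m a n : ℂ) *
          q ^ ((n ^ 2 - (2 * m - 2 * a - 1) ^ 2) / (8 * (2 * m + 1))) *
          x ^ ((n - (2 * m - 2 * a - 1)) / 2)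

def e1 (a d r : ℕ) : ℕ := 2 * (2 * (a + d + 1) + 1) * r + (2 * d + 1)
def e2 (a d r : ℕ) : ℕ := 2 * (2 * (a + d + 1) + 1) * r + (4 * a + 2 * d + 5)

lemma chi_e1 (a d r : ℕ) : chiGen (a + d + 1) a (e1 a d r) = (-1) ^ r := by
  have hM : ∀ l s, s < 8 * (a + d + 1) + 4 →
      ((8 * (a + d + 1) + 4) * l + s) % (8 * (a + d + 1) + 4) = s := by
    intro l s hs
    rw [Nat.mul_add_mod, Nat.mod_eq_of_lt hs]
  have hS : ∀ s, s < 8 * (a + d + 1) + 4 → s % (8 * (a + d + 1) + 4) = s :=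
    fun s hs => Nat.mod_eq_of_lt hs
  rw [chiGen, hS (2 * (a + d + 1) - 2 * a - 1) (by omega), hS (6 * (a + d + 1) + 2 * a + 5) (by omega),
    hS (2 * (a + d + 1) + 2 * a + 3) (by omega), hS (6 * (a + d + 1) - 2 * a + 1) (by omega)]
  rcases Nat.even_or_odd' r with ⟨l, h | h⟩
  · have h1 : e1 a d r = (8 * (a + d + 1) + 4) * l + (2 * d + 1) := by
      rw [e1, h]; ring
    rw [h1, hM _ _ (by omega), if_pos (by omega), h, pow_mul]; simp
  · have h1 : e1 a d r = (8 * (a + d + 1) + 4) * l + (4 * a + 6 * d + 7) := by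
      rw [e1, h]; ring
    rw [h1, hM _ _ (by omega), if_neg (by omega), if_neg (by omega), if_neg (by omega),
      if_pos (by omega), h, pow_succ, pow_mul]; simp

lemma chi_e2 (a d r : ℕ) : chiGen (a + d + 1) a (e2 a d r) = -(-1) ^ r := by
  have hM : ∀ l s, s < 8 * (a + d + 1) + 4 →
      ((8 * (a + d + 1) + 4) * l + s) % (8 * (a + d + 1) + 4) = s := by
    intro l s hs
    rw [Nat.mul_add_mod, Nat.mod_eq_of_lt hs]
  have hS : ∀ s, s < 8 * (a + d + 1) + 4 → s % (8 * (a + d + 1) + 4) = s :=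
    fun s hs => Nat.mod_eq_of_lt hs
  rw [chiGen, hS (2 * (a + d + 1) - 2 * a - 1) (by omega), hS (6 * (a + d + 1) + 2 * a + 5) (by omega),
    hS (2 * (a + d + 1) + 2 * a + 3) (by omega), hS (6 * (a + d + 1) - 2 * a + 1) (by omega)]
  rcases Nat.even_or_odd' r with ⟨l, h | h⟩
  · have h1 : e2 a d r = (8 * (a + d + 1) + 4) * l + (4 * a + 2 * d + 5) := by
      rw [e2, h]; ring
    rw [h1, hM _ _ (by omega), if_neg (by omega), if_neg (by omega), if_pos (by omega), h,
      pow_mul]; simp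
  · have h1 : e2 a d r = (8 * (a + d + 1) + 4) * l + (8 * a + 6 * d + 11) := by
      rw [e2, h]; ring
    rw [h1, hM _ _ (by omega), if_neg (by omega), if_pos (by omega), h, pow_succ, pow_mul]; simp

lemma chi_supp (a d n : ℕ) (h : chiGen (a + d + 1) a n ≠ 0) :
    n ∈ Set.range (e1 a d) ∪ Set.range (e2 a d) := by
  have hS : ∀ s, s < 8 * (a + d + 1) + 4 → s % (8 * (a + d + 1) + 4) = s :=
    fun s hs => Nat.mod_eq_of_lt hs
  rw [chiGen, hS (2 * (a + d + 1) - 2 * a - 1) (by omega), hS (6 * (a + d + 1) + 2 * a + 5) (by omega),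
    hS (2 * (a + d + 1) + 2 * a + 3) (by omega), hS (6 * (a + d + 1) - 2 * a + 1) (by omega)] at h
  have hn := Nat.div_add_mod n (8 * (a + d + 1) + 4)
  set l := n / (8 * (a + d + 1) + 4)
  split_ifs at h with h1 h2 h3 h4
  · left; refine ⟨2 * l, ?_⟩
    rw [← hn, h1, show 2 * (a + d + 1) - 2 * a - 1 = 2 * d + 1 by omega, e1]; ring
  · right; refine ⟨2 * l + 1, ?_⟩
    rw [← hn, h2, e2]; ring
  · right; refine ⟨2 * l, ?_⟩
    rw [← hn, h3, e2]; ring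
  · left; refine ⟨2 * l + 1, ?_⟩
    rw [← hn, h4, show 6 * (a + d + 1) - 2 * a + 1 = 4 * a + 6 * d + 7 by omega, e1]; ring
  · exact absurd rfl h

lemma e_disj (a d : ℕ) : Disjoint (Set.range (e1 a d)) (Set.range (e2 a d)) := by
  rw [Set.disjoint_left]
  rintro _ ⟨r, rfl⟩ ⟨s, hs⟩
  have h1 : (e1 a d r) % (2 * (2 * (a + d + 1) + 1)) = 2 * d + 1 := by
    rw [e1, Nat.mul_add_mod, Nat.mod_eq_of_lt (by omega)]
  have h2 : (e2 a d s) % (2 * (2 * (a + d + 1) + 1)) = 4 * a + 2 * d + 5 := by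
    rw [e2, Nat.mul_add_mod, Nat.mod_eq_of_lt (by omega)]
  rw [hs] at h2
  omega

lemma e1_inj (a d : ℕ) : Function.Injective (e1 a d) := by
  intro r s h
  simp only [e1] at h
  exact Nat.eq_of_mul_eq_mul_left (by omega) (Nat.add_right_cancel h)

lemma e2_inj (a d : ℕ) : Function.Injective (e2 a d) := by
  intro r s h
  simp only [e2] at h
  exact Nat.eq_of_mul_eq_mul_left (by omega) (Nat.add_right_cancel h)

noncomputable def t1 (q x : ℂ) (a d r : ℕ) : ℂ :=
  (-1) ^ r * x ^ r * q ^ tri (r + 1) *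
    (((x ^ 2) ^ r * q ^ (r ^ 2)) ^ (a + 1) * ((x ^ 2 * q) ^ r * q ^ (r ^ 2)) ^ d)

noncomputable def t2 (q x : ℂ) (a d r : ℕ) : ℂ :=
  (-1) ^ r * x ^ r * q ^ tri (r + 1) *
    (((x ^ 2) ^ (r + 1) * q ^ ((r + 1) ^ 2)) ^ (a + 1) * ((x ^ 2 * q) ^ r * q ^ (r ^ 2)) ^ d)

lemma rhs_e1 (q x : ℂ) (a d r : ℕ) : rhsT q x (a + d + 1) a (e1 a d r) = t1 q x a d r := by
  have hb : 2 * (a + d + 1) - 2 * a - 1 = 2 * d + 1 := by omega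
  rw [rhsT, chi_e1, hb]
  have h1 : ((e1 a d r) ^ 2 - (2 * d + 1) ^ 2) / (8 * (2 * (a + d + 1) + 1))
      = tri (r + 1) + r ^ 2 * (a + 1) + (r + r ^ 2) * d := by
    apply Nat.div_eq_of_eq_mul_right (by omega)
    apply Nat.sub_eq_of_eq_add
    have := two_tri r
    rw [e1]
    zify at this ⊢
    linear_combination (-4 * (2 * ((a:ℤ) + d + 1) + 1)) * this
  have h2 : (e1 a d r - (2 * d + 1)) / 2 = r + 2 * r * (a + 1) + 2 * r * d := by
    apply Nat.div_eq_of_eq_mul_right (by omega)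
    apply Nat.sub_eq_of_eq_add
    rw [e1]; ring
  rw [h1, h2, t1]
  push_cast
  ring

lemma rhs_e2 (q x : ℂ) (a d r : ℕ) : rhsT q x (a + d + 1) a (e2 a d r) = -t2 q x a d r := by
  have hb : 2 * (a + d + 1) - 2 * a - 1 = 2 * d + 1 := by omega
  rw [rhsT, chi_e2, hb]
  have h1 : ((e2 a d r) ^ 2 - (2 * d + 1) ^ 2) / (8 * (2 * (a + d + 1) + 1))
      = tri (r + 1) + (r + 1) ^ 2 * (a + 1) + (r + r ^ 2) * d := by
    apply Nat.div_eq_of_eq_mul_right (by omega)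
    apply Nat.sub_eq_of_eq_add
    have := two_tri r
    rw [e2]
    zify at this ⊢
    linear_combination (-4 * (2 * ((a:ℤ) + d + 1) + 1)) * this
  have h2 : (e2 a d r - (2 * d + 1)) / 2 = r + 2 * (r + 1) * (a + 1) + 2 * r * d := by
    apply Nat.div_eq_of_eq_mul_right (by omega)
    apply Nat.sub_eq_of_eq_add
    rw [e2]; ring
  rw [h1, h2, t2]
  push_cast
  ring

lemma pow_norm_le_one {z : ℂ} (hz : ‖z‖ < 1) (n : ℕ) : ‖z ^ n‖ ≤ 1 := by
  rw [norm_pow]; exact pow_le_one₀ (norm_nonneg _) hz.le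

lemma pw_bdd {q x : ℂ} (hq : ‖q‖ < 1) (hx : ‖x‖ < 1) (a d r s : ℕ) (hs : r ≤ s) :
    ‖((x ^ 2) ^ s * q ^ (s ^ 2)) ^ (a + 1) * ((x ^ 2 * q) ^ r * q ^ (r ^ 2)) ^ d‖ ≤ ‖x‖ ^ r := by
  have : ((x ^ 2) ^ s * q ^ (s ^ 2)) ^ (a + 1) * ((x ^ 2 * q) ^ r * q ^ (r ^ 2)) ^ d
      = x ^ (2 * s * (a + 1) + 2 * r * d) * q ^ (s ^ 2 * (a + 1) + (r + r ^ 2) * d) := by ring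
  rw [this, norm_mul, norm_pow]
  calc _ ≤ ‖x‖ ^ r * 1 := by
        refine mul_le_mul ?_ (pow_norm_le_one hq _) (norm_nonneg _) (by positivity)
        apply pow_le_pow_of_le_one (norm_nonneg _) hx.le
        nlinarith [Nat.zero_le (s * a), Nat.zero_le (r * d)]
    _ = _ := mul_one _

lemma pref_bdd {q x : ℂ} (hq : ‖q‖ < 1) (hx : ‖x‖ < 1) (r : ℕ) :
    ‖(-1) ^ r * x ^ r * q ^ tri (r + 1)‖ ≤ 1 := by
  rw [norm_mul, norm_mul]
  have h1 := pow_norm_le_one hx r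
  have h2 := pow_norm_le_one hq (tri (r + 1))
  simp only [norm_pow, norm_neg, norm_one, one_pow, one_mul] at *
  exact mul_le_one₀ h1 (by positivity) h2

lemma t1_summable {q x : ℂ} (hq : ‖q‖ < 1) (hx : ‖x‖ < 1) (a d : ℕ) : Summable (t1 q x a d) := by
  refine Summable.of_norm_bounded (summable_geometric_of_lt_one (norm_nonneg x) hx) fun r => ?_
  rw [t1, norm_mul, ← one_mul (‖x‖ ^ r)]
  exact mul_le_mul (pref_bdd hq hx r) (pw_bdd hq hx a d r r le_rfl) (norm_nonneg _) zero_le_one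

lemma t2_summable {q x : ℂ} (hq : ‖q‖ < 1) (hx : ‖x‖ < 1) (a d : ℕ) : Summable (t2 q x a d) := by
  refine Summable.of_norm_bounded (summable_geometric_of_lt_one (norm_nonneg x) hx) fun r => ?_
  rw [t2, norm_mul, ← one_mul (‖x‖ ^ r)]
  exact mul_le_mul (pref_bdd hq hx r) (pw_bdd hq hx a d r (r + 1) (by omega)) (norm_nonneg _)
    zero_le_one

lemma rhs_hasSum {q x : ℂ} (hq : ‖q‖ < 1) (hx : ‖x‖ < 1) (a d : ℕ) :
    HasSum (rhsT q x (a + d + 1) a)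
      (∑' r, (-1) ^ r * x ^ r * q ^ tri (r + 1) * δδ q (x ^ 2) a d r) := by
  have h1 := t1_summable hq hx a d
  have h2 := t2_summable hq hx a d
  have heq : (∑' r, (-1) ^ r * x ^ r * q ^ tri (r + 1) * δδ q (x ^ 2) a d r)
      = ∑' r, t1 q x a d r + ∑' r, -t2 q x a d r := by
    rw [← h1.tsum_add h2.neg]
    refine tsum_congr fun r => ?_
    simp only [t1, t2, δδ]; ring
  rw [heq]
  have k1 : HasSum (rhsT q x (a + d + 1) a ∘ e1 a d) (∑' r, t1 q x a d r) := by
    rw [show rhsT q x (a + d + 1) a ∘ e1 a d = t1 q x a d from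
      funext fun r => rhs_e1 q x a d r]
    exact h1.hasSum
  have k2 : HasSum (rhsT q x (a + d + 1) a ∘ e2 a d) (∑' r, -t2 q x a d r) := by
    rw [show rhsT q x (a + d + 1) a ∘ e2 a d = fun r => -t2 q x a d r from
      funext fun r => rhs_e2 q x a d r]
    exact h2.neg.hasSum
  rw [← (e1_inj a d).hasSum_range_iff] at k1
  rw [← (e2_inj a d).hasSum_range_iff] at k2
  have k3 := HasSum.add_disjoint (f := rhsT q x (a + d + 1) a) (e_disj a d) k1 k2
  refine (hasSum_subtype_iff_of_support_subset ?_).mp k3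
  intro n hn
  apply chi_supp a d n
  intro h0
  apply hn
  rw [rhsT, h0]; simp

lemma main {q x : ℂ} (hq : ‖q‖ < 1) (hx : ‖x‖ < 1) (a d : ℕ) :
    Summable (Hterm q x (a + d + 1) a) ∧ Summable (rhsT q x (a + d + 1) a) ∧
      ∑' k, Hterm q x (a + d + 1) a k = ∑' n, rhsT q x (a + d + 1) a n := by
  have hR := rhs_hasSum hq hx a d
  obtain ⟨C, hC, hw⟩ := ww_bdd hq hx a
  obtain ⟨D, hD, hp⟩ := qPoch_bdd hq x
  have hch := chain_sum (ww q x a) ‖x‖ (norm_nonneg _) hx (ww_zero q x a) C hC hw (a + d)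
    (fun n => qPoch q x (n + 1) * x ^ n) D (fun n => by
      rw [norm_mul, norm_pow]
      gcongr
      exact hp _)
  have hH : Hterm q x (a + d + 1) a
      = chain (ww q x a) (a + d) (fun n => qPoch q x (n + 1) * x ^ n) :=
    funext fun k => Hterm_eq hq x (a + d) a (by omega) k
  refine ⟨by rw [hH]; exact hch.1, hR.summable, ?_⟩
  rw [hH, hch.2, hR.tsum_eq, ← final_sum hq hx (δδ q (x ^ 2) a d) 2 (by norm_num)]
  · refine tsum_congr fun n => ?_
    rw [S_high hq hx]
  · intro r
    rw [δδ, sub_mul]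
    calc _ ≤ _ := norm_sub_le _ _
      _ ≤ ‖x‖ ^ r + ‖x‖ ^ r :=
        add_le_add (pw_bdd hq hx a d r r le_rfl) (pw_bdd hq hx a d r (r + 1) (by omega))
      _ = _ := by ring

end HikamiProof

theorem stmt_8 (m a : ℕ) (hm : 1 ≤ m) (ha : a < m) (q x : ℂ)
    (hq : ‖q‖ < 1) (hx : ‖x‖ < 1) :
    Summable (Hterm q x m a) ∧
    Summable (fun n : ℕ => (chiGen m a n : ℂ) *
      q ^ ((n ^ 2 - (2 * m - 2 * a - 1) ^ 2) / (8 * (2 * m + 1))) *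
      x ^ ((n - (2 * m - 2 * a - 1)) / 2)) ∧
    ∑' k : Fin m → ℕ, Hterm q x m a k
      = ∑' n : ℕ, (chiGen m a n : ℂ) *
          q ^ ((n ^ 2 - (2 * m - 2 * a - 1) ^ 2) / (8 * (2 * m + 1))) *
          x ^ ((n - (2 * m - 2 * a - 1)) / 2) := by
  obtain ⟨d, rfl⟩ := Nat.exists_eq_add_of_lt ha
  exact HikamiProof.main hq hx a d
end

section
/- Let m ≥ 1 and 0 ≤ a ≤ m−1 be integers, and for complex q, x with |q| < 1, |x| < 1 define H_m^{(a)}(x) = Σ_{k₁,…,k_m ≥ 0} (x;q)_{k_m+1} · x^{k_m} · (∏_{i=1}^{a−1} q^{k_i²} x^{2k_i} [k_{i+1} choose k_i]_q) · q^{k_a²} x^{2k_a} [k_{a+1}+1 choose k_a]_q · (∏_{i=a+1}^{m−1} q^{k_i²+k_i} x^{2k_i} [k_{i+1} choose k_i]_q), with the convention k₀ = 0 when a = 0. Then H_m^{(a)} satisfies the q-difference equation H_m^{(a)}(x) = 1 − q^{a+1}·x^{2a+2} − q^{2m−a}·x^{2m+1}·H_m^{(a)}(q·x). -/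
/-- `H_m^{(a)}(x)` as a function of `x`. -/
noncomputable def Hm (q : ℂ) (m a : ℕ) (x : ℂ) : ℂ := ∑' k : Fin m → ℕ, Hterm q x m a k


lemma qPoch_zero (q x : ℂ) : qPoch q x 0 = 1 := by simp [qPoch]

lemma qPoch_succ (q x : ℂ) (n : ℕ) : qPoch q x (n + 1) = qPoch q x n * (1 - x * q ^ n) := by
  simp [qPoch, Finset.prod_range_succ]

lemma qPoch_add (q x : ℂ) (m n : ℕ) :
    qPoch q x (m + n) = qPoch q x m * qPoch q (x * q ^ m) n := by
  simp only [qPoch, Finset.prod_range_add]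
  congr 1
  apply Finset.prod_congr rfl
  intro i _
  ring

lemma qPoch_succ_left (q x : ℂ) (n : ℕ) : qPoch q x (n + 1) = (1 - x) * qPoch q (x * q) n := by
  rw [add_comm n 1, qPoch_add]
  simp [qPoch]

lemma norm_mul_pow_lt {q x : ℂ} (hq : ‖q‖ < 1) (hx : ‖x‖ < 1) (n : ℕ) : ‖x * q ^ n‖ < 1 := by
  rw [norm_mul, norm_pow]
  have h1 : ‖q‖ ^ n ≤ 1 := pow_le_one₀ (norm_nonneg _) hq.le
  nlinarith [norm_nonneg x, norm_nonneg q]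

lemma norm_mul_lt {q x : ℂ} (hq : ‖q‖ < 1) (hx : ‖x‖ < 1) : ‖x * q‖ < 1 := by
  simpa using norm_mul_pow_lt hq hx 1

lemma one_sub_ne {z : ℂ} (hz : ‖z‖ < 1) : 1 - z ≠ 0 := by
  intro h
  have : z = 1 := (sub_eq_zero.mp h).symm
  rw [this] at hz
  simp at hz

lemma qPoch_ne {q x : ℂ} (hq : ‖q‖ < 1) (hx : ‖x‖ < 1) (n : ℕ) : qPoch q x n ≠ 0 := by
  rw [qPoch, Finset.prod_ne_zero_iff]
  intro i _
  exact one_sub_ne (norm_mul_pow_lt hq hx i)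

lemma qPoch_bdd {q x : ℂ} (hq : ‖q‖ < 1) (hx : ‖x‖ < 1) :
    ∃ C : ℝ, 0 < C ∧ (∀ n, ‖qPoch q x n‖ ≤ C) ∧ (∀ n, ‖(qPoch q x n)⁻¹‖ ≤ C) := by
  have hx1 : 0 < 1 - ‖x‖ := by linarith
  have hgeo : ∀ n : ℕ, ∑ i ∈ Finset.range n, ‖q‖ ^ i ≤ (1 - ‖q‖)⁻¹ := fun n => by
    rw [← tsum_geometric_of_lt_one (norm_nonneg q) hq]
    exact Summable.sum_le_tsum _ (fun i _ => by positivity)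
      (summable_geometric_of_lt_one (norm_nonneg q) hq)
  refine ⟨Real.exp ((1 - ‖x‖)⁻¹ * (1 - ‖q‖)⁻¹), Real.exp_pos _, ?_, ?_⟩
  · intro n
    calc ‖qPoch q x n‖ ≤ ∏ i ∈ Finset.range n, Real.exp ((1 - ‖x‖)⁻¹ * ‖q‖ ^ i) := by
          rw [qPoch, norm_prod]
          apply Finset.prod_le_prod (fun _ _ => norm_nonneg _)
          intro i _
          have h1 : ‖1 - x * q ^ i‖ ≤ 1 + ‖x‖ * ‖q‖ ^ i := by
            refine (norm_sub_le _ _).trans ?_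
            simp
          have h2 := Real.add_one_le_exp ((1 - ‖x‖)⁻¹ * ‖q‖ ^ i)
          have h3 : ‖x‖ ≤ (1 - ‖x‖)⁻¹ := by
            have : 1 ≤ (1 - ‖x‖)⁻¹ := (one_le_inv₀ hx1).2 (by linarith [norm_nonneg x])
            linarith
          have h4 : 0 ≤ ‖q‖ ^ i := by positivity
          nlinarith
      _ = Real.exp ((1 - ‖x‖)⁻¹ * ∑ i ∈ Finset.range n, ‖q‖ ^ i) := by
          rw [← Real.exp_sum, Finset.mul_sum]
      _ ≤ _ := by
          apply Real.exp_le_exp.2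
          exact mul_le_mul_of_nonneg_left (hgeo n) (inv_nonneg.2 hx1.le)
  · intro n
    calc ‖(qPoch q x n)⁻¹‖ ≤ ∏ i ∈ Finset.range n, Real.exp ((1 - ‖x‖)⁻¹ * ‖q‖ ^ i) := by
          rw [qPoch, ← Finset.prod_inv_distrib, norm_prod]
          apply Finset.prod_le_prod (fun _ _ => norm_nonneg _)
          intro i _
          set t := ‖q‖ ^ i with ht
          have h4 : 0 ≤ t := by positivity
          have h5 : t ≤ 1 := pow_le_one₀ (norm_nonneg _) hq.le
          have h1 : 1 - ‖x‖ * t ≤ ‖1 - x * q ^ i‖ := by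
            have := norm_sub_norm_le (1 : ℂ) (x * q ^ i)
            simpa using this
          have h6 : 0 < 1 - ‖x‖ * t := by nlinarith [norm_nonneg x]
          rw [norm_inv]
          refine (inv_anti₀ h6 h1).trans ?_
          refine le_trans ?_ (Real.add_one_le_exp ((1 - ‖x‖)⁻¹ * t))
          rw [inv_le_iff_one_le_mul₀ h6]
          have h7 : (1 - ‖x‖)⁻¹ * (1 - ‖x‖) = 1 := inv_mul_cancel₀ hx1.ne'
          have h8 : 0 < (1 - ‖x‖)⁻¹ := inv_pos.2 hx1
          have : ((1 - ‖x‖)⁻¹ * t + 1) * (1 - ‖x‖ * t)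
              = 1 + t * ((1 - ‖x‖)⁻¹ * (1 - ‖x‖)  - ‖x‖) + (1 - ‖x‖)⁻¹ * ‖x‖ * t * (1 - t) := by ring
          rw [this, h7]
          have : 0 ≤ t * (1 - ‖x‖) := by positivity
          have : 0 ≤ (1 - ‖x‖)⁻¹ * ‖x‖ * t * (1 - t) := by
            have : 0 ≤ 1 - t := by linarith
            positivity
          linarith
      _ = Real.exp ((1 - ‖x‖)⁻¹ * ∑ i ∈ Finset.range n, ‖q‖ ^ i) := by
          rw [← Real.exp_sum, Finset.mul_sum]
      _ ≤ _ := by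
          apply Real.exp_le_exp.2
          exact mul_le_mul_of_nonneg_left (hgeo n) (inv_nonneg.2 hx1.le)

/-- the terms of the special q-Gauss sum -/
noncomputable def gT (q a z : ℂ) (u j : ℕ) : ℂ :=
  qPoch q a j * qPoch q q (u + j) / (qPoch q q j * qPoch q (a * z * q ^ (u + 1)) j) * z ^ j

lemma gT_bdd {q a z : ℂ} (hq : ‖q‖ < 1) (ha : ‖a‖ < 1) (hz : ‖z‖ < 1) (u : ℕ) :
    ∃ C : ℝ, 0 < C ∧ ∀ j, ‖gT q a z u j‖ ≤ C * ‖z‖ ^ j := by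
  obtain ⟨C1, p1, h1, -⟩ := qPoch_bdd hq ha
  obtain ⟨C2, p2, h2, h2'⟩ := qPoch_bdd hq hq
  obtain ⟨C3, p3, -, h3⟩ := qPoch_bdd hq (norm_mul_pow_lt hq (norm_mul_lt hz ha) (u + 1))
  refine ⟨C1 * C2 * (C2 * C3), by positivity, fun j => ?_⟩
  rw [gT, div_eq_mul_inv, mul_inv, norm_mul, norm_mul, norm_mul, norm_mul, norm_pow]
  gcongr
  · exact h1 j
  · exact h2 _
  · exact h2' j
  · exact h3 j

lemma gT_summable {q a z : ℂ} (hq : ‖q‖ < 1) (ha : ‖a‖ < 1) (hz : ‖z‖ < 1) (u : ℕ) :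
    Summable (gT q a z u) := by
  obtain ⟨C, _, h⟩ := gT_bdd hq ha hz u
  exact Summable.of_norm_bounded
    ((summable_geometric_of_lt_one (norm_nonneg z) hz).mul_left C) h

lemma tendsto_bdd_mul {f : ℕ → ℂ} {C : ℝ} {z : ℂ} (hz : ‖z‖ < 1)
    (hf : ∀ j, ‖f j‖ ≤ C * ‖z‖ ^ j) : Filter.Tendsto f Filter.atTop (nhds 0) := by
  apply squeeze_zero_norm hf
  simpa using (tendsto_pow_atTop_nhds_zero_of_lt_one (norm_nonneg z) hz).const_mul C

lemma gT_zero_sum {q a z : ℂ} (hq : ‖q‖ < 1) (ha : ‖a‖ < 1) (hz : ‖z‖ < 1) :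
    ∑' j, gT q a z 0 j = (1 - a * z) / (1 - z) := by
  have hazq := norm_mul_pow_lt hq (norm_mul_lt hz ha) 
  have hpart : ∀ n, (1 - z) * ∑ j ∈ Finset.range n, gT q a z 0 j
      = (1 - a * z) - (1 - a * z * q ^ n) * gT q a z 0 n := by
    intro n
    induction n with
    | zero => simp [gT, qPoch_zero]
    | succ n ih =>
      rw [Finset.sum_range_succ, mul_add, ih]
      have e1 := qPoch_ne hq hq n
      have e2 := qPoch_ne hq (hazq 1) n
      have e3 := one_sub_ne (norm_mul_pow_lt hq hq n)
      have e4 := one_sub_ne (norm_mul_pow_lt hq (hazq 1) n)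
      simp only [gT, zero_add, qPoch_succ]
      rw [show a * z * q ^ (n + 1) = a * z * q * q ^ n by ring]
      rw [pow_one] at e4
      generalize qPoch q (a * z * q ^ 1) n = D at *
      simp only [pow_one]
      generalize q ^ n = N at *
      generalize hX : 1 - q * N = X at *
      generalize hY : 1 - a * z * q * N = Y at *
      field_simp
      ring
  obtain ⟨C, hC, hb⟩ := gT_bdd hq ha hz 0
  have hs := (gT_summable hq ha hz 0).hasSum.tendsto_sum_nat.const_mul (1 - z)
  simp only [hpart] at hs
  have ht : Filter.Tendsto (fun n => (1 - a * z) - (1 - a * z * q ^ n) * gT q a z 0 n)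
      Filter.atTop (nhds (1 - a * z - 0)) := by
    apply Filter.Tendsto.sub tendsto_const_nhds
    apply tendsto_bdd_mul (C := 2 * C) (z := z) hz
    intro j
    rw [norm_mul, mul_assoc (2 : ℝ) C]
    refine mul_le_mul ?_ (hb j) (norm_nonneg _) (by norm_num)
    · refine (norm_sub_le _ _).trans ?_
      have := hazq j
      simp only [norm_one]; linarith
  have := tendsto_nhds_unique hs ht
  rw [eq_div_iff (one_sub_ne hz), mul_comm, this, sub_zero]

lemma gT_rec {q a z : ℂ} (hq : ‖q‖ < 1) (ha : ‖a‖ < 1) (hz : ‖z‖ < 1) (u : ℕ) :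
    (1 - z) * ∑' j, gT q a z (u + 1) j
      = (1 - a * z) * (1 - q ^ (u + 1)) * ∑' j, gT q a (z * q) u j := by
  have hazq := norm_mul_pow_lt hq (norm_mul_lt hz ha) 
  have hpart : ∀ n, (1 - z) * ∑ j ∈ Finset.range n, gT q a z (u + 1) j
      - (1 - a * z) * (1 - q ^ (u + 1)) * ∑ j ∈ Finset.range n, gT q a (z * q) u j
      = - (qPoch q a n * z ^ n * qPoch q q (u + n) * (1 - q ^ n) * (1 - a * z * q ^ (u + 1 + n))
        / (qPoch q q n * qPoch q (a * z * q ^ (u + 2)) n)) := by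
    intro n
    induction n with
    | zero => simp
    | succ n ih =>
      rw [Finset.sum_range_succ, Finset.sum_range_succ, mul_add, mul_add, add_sub_add_comm, ih]
      have e1 := qPoch_ne hq hq n
      have e2 := qPoch_ne hq (hazq (u + 2)) n
      have e3 := one_sub_ne (norm_mul_pow_lt hq hq n)
      have e4 := one_sub_ne (norm_mul_pow_lt hq (hazq (u + 2)) n)
      have r1 : u + 1 + n = (u + n) + 1 := by ring
      have r2 : u + (n + 1) = (u + n) + 1 := by ring
      simp only [gT, r1, r2, qPoch_succ]
      rw [show a * (z * q) * q ^ (u + 1) = a * z * q ^ (u + 2) by ring]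
      rw [show a * z * q ^ (u + 1 + 1) = a * z * q ^ (u + 2) by ring]
      rw [show (1 - q ^ (n + 1)) = 1 - q * q ^ n by ring]
      rw [show a * z * q ^ (u + 1 + (n + 1)) = a * z * q ^ (u + 2) * q ^ n by ring]
      generalize qPoch q (a * z * q ^ (u + 2)) n = D at *
      simp only [pow_add, pow_one, mul_pow z q] at *
      generalize q ^ n = N at *
      generalize q ^ u = U at *
      generalize hX : 1 - q * N = X at *
      generalize hY : 1 - a * z * (U * q ^ 2) * N = Y at *
      field_simp
      ring
  obtain ⟨C1, p1, h1, -⟩ := qPoch_bdd hq ha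
  obtain ⟨C2, p2, h2, h2'⟩ := qPoch_bdd hq hq
  obtain ⟨C3, p3, -, h3⟩ := qPoch_bdd hq (hazq (u + 2))
  have hs := ((gT_summable hq ha hz (u + 1)).hasSum.tendsto_sum_nat.const_mul (1 - z)).sub
    ((gT_summable hq ha (norm_mul_lt hq hz) u).hasSum.tendsto_sum_nat.const_mul
      ((1 - a * z) * (1 - q ^ (u + 1))))
  simp only [hpart] at hs
  have ht := tendsto_bdd_mul (f := fun n => - (qPoch q a n * z ^ n * qPoch q q (u + n) * (1 - q ^ n)
      * (1 - a * z * q ^ (u + 1 + n)) / (qPoch q q n * qPoch q (a * z * q ^ (u + 2)) n)))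
      (C := C1 * C2 * 2 * 2 * (C2 * C3)) (z := z) hz (by
    intro j
    rw [norm_neg, div_eq_mul_inv, mul_inv]
    simp only [norm_mul]
    rw [show C1 * C2 * 2 * 2 * (C2 * C3) * ‖z‖ ^ j = C1 * ‖z‖ ^ j * C2 * 2 * 2 * (C2 * C3) by ring]
    gcongr
    · exact h1 j
    · rw [norm_pow]
    · exact h2 _
    · refine (norm_sub_le _ _).trans ?_
      have : ‖q ^ j‖ ≤ 1 := by rw [norm_pow]; exact pow_le_one₀ (norm_nonneg _) hq.le
      simp only [norm_one]; linarith
    · refine (norm_sub_le _ _).trans ?_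
      have := hazq (u + 1 + j)
      simp only [norm_one]; linarith
    · exact h2' j
    · exact h3 j)
  exact sub_eq_zero.mp (tendsto_nhds_unique hs ht)

lemma gT_sum {q a : ℂ} (hq : ‖q‖ < 1) (ha : ‖a‖ < 1) (u : ℕ) : ∀ {z : ℂ}, ‖z‖ < 1 →
    ∑' j, gT q a z u j = qPoch q q u * qPoch q (a * z) (u + 1) / qPoch q z (u + 1) := by
  induction u with
  | zero =>
    intro z hz
    rw [gT_zero_sum hq ha hz]
    simp [qPoch]
  | succ u ih =>
    intro z hz
    have h := gT_rec hq ha hz u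
    rw [ih (norm_mul_lt hq hz)] at h
    have h1 := one_sub_ne hz
    have h2 := qPoch_ne hq (norm_mul_lt hq hz) (u + 1)
    rw [qPoch_succ_left q z, qPoch_succ_left q (a * z), qPoch_succ q q u]
    rw [eq_div_iff (mul_ne_zero h1 h2), mul_left_comm, ← mul_assoc, h]
    rw [show a * (z * q) = a * z * q by ring]
    field_simp
    ring

lemma qBinom_of_le {q : ℂ} {n c : ℕ} (h : c ≤ n) :
    qBinom q n c = qPoch q q n / (qPoch q q c * qPoch q q (n - c)) := by
  simp [qBinom, h]

lemma qBinom_of_lt {q : ℂ} {n c : ℕ} (h : n < c) : qBinom q n c = 0 := by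
  simp [qBinom, not_le.2 h]

lemma qBinom_zero {q : ℂ} (hq : ‖q‖ < 1) (n : ℕ) : qBinom q n 0 = 1 := by
  rw [qBinom_of_le (Nat.zero_le n)]
  simp [qPoch_zero, qPoch_ne hq hq n]

lemma qBinom_pascal {q : ℂ} (hq : ‖q‖ < 1) {n j : ℕ} (h : j ≤ n) :
    qBinom q (n + 1) (j + 1) = qBinom q n (j + 1) + q ^ (n - j) * qBinom q n j := by
  obtain ⟨d, rfl⟩ := Nat.exists_eq_add_of_le h
  rcases d with _ | d
  · rw [qBinom_of_lt (show j + 0 < j + 1 by omega), qBinom_of_le (by omega), qBinom_of_le (by omega)]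
    simp [qPoch_zero, qPoch_ne hq hq]
  · rw [qBinom_of_le (by omega), qBinom_of_le (by omega), qBinom_of_le (by omega)]
    rw [show j + (d + 1) + 1 - (j + 1) = d + 1 by omega, show j + (d + 1) - (j + 1) = d by omega,
      show j + (d + 1) - j = d + 1 by omega]
    simp only [qPoch_succ, show j + (d + 1) = (j + d) + 1 by omega]
    have e1 := qPoch_ne hq hq j
    have e2 := qPoch_ne hq hq d
    have e3 := one_sub_ne (norm_mul_pow_lt hq hq j)
    have e4 := one_sub_ne (norm_mul_pow_lt hq hq d)
    simp only [pow_add, pow_one] at *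
    generalize q ^ j = J at *
    generalize q ^ d = D at *
    generalize hX : 1 - q * J = X at *
    generalize hY : 1 - q * D = Y at *
    field_simp
    rw [← hX, ← hY]
    ring

lemma q_vandermonde {q : ℂ} (hq : ‖q‖ < 1) (n : ℕ) : ∀ {B : ℂ}, ‖B‖ < 1 →
    ∑ j ∈ Finset.range (n + 1), B ^ j * q ^ (j ^ 2) * qBinom q n j / qPoch q (B * q) j
      = 1 / qPoch q (B * q) n := by
  induction n with
  | zero => intro B hB; simp [qPoch_zero, qBinom_zero hq]
  | succ n ih =>
    intro B hB
    have hBq := norm_mul_lt hq hB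
    have h1 := one_sub_ne hBq
    have h2 := qPoch_ne hq (norm_mul_lt hq hBq) n
    have h3 := qPoch_ne hq hBq n
    have key : ∀ j ∈ Finset.range (n + 1),
        B ^ (j + 1) * q ^ ((j + 1) ^ 2) * qBinom q (n + 1) (j + 1) / qPoch q (B * q) (j + 1)
        = B ^ (j + 1) * q ^ ((j + 1) ^ 2) * qBinom q n (j + 1) / qPoch q (B * q) (j + 1)
          + B * q ^ (n + 1) / (1 - B * q) *
            ((B * q) ^ j * q ^ (j ^ 2) * qBinom q n j / qPoch q (B * q * q) j) := by
      intro j hj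
      have hj' : j ≤ n := by simpa [Nat.lt_succ_iff] using hj
      rw [qBinom_pascal hq hj', mul_add, add_div]
      congr 1
      rw [qPoch_succ_left]
      have : q ^ ((j + 1) ^ 2) * q ^ (n - j) = q ^ (n + 1) * q ^ j * q ^ (j ^ 2) := by
        rw [← pow_add, ← pow_add, ← pow_add]
        congr 1
        have : n - j + j = n := Nat.sub_add_cancel hj'
        nlinarith
      rw [mul_assoc (B ^ (j + 1)), ← mul_assoc (q ^ _), this, mul_pow]
      have h4 := qPoch_ne hq (norm_mul_lt hq hBq) j
      generalize qPoch q (B * q * q) j = W at *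
      field_simp
      ring
    rw [Finset.sum_range_succ', Finset.sum_congr rfl key, Finset.sum_add_distrib, ← Finset.mul_sum,
      ih hBq]
    have h5 := ih hB
    have h6 := Finset.sum_range_succ' (fun j => B ^ j * q ^ (j ^ 2) * qBinom q n j / qPoch q (B * q) j)
      (n + 1)
    rw [Finset.sum_range_succ, qBinom_of_lt (Nat.lt_succ_self n), h5] at h6
    simp only [qBinom_zero hq] at h6 ⊢
    rw [add_right_comm, ← h6]
    have h7 : qPoch q (B * q) n * (1 - B * q * q ^ n) = (1 - B * q) * qPoch q (B * q * q) n := by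
      rw [← qPoch_succ, qPoch_succ_left]
    have h8 := one_sub_ne (norm_mul_pow_lt hq hBq n)
    rw [mul_zero, zero_div, add_zero, qPoch_succ]
    rw [div_mul_div_comm, mul_one, ← h7, pow_succ]
    generalize q ^ n = N at *
    generalize hY : 1 - B * q * N = Y at *
    field_simp
    rw [← hY]
    ring

/-- Bailey basis functions. -/
noncomputable def eB (q A : ℂ) (r n : ℕ) : ℂ :=
  if r ≤ n then qPoch q q n / (qPoch q q (n - r) * qPoch q A (n + r + 1)) else 0

lemma eB_of_lt {q A : ℂ} {r n : ℕ} (h : n < r) : eB q A r n = 0 := by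
  simp [eB, not_le.2 h]

lemma eB_add (q A : ℂ) (r d : ℕ) :
    eB q A r (r + d) = qPoch q q (r + d) / (qPoch q q d * qPoch q A (2 * r + 1 + d)) := by
  rw [eB, if_pos (by omega), show r + d - r = d by omega, show r + d + r + 1 = 2 * r + 1 + d by omega]

lemma eB_eig {q A : ℂ} (hq : ‖q‖ < 1) (hA : ‖A‖ < 1) (r n K : ℕ) (hK : n < K) :
    ∑ k ∈ Finset.range K, A ^ k * q ^ (k ^ 2) * qBinom q n k * eB q A r k
      = A ^ r * q ^ (r ^ 2) * eB q A r n := by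
  obtain ⟨t, rfl⟩ := Nat.exists_eq_add_of_le (show n + 1 ≤ K from hK)
  rw [Finset.sum_range_add, Finset.sum_eq_zero (s := Finset.range t), add_zero]
  swap
  · intro i _
    rw [qBinom_of_lt (by omega)]; simp
  rcases lt_or_ge n r with h | h
  · rw [eB_of_lt h, mul_zero]
    apply Finset.sum_eq_zero
    intro k hk
    rw [eB_of_lt (by simp at hk; omega), mul_zero]
  · obtain ⟨N, rfl⟩ := Nat.exists_eq_add_of_le h
    rw [add_assoc, Finset.sum_range_add, Finset.sum_eq_zero (s := Finset.range r), zero_add]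
    swap
    · intro i hi
      rw [eB_of_lt (by simpa using hi)]; simp
    have hB := norm_mul_pow_lt hq hA (2 * r)
    have hv := q_vandermonde hq N hB
    have hA1 : A * q ^ (2 * r) * q = A * q ^ (2 * r + 1) := by ring
    rw [hA1] at hv
    have n2 := qPoch_ne hq hA (2 * r + 1)
    have n3 := norm_mul_pow_lt hq hA (2 * r + 1)
    rw [eB_add, qPoch_add q A (2 * r + 1) N]
    have : A ^ r * q ^ r ^ 2 * (qPoch q q (r + N) / (qPoch q q N * (qPoch q A (2 * r + 1) *
        qPoch q (A * q ^ (2 * r + 1)) N)))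
        = (A ^ r * q ^ r ^ 2 * qPoch q q (r + N) / (qPoch q q N * qPoch q A (2 * r + 1))) *
          (1 / qPoch q (A * q ^ (2 * r + 1)) N) := by
      have n1 := qPoch_ne hq hq N
      have n4 := qPoch_ne hq n3 N
      field_simp
    rw [this, ← hv, Finset.mul_sum]
    apply Finset.sum_congr rfl
    intro j hj
    have hj : j ≤ N := by simpa [Nat.lt_succ_iff] using hj
    rw [eB_add, qPoch_add q A (2 * r + 1) j, qBinom_of_le (by omega), qBinom_of_le hj,
      show r + N - (r + j) = N - j by omega]
    have n1 := qPoch_ne hq hq N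
    have n4 := qPoch_ne hq n3 j
    have n5 := qPoch_ne hq hq (N - j)
    have n6 := qPoch_ne hq hq j
    have n7 := qPoch_ne hq hq (r + j)
    have p1 : q ^ ((r + j) ^ 2) = q ^ (r ^ 2) * (q ^ (2 * r)) ^ j * q ^ (j ^ 2) := by
      rw [← pow_mul, ← pow_add, ← pow_add]
      congr 1
      ring
    rw [p1, pow_add, mul_pow A]
    generalize q ^ (2 * r) ^ j = Z
    generalize qPoch q (A * q ^ (2 * r + 1)) j = Y at *
    field_simp

/-- unit Bailey pair coefficients -/
noncomputable def alphaB (q A : ℂ) (r : ℕ) : ℂ :=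
  (1 - A * q ^ (2 * r)) * qPoch q A r * (-1) ^ r * q ^ (r.choose 2) / qPoch q q r

lemma choose_two_succ (s : ℕ) : (s + 1).choose 2 = s + s.choose 2 := by
  rw [Nat.choose_succ_succ, Nat.choose_one_right]

lemma alpha_partial {q A : ℂ} (hq : ‖q‖ < 1) (hA : ‖A‖ < 1) (n s d : ℕ) (h : n = s + d) :
    (1 - q ^ n) * ∑ r ∈ Finset.range s, alphaB q A r * eB q A r n
      = - ((1 - q ^ s) * qPoch q A s * (-1) ^ s * q ^ (s.choose 2) * qPoch q q n /
        (qPoch q q s * qPoch q q d * qPoch q A (n + s))) := by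
  induction s generalizing d with
  | zero => simp
  | succ s ih =>
    rw [Finset.sum_range_succ, mul_add, ih (d + 1) (by omega), eB, if_pos (by omega), alphaB,
      choose_two_succ, show n - s = d + 1 by omega, show n + (s + 1) = n + s + 1 by ring]
    have n1 := qPoch_ne hq hq s
    have n2 := qPoch_ne hq hq d
    have n3 := qPoch_ne hq hA (n + s)
    have e1 := one_sub_ne (norm_mul_pow_lt hq hq s)
    have e2 := one_sub_ne (norm_mul_pow_lt hq hq d)
    have e3 := one_sub_ne (norm_mul_pow_lt hq hA (n + s))
    have hn : q ^ n = q ^ s * q * q ^ d := by rw [h]; ring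
    rw [show 2 * s = s + s by ring]
    simp only [qPoch_succ, pow_add, pow_one, hn] at *
    generalize qPoch q A (n + s) = W at *
    generalize qPoch q q n = W' at *
    generalize q ^ s = S at *
    generalize q ^ d = D at *
    generalize hX : 1 - q * S = X at *
    generalize hY : 1 - q * D = Y at *
    generalize hZ : 1 - A * (S * q * D * S) = Z at *
    field_simp
    rw [← hX, ← hY, ← hZ]
    ring

lemma alpha_delta {q A : ℂ} (hq : ‖q‖ < 1) (hA : ‖A‖ < 1) (n K : ℕ) (hK : n < K) :
    ∑ r ∈ Finset.range K, alphaB q A r * eB q A r n = if n = 0 then 1 else 0 := by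
  obtain ⟨t, rfl⟩ := Nat.exists_eq_add_of_le (show n + 1 ≤ K from hK)
  rw [Finset.sum_range_add, Finset.sum_eq_zero (s := Finset.range t), add_zero]
  swap
  · intro i _
    rw [eB_of_lt (by omega), mul_zero]
  rcases n with _ | n
  · simp [alphaB, eB, qPoch, one_sub_ne hA]
  · rw [if_neg (by omega)]
    have hne : 1 - q ^ (n + 1) ≠ 0 := by
      have := one_sub_ne (norm_mul_pow_lt hq hq n)
      rwa [← pow_succ'] at this
    have hp := alpha_partial hq hA (n + 1) (n + 1) 0 rfl
    apply (mul_eq_zero.1 _).resolve_left hne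
    rw [Finset.sum_range_succ, mul_add, hp]
    generalize n + 1 = n at *
    rw [eB, if_pos le_rfl, Nat.sub_self, alphaB, qPoch_succ]
    have n1 := qPoch_ne hq hq n
    have n2 := qPoch_ne hq hq 0
    have n3 := qPoch_ne hq hA (n + n)
    have e3 := one_sub_ne (norm_mul_pow_lt hq hA (n + n))
    rw [show 2 * n = n + n by ring]
    generalize hZ : 1 - A * q ^ (n + n) = Z at *
    field_simp
    ring

/-- coefficients after the change of parameter -/
noncomputable def yB (q B : ℂ) (r : ℕ) : ℂ :=
  qPoch q (B * q) r * (-1) ^ r * q ^ ((r + 1).choose 2) / qPoch q q r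

lemma convert_zero {q B : ℂ} (hq : ‖q‖ < 1) (hB : ‖B‖ < 1) (n : ℕ) :
    alphaB q B 0 * eB q B 0 (n + 1) = yB q B 0 * eB q (B * q) 0 n := by
  have n1 := qPoch_ne hq hq n
  have n2 := qPoch_ne hq (norm_mul_lt hq hB) (n + 1)
  have n3 := one_sub_ne hB
  have n4 := qPoch_ne hq hq (n + 1)
  simp only [alphaB, eB, yB, Nat.zero_le, if_true, Nat.sub_zero, add_zero, qPoch_zero,
    qPoch_succ_left q B (n + 1)]
  simp
  field_simp

lemma convert_succ {q B : ℂ} (hq : ‖q‖ < 1) (hB : ‖B‖ < 1) (r n : ℕ) :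
    alphaB q B (r + 1) * eB q B (r + 1) (n + 1)
      = yB q B (r + 1) * eB q (B * q) (r + 1) n - yB q B r * eB q (B * q) r n := by
  rcases lt_or_ge n r with h | h
  · rw [eB_of_lt (by omega), eB_of_lt (by omega), eB_of_lt (by omega)]; simp
  have hBq := norm_mul_lt hq hB
  have n1 := qPoch_ne hq hq n
  have n3 := one_sub_ne hB
  have n5 := qPoch_ne hq hq r
  have e1 := one_sub_ne (norm_mul_pow_lt hq hq r)
  obtain ⟨d, rfl⟩ := Nat.exists_eq_add_of_le h
  have n2 := qPoch_ne hq hBq (2 * r + 1 + d)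
  have e2 := one_sub_ne (norm_mul_pow_lt hq hBq (2 * r + 1 + d))
  have n6 := qPoch_ne hq hq d
  rw [eB_add, show r + d + 1 = (r + 1) + d by ring, eB_add]
  rcases d with _ | d
  · rw [eB_of_lt (by omega), alphaB, yB, yB]
    simp only [add_zero] at *
    rw [show 2 * (r + 1) + 1 = (2 * r + 1 + 1) + 1 by ring, qPoch_succ_left q B (2 * r + 1 + 1),
      qPoch_succ_left q B, qPoch_succ _ (B * q) (2 * r + 1), qPoch_succ q q r,
      show 2 * (r + 1) = r + r + 1 + 1 by ring]
    rw [show 2 * r + 1 = r + r + 1 by ring] at *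
    simp only [qPoch_zero, pow_add, pow_one] at *
    generalize q ^ r = R at *
    generalize qPoch q (B * q) (r + r + 1) = W at *
    generalize hX : 1 - q * R = X at *
    generalize hY : 1 - B * q * (R * R * q) = Y at *
    have hY2 : 1 - B * (R * R * q * q) = Y := by rw [← hY]; ring
    rw [hY2]
    field_simp
    ring
  · rw [show r + (d + 1) = r + 1 + d by ring, eB_add, alphaB, yB, yB]
    have e3 := one_sub_ne (norm_mul_pow_lt hq hq d)
    have n7 := qPoch_ne hq hq d
    rw [show 2 * (r + 1) + 1 + (d + 1) = (2 * r + 1 + (d + 1) + 1) + 1 by ring,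
      show 2 * (r + 1) + 1 + d = (2 * r + 1 + (d + 1)) + 1 by ring,
      show r + 1 + (d + 1) = r + 1 + d + 1 by ring,
      qPoch_succ_left q B (2 * r + 1 + (d + 1) + 1), qPoch_succ_left q B r, qPoch_succ _ (B * q) (2 * r + 1 + (d + 1)),
      qPoch_succ q q r, qPoch_succ q q d, qPoch_succ q q (r + 1 + d),
      qPoch_succ q (B * q) r, choose_two_succ (r + 1)]
    rw [show 2 * (r + 1) = r + r + 1 + 1 by ring]
    rw [show 2 * r + 1 + (d + 1) = r + r + 1 + (d + 1) by ring] at *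
    generalize qPoch q q (r + 1 + d) = W' at *
    generalize qPoch q (B * q) (r + r + 1 + (d + 1)) = W at *
    simp only [pow_add, pow_one] at *
    generalize q ^ r = R at *
    generalize q ^ d = D at *
    generalize hX : 1 - q * R = X at *
    generalize hY : 1 - B * q * (R * R * q * (D * q)) = Y at *
    generalize hZ : 1 - q * D = Z at *
    field_simp
    rw [← hX, ← hY, ← hZ]
    ring

lemma convert_sum {q B : ℂ} (hq : ‖q‖ < 1) (hB : ‖B‖ < 1) (L : ℕ → ℂ) (n K : ℕ) :
    ∑ r ∈ Finset.range (K + 1), alphaB q B r * L r * eB q B r (n + 1)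
      = ∑ r ∈ Finset.range K, yB q B r * (L r - L (r + 1)) * eB q (B * q) r n
        + L K * yB q B K * eB q (B * q) K n := by
  induction K with
  | zero =>
    have := convert_zero hq hB n
    simp only [zero_add, Finset.sum_range_one, Finset.range_zero, Finset.sum_empty]
    linear_combination L 0 * this
  | succ K ih =>
    rw [Finset.sum_range_succ, ih, Finset.sum_range_succ]
    have := convert_succ hq hB K n
    linear_combination L (K + 1) * this

lemma L_eB {q x : ℂ} (hq : ‖q‖ < 1) (hx : ‖x‖ < 1) (r : ℕ) :
    ∑' n, qPoch q x (n + 1) * x ^ n * eB q (x ^ 2 * q) r n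
      = qPoch q q r * x ^ r / qPoch q (x ^ 2 * q) r := by
  have hx2 : ‖x ^ 2‖ < 1 := by rw [pow_two]; exact norm_mul_lt hx hx
  have hA := norm_mul_lt hq hx2
  have ha := norm_mul_pow_lt hq hx (r + 1)
  have n1 := qPoch_ne hq hA (2 * r + 1)
  have n2 := qPoch_ne hq hx (r + 1)
  have key : ∀ j, qPoch q x (j + r + 1) * x ^ (j + r) * eB q (x ^ 2 * q) r (j + r)
      = x ^ r * qPoch q x (r + 1) / qPoch q (x ^ 2 * q) (2 * r + 1) *
        gT q (x * q ^ (r + 1)) x r j := by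
    intro j
    rw [add_comm j r, eB_add, qPoch_add q _ (2 * r + 1) j, gT,
      show r + j + 1 = r + 1 + j by ring, qPoch_add q x,
      show x * q ^ (r + 1) * x * q ^ (r + 1) = x ^ 2 * q * q ^ (2 * r + 1) by ring]
    have n3 := qPoch_ne hq hq j
    have n4 := qPoch_ne hq (norm_mul_pow_lt hq hA (2 * r + 1)) j
    generalize qPoch q (x ^ 2 * q * q ^ (2 * r + 1)) j = W at *
    generalize qPoch q (x * q ^ (r + 1)) j = W' at *
    generalize qPoch q (x ^ 2 * q) (2 * r + 1) = W'' at *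
    field_simp
    ring
  have hs := ((gT_summable hq ha hx r).hasSum.mul_left
    (x ^ r * qPoch q x (r + 1) / qPoch q (x ^ 2 * q) (2 * r + 1)))
  simp only [← key] at hs
  have h2 := (hasSum_nat_add_iff (f := fun n => qPoch q x (n + 1) * x ^ n * eB q (x ^ 2 * q) r n)
    r).1 hs
  rw [Finset.sum_eq_zero, add_zero] at h2
  · rw [h2.tsum_eq, gT_sum hq ha r hx]
    have e1 : 2 * r + 1 = r + (r + 1) := by ring
    have e2 : x * q ^ (r + 1) * x = x ^ 2 * q * q ^ r := by ring
    rw [e1, qPoch_add] at n1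
    rw [e1, qPoch_add q (x ^ 2 * q), e2]
    have n5 := (mul_ne_zero_iff.1 n1).1
    have n6 := (mul_ne_zero_iff.1 n1).2
    generalize qPoch q (x ^ 2 * q * q ^ r) (r + 1) = W at *
    generalize qPoch q (x ^ 2 * q) r = W' at *
    field_simp
  · intro i hi
    rw [eB_of_lt (by simpa using hi), mul_zero]

/-- link weights -/
noncomputable def wt (q x : ℂ) (a i k n : ℕ) : ℂ :=
  if i < a then q ^ (k ^ 2) * x ^ (2 * k) * qBinom q n k
  else if i = a then q ^ (k ^ 2) * x ^ (2 * k) * qBinom q (n + 1) k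
  else q ^ (k ^ 2 + k) * x ^ (2 * k) * qBinom q n k

/-- nested inner sums -/
noncomputable def gI (q x : ℂ) (a : ℕ) : ℕ → ℕ → ℂ
  | 0, n => if n = 0 then 1 else 0
  | i + 1, n => ∑ k ∈ Finset.range (n + 2), wt q x a i k n * gI q x a i k

lemma wt_zero {q x : ℂ} (hq : ‖q‖ < 1) (a i n : ℕ) : wt q x a i 0 n = 1 := by
  simp [wt, qBinom_zero hq]

lemma wt_of_lt {q x : ℂ} {a i k n : ℕ} (h : n + 2 ≤ k) : wt q x a i k n = 0 := by
  simp [wt, qBinom_of_lt (show n < k by omega), qBinom_of_lt (show n + 1 < k by omega)]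

lemma Hterm_eq {q x : ℂ} (hq : ‖q‖ < 1) {m a : ℕ} (ha : a < m) (k : Fin m → ℕ) :
    Hterm q x m a k = qPoch q x (Kfun m k m + 1) * x ^ (Kfun m k m) *
      ∏ i ∈ Finset.range m, wt q x a i (Kfun m k i) (Kfun m k (i + 1)) := by
  have h0 : Kfun m k 0 = 0 := by simp [Kfun]
  have h1 : ∏ i ∈ Finset.range m, wt q x a i (Kfun m k i) (Kfun m k (i + 1))
      = (∏ i ∈ Finset.Ico 1 a, wt q x a i (Kfun m k i) (Kfun m k (i + 1))) *
        (wt q x a a (Kfun m k a) (Kfun m k (a + 1)) *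
        ∏ i ∈ Finset.Ico (a + 1) m, wt q x a i (Kfun m k i) (Kfun m k (i + 1))) := by
    rw [Finset.range_eq_Ico, ← Finset.prod_Ico_consecutive _ (Nat.zero_le a) ha.le,
      Finset.prod_eq_prod_Ico_succ_bot ha]
    congr 1
    rcases Nat.eq_zero_or_pos a with rfl | hp
    · simp
    · rw [Finset.prod_eq_prod_Ico_succ_bot hp, h0, wt_zero hq, one_mul]
  rw [h1, Hterm]
  have e1 : ∏ i ∈ Finset.Ico 1 a, wt q x a i (Kfun m k i) (Kfun m k (i + 1))
      = ∏ i ∈ Finset.Ico 1 a, q ^ (Kfun m k i ^ 2) * x ^ (2 * Kfun m k i) *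
        qBinom q (Kfun m k (i + 1)) (Kfun m k i) := by
    apply Finset.prod_congr rfl
    intro i hi
    rw [wt, if_pos (Finset.mem_Ico.1 hi).2]
  have e2 : ∏ i ∈ Finset.Ico (a + 1) m, wt q x a i (Kfun m k i) (Kfun m k (i + 1))
      = ∏ i ∈ Finset.Ico (a + 1) m, q ^ (Kfun m k i ^ 2 + Kfun m k i) * x ^ (2 * Kfun m k i) *
        qBinom q (Kfun m k (i + 1)) (Kfun m k i) := by
    apply Finset.prod_congr rfl
    intro i hi
    have := (Finset.mem_Ico.1 hi).1
    rw [wt, if_neg (by omega), if_neg (by omega)]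
  rw [e1, e2, wt, if_neg (lt_irrefl a), if_pos rfl]
  ring

lemma step_sum {q A : ℂ} (hq : ‖q‖ < 1) (hA : ‖A‖ < 1) {g c : ℕ → ℂ}
    (hg : ∀ k N, k < N → g k = ∑ r ∈ Finset.range N, c r * eB q A r k) (n K N : ℕ)
    (hK : n < K) (hN : n < N) :
    ∑ k ∈ Finset.range K, A ^ k * q ^ (k ^ 2) * qBinom q n k * g k
      = ∑ r ∈ Finset.range N, c r * (A ^ r * q ^ (r ^ 2)) * eB q A r n := by
  have : ∀ k ∈ Finset.range K, A ^ k * q ^ (k ^ 2) * qBinom q n k * g k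
      = ∑ r ∈ Finset.range N, c r * (A ^ k * q ^ (k ^ 2) * qBinom q n k * eB q A r k) := by
    intro k _
    rcases lt_or_ge n k with h | h
    · simp [qBinom_of_lt h]
    · rw [hg k N (by omega), Finset.mul_sum]
      apply Finset.sum_congr rfl
      intro r _
      ring
  rw [Finset.sum_congr rfl this, Finset.sum_comm]
  apply Finset.sum_congr rfl
  intro r _
  rw [← Finset.mul_sum, eB_eig hq hA r n K hK]
  ring

/-- eigenvalues -/
noncomputable def lam (q A : ℂ) (r : ℕ) : ℂ := A ^ r * q ^ (r ^ 2)

lemma gI_low {q x : ℂ} (hq : ‖q‖ < 1) (hx : ‖x‖ < 1) (a i : ℕ) (hi : i ≤ a) :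
    ∀ n N, n < N → gI q x a i n
      = ∑ r ∈ Finset.range N, alphaB q (x ^ 2) r * lam q (x ^ 2) r ^ i * eB q (x ^ 2) r n := by
  have hx2 : ‖x ^ 2‖ < 1 := by rw [pow_two]; exact norm_mul_lt hx hx
  induction i with
  | zero =>
    intro n N h
    simp only [pow_zero, mul_one, gI]
    rw [alpha_delta hq hx2 n N h]
  | succ i ih =>
    intro n N h
    have := step_sum hq hx2 (ih (by omega)) n (n + 2) N (by omega) h
    refine Eq.trans ?_ (this.trans ?_)
    · rw [gI]
      apply Finset.sum_congr rfl
      intro k _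
      rw [wt, if_pos (by omega), ← pow_mul]
      ring
    · apply Finset.sum_congr rfl
      intro r _
      rw [pow_succ _ i, lam]
      ring

lemma gI_mid {q x : ℂ} (hq : ‖q‖ < 1) (hx : ‖x‖ < 1) (a : ℕ) :
    ∀ n N, n < N → gI q x a (a + 1) n
      = ∑ r ∈ Finset.range N, yB q (x ^ 2) r *
        (lam q (x ^ 2) r ^ (a + 1) - lam q (x ^ 2) (r + 1) ^ (a + 1)) * eB q (x ^ 2 * q) r n := by
  have hx2 : ‖x ^ 2‖ < 1 := by rw [pow_two]; exact norm_mul_lt hx hx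
  intro n N h
  have h1 := step_sum hq hx2 (gI_low hq hx a a le_rfl) (n + 1) (n + 2) (N + 1) (by omega) (by omega)
  have h2 := convert_sum hq hx2 (fun r => lam q (x ^ 2) r ^ (a + 1)) n N
  rw [eB_of_lt h, mul_zero, add_zero] at h2
  rw [← h2]
  refine Eq.trans ?_ (h1.trans ?_)
  · rw [gI]
    apply Finset.sum_congr rfl
    intro k _
    rw [wt, if_neg (by omega), if_pos rfl, ← pow_mul]
    ring
  · apply Finset.sum_congr rfl
    intro r _
    rw [pow_succ _ a, lam]
    ring

lemma gI_high {q x : ℂ} (hq : ‖q‖ < 1) (hx : ‖x‖ < 1) (a M : ℕ) :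
    ∀ n N, n < N → gI q x a (a + 1 + M) n
      = ∑ r ∈ Finset.range N, yB q (x ^ 2) r *
        (lam q (x ^ 2) r ^ (a + 1) - lam q (x ^ 2) (r + 1) ^ (a + 1)) *
        lam q (x ^ 2 * q) r ^ M * eB q (x ^ 2 * q) r n := by
  have hx2 : ‖x ^ 2‖ < 1 := by rw [pow_two]; exact norm_mul_lt hx hx
  induction M with
  | zero => simpa using gI_mid hq hx a
  | succ M ih =>
    intro n N h
    have h1 := step_sum hq (norm_mul_lt hq hx2) ih n (n + 2) N (by omega) h
    refine Eq.trans ?_ (h1.trans ?_)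
    · rw [← add_assoc, gI]
      apply Finset.sum_congr rfl
      intro k _
      rw [wt, if_neg (by omega), if_neg (by omega), mul_pow, ← pow_mul, pow_add]
      ring
    · apply Finset.sum_congr rfl
      intro r _
      rw [pow_succ _ M, show lam q (x ^ 2 * q) r = (x ^ 2 * q) ^ r * q ^ (r ^ 2) from rfl]
      ring

lemma Kfun_snoc_le {m : ℕ} (k : Fin m → ℕ) (n i : ℕ) (hi : i ≤ m) :
    Kfun (m + 1) (Fin.snoc (α := fun _ => ℕ) k n) i = Kfun m k i := by
  unfold Kfun
  by_cases h : 1 ≤ i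
  · rw [dif_pos ⟨h, by omega⟩, dif_pos ⟨h, hi⟩]
    have : (⟨i - 1, by omega⟩ : Fin (m + 1)) = Fin.castSucc ⟨i - 1, by omega⟩ := rfl
    rw [this, Fin.snoc_castSucc]
  · rw [dif_neg (by omega), dif_neg (by omega)]

lemma Kfun_snoc_last {m : ℕ} (k : Fin m → ℕ) (n : ℕ) :
    Kfun (m + 1) (Fin.snoc (α := fun _ => ℕ) k n) (m + 1) = n := by
  unfold Kfun
  rw [dif_pos ⟨by omega, le_rfl⟩]
  have : (⟨m + 1 - 1, by omega⟩ : Fin (m + 1)) = Fin.last m := rfl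
  rw [this, Fin.snoc_last]

/-- snoc as an equivalence -/
def snocE (m : ℕ) : ℕ × (Fin m → ℕ) ≃ (Fin (m + 1) → ℕ) := Fin.snocEquiv (fun _ => ℕ)

lemma snocE_apply (m : ℕ) (p : ℕ × (Fin m → ℕ)) :
    snocE m p = Fin.snoc (α := fun _ => ℕ) p.2 p.1 := rfl

lemma dom_summable {ρ C : ℝ} (h0 : 0 ≤ ρ) (h1 : ρ < 1) (hC : 0 ≤ C) (m : ℕ) :
    Summable (fun k : Fin m → ℕ => ρ ^ (Kfun m k m) *
      ∏ i ∈ Finset.range m, (C * ρ ^ (Kfun m k i))) := by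
  induction m with
  | zero => exact Summable.of_finite
  | succ m ih =>
    rw [← (snocE m).summable_iff]
    have h2 := ((summable_geometric_of_lt_one h0 h1).mul_left C).mul_of_nonneg ih
      (fun n => by positivity) (fun k => by positivity)
    refine h2.congr ?_
    rintro ⟨n, k⟩
    simp only [Function.comp, snocE_apply]
    rw [Kfun_snoc_last, Finset.prod_range_succ, Kfun_snoc_le k n m le_rfl]
    have : ∏ i ∈ Finset.range m, (C * ρ ^ Kfun (m + 1) (Fin.snoc (α := fun _ => ℕ) k n) i)
        = ∏ i ∈ Finset.range m, (C * ρ ^ Kfun m k i) := by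
      apply Finset.prod_congr rfl
      intro i hi
      rw [Kfun_snoc_le k n i (Finset.mem_range.1 hi).le]
    rw [this]
    ring

lemma wt_bdd {q x : ℂ} (hq : ‖q‖ < 1) (hx : ‖x‖ < 1) (a : ℕ) :
    ∃ C : ℝ, 0 < C ∧ ∀ i k n, ‖wt q x a i k n‖ ≤ C * ‖x‖ ^ k := by
  obtain ⟨C, hC, h1, h2⟩ := qPoch_bdd hq hq
  have hb : ∀ n k, ‖qBinom q n k‖ ≤ C * (C * C) := by
    intro n k
    rcases lt_or_ge n k with h | h
    · rw [qBinom_of_lt h, norm_zero]; positivity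
    · rw [qBinom_of_le h, div_eq_mul_inv, mul_inv, norm_mul, norm_mul]
      gcongr
      · exact h1 _
      · exact h2 _
      · exact h2 _
  have hw : ∀ e n k : ℕ, ‖q ^ e * x ^ (2 * k) * qBinom q n k‖ ≤ C * (C * C) * ‖x‖ ^ k := by
    intro e n k
    rw [norm_mul, norm_mul, norm_pow, norm_pow]
    have e1 : ‖q‖ ^ e ≤ 1 := pow_le_one₀ (norm_nonneg _) hq.le
    have e2 : ‖x‖ ^ (2 * k) ≤ ‖x‖ ^ k :=
      pow_le_pow_of_le_one (norm_nonneg _) hx.le (by omega)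
    calc ‖q‖ ^ e * ‖x‖ ^ (2 * k) * ‖qBinom q n k‖ ≤ 1 * ‖x‖ ^ k * (C * (C * C)) := by
          gcongr
          exact hb n k
      _ = _ := by ring
  refine ⟨C * (C * C), by positivity, fun i k n => ?_⟩
  unfold wt
  split_ifs
  · exact hw _ _ _
  · rw [show C * (C * C) = C * (C * C) from rfl]
    exact hw _ _ _
  · exact hw _ _ _

lemma term_summable {q x : ℂ} (hq : ‖q‖ < 1) (hx : ‖x‖ < 1) (a m : ℕ) (φ : ℕ → ℂ)
    (hφ : ∃ C : ℝ, ∀ n, ‖φ n‖ ≤ C * ‖x‖ ^ n) :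
    Summable (fun k : Fin m → ℕ => φ (Kfun m k m) *
      ∏ i ∈ Finset.range m, wt q x a i (Kfun m k i) (Kfun m k (i + 1))) := by
  obtain ⟨C, hC⟩ := hφ
  obtain ⟨D, hD, hw⟩ := wt_bdd hq hx a
  refine Summable.of_norm_bounded ((dom_summable (norm_nonneg x) hx hD.le m).mul_left C) ?_
  intro k
  rw [norm_mul, norm_prod, ← mul_assoc]
  refine mul_le_mul (hC _) ?_ (by positivity) ((norm_nonneg _).trans (hC _))
  exact Finset.prod_le_prod (fun _ _ => norm_nonneg _) (fun i _ => hw _ _ _)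

lemma term_tsum {q x : ℂ} (hq : ‖q‖ < 1) (hx : ‖x‖ < 1) (a m : ℕ) : ∀ (φ : ℕ → ℂ),
    (∃ C : ℝ, ∀ n, ‖φ n‖ ≤ C * ‖x‖ ^ n) →
    ∑' k : Fin m → ℕ, φ (Kfun m k m) *
      ∏ i ∈ Finset.range m, wt q x a i (Kfun m k i) (Kfun m k (i + 1))
      = ∑' n, φ n * gI q x a m n := by
  induction m with
  | zero =>
    intro φ _
    have hr : ∑' n, φ n * gI q x a 0 n = φ 0 := by
      rw [tsum_eq_single 0 (by intro n hn; simp [gI, hn])]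
      simp [gI]
    rw [hr, tsum_eq_single (default : Fin 0 → ℕ)
      (by intro n hn; exact absurd (Subsingleton.elim _ _) hn)]
    simp [Kfun]
  | succ m ih =>
    intro φ hφ
    have hs := term_summable hq hx a (m + 1) φ hφ
    rw [← (snocE m).summable_iff] at hs
    rw [← (snocE m).tsum_eq]
    refine (Summable.tsum_prod hs).trans ?_
    apply tsum_congr
    intro n
    obtain ⟨D, hD, hw⟩ := wt_bdd hq hx a
    have h1 := ih (fun j => wt q x a m j n) ⟨D, fun j => hw m j n⟩
    rw [tsum_eq_sum (s := Finset.range (n + 2))] at h1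
    · rw [gI, ← h1, ← tsum_mul_left]
      apply tsum_congr
      intro k
      simp only [Function.comp, snocE_apply]
      rw [Kfun_snoc_last, Finset.prod_range_succ, Kfun_snoc_le k n m le_rfl, Kfun_snoc_last]
      have : ∏ i ∈ Finset.range m, wt q x a i (Kfun (m + 1) (Fin.snoc (α := fun _ => ℕ) k n) i)
            (Kfun (m + 1) (Fin.snoc (α := fun _ => ℕ) k n) (i + 1))
          = ∏ i ∈ Finset.range m, wt q x a i (Kfun m k i) (Kfun m k (i + 1)) := by
        apply Finset.prod_congr rfl
        intro i hi
        have := Finset.mem_range.1 hi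
        rw [Kfun_snoc_le k n i this.le, Kfun_snoc_le k n (i + 1) this]
      rw [this]
      ring
    · intro j hj
      rw [wt_of_lt (by simpa using hj), zero_mul]

/-- terms of the single series for `H` -/
noncomputable def sT (q x : ℂ) (a M r : ℕ) : ℂ :=
  (-1) ^ r * q ^ ((r + 1).choose 2) * x ^ r *
    (lam q (x ^ 2) r ^ (a + 1) - lam q (x ^ 2) (r + 1) ^ (a + 1)) * lam q (x ^ 2 * q) r ^ M

lemma lam_bdd {q x : ℂ} (hq : ‖q‖ < 1) (hx : ‖x‖ < 1) (r : ℕ) : ‖lam q (x ^ 2) r‖ ≤ ‖x‖ ^ r := by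
  rw [lam, norm_mul, norm_pow, norm_pow, norm_pow, ← pow_mul]
  have e1 : ‖q‖ ^ (r ^ 2) ≤ 1 := pow_le_one₀ (norm_nonneg _) hq.le
  have e2 : ‖x‖ ^ (2 * r) ≤ ‖x‖ ^ r :=
    pow_le_pow_of_le_one (norm_nonneg _) hx.le (by omega)
  calc ‖x‖ ^ (2 * r) * ‖q‖ ^ (r ^ 2) ≤ ‖x‖ ^ r * 1 := by gcongr
    _ = _ := mul_one _

lemma lam_diff_bdd {q x : ℂ} (hq : ‖q‖ < 1) (hx : ‖x‖ < 1) (a r : ℕ) :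
    ‖lam q (x ^ 2) r ^ (a + 1) - lam q (x ^ 2) (r + 1) ^ (a + 1)‖ ≤ 2 * ‖x‖ ^ r := by
  have h : ∀ s, ‖lam q (x ^ 2) s ^ (a + 1)‖ ≤ ‖x‖ ^ s := by
    intro s
    rw [norm_pow]
    have h1 := lam_bdd hq hx s
    have h2 : ‖x‖ ^ s ≤ 1 := pow_le_one₀ (norm_nonneg _) hx.le
    exact (pow_le_of_le_one (norm_nonneg _) (h1.trans h2) (by omega)).trans h1
  have h3 : ‖x‖ ^ (r + 1) ≤ ‖x‖ ^ r := pow_le_pow_of_le_one (norm_nonneg _) hx.le (by omega)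
  refine (norm_sub_le _ _).trans ?_
  linarith [h r, h (r + 1)]

lemma lam_pow_bdd {q A : ℂ} (hq : ‖q‖ < 1) (hA : ‖A‖ < 1) (M r : ℕ) : ‖lam q A r ^ M‖ ≤ 1 := by
  rw [lam, norm_pow, norm_mul, norm_pow, norm_pow]
  apply pow_le_one₀ (by positivity)
  exact mul_le_one₀ (pow_le_one₀ (norm_nonneg _) hA.le) (by positivity)
    (pow_le_one₀ (norm_nonneg _) hq.le)

lemma sT_summable {q x : ℂ} (hq : ‖q‖ < 1) (hx : ‖x‖ < 1) (a M : ℕ) : Summable (sT q x a M) := by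
  have hx2 : ‖x ^ 2‖ < 1 := by rw [pow_two]; exact norm_mul_lt hx hx
  refine Summable.of_norm_bounded
    ((summable_geometric_of_lt_one (norm_nonneg x) hx).mul_left 2) ?_
  intro r
  rw [sT, norm_mul, norm_mul, norm_mul, norm_mul]
  have e1 : ‖(-1 : ℂ) ^ r‖ = 1 := by simp
  have e2 : ‖q ^ ((r + 1).choose 2)‖ ≤ 1 := by
    rw [norm_pow]; exact pow_le_one₀ (norm_nonneg _) hq.le
  have e3 : ‖x ^ r‖ ≤ 1 := by
    rw [norm_pow]; exact pow_le_one₀ (norm_nonneg _) hx.le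
  calc _ ≤ 1 * 1 * 1 * (2 * ‖x‖ ^ r) * 1 := by
        rw [e1]
        gcongr
        · exact lam_diff_bdd hq hx a r
        · exact lam_pow_bdd hq (norm_mul_lt hq hx2) M r
    _ = _ := by ring

lemma Hm_eq {q x : ℂ} (hq : ‖q‖ < 1) (hx : ‖x‖ < 1) (a M : ℕ) :
    Hm q (a + 1 + M) a x = ∑' r, sT q x a M r := by
  have hx2 : ‖x ^ 2‖ < 1 := by rw [pow_two]; exact norm_mul_lt hx hx
  have hA := norm_mul_lt hq hx2
  obtain ⟨C1, p1, h1, -⟩ := qPoch_bdd hq hx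
  obtain ⟨C2, p2, h2, h2'⟩ := qPoch_bdd hq hq
  obtain ⟨C3, p3, h3, h3'⟩ := qPoch_bdd hq hA
  have hφ : ∀ n, ‖qPoch q x (n + 1) * x ^ n‖ ≤ C1 * ‖x‖ ^ n := by
    intro n
    rw [norm_mul, norm_pow]
    gcongr
    exact h1 _
  set D : ℕ → ℂ := fun r => yB q (x ^ 2) r *
        (lam q (x ^ 2) r ^ (a + 1) - lam q (x ^ 2) (r + 1) ^ (a + 1)) *
        lam q (x ^ 2 * q) r ^ M with hD
  have hDb : ∀ r, ‖D r‖ ≤ C3 * C2 * 2 * ‖x‖ ^ r := by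
    intro r
    have e2 : ‖q ^ ((r + 1).choose 2)‖ ≤ 1 := by
      rw [norm_pow]; exact pow_le_one₀ (norm_nonneg _) hq.le
    have hy : ‖yB q (x ^ 2) r‖ ≤ C3 * C2 := by
      rw [yB, div_eq_mul_inv, norm_mul, norm_mul, norm_mul]
      have e1 : ‖(-1 : ℂ) ^ r‖ = 1 := by simp
      calc _ ≤ C3 * 1 * 1 * C2 := by
            rw [e1]
            gcongr
            · exact h3 r
            · exact h2' r
        _ = _ := by ring
    simp only [hD]
    rw [norm_mul, norm_mul]
    calc _ ≤ C3 * C2 * (2 * ‖x‖ ^ r) * 1 := by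
          gcongr
          · exact lam_diff_bdd hq hx a r
          · exact lam_pow_bdd hq hA M r
      _ = _ := by ring
  have heb : ∀ r n, ‖eB q (x ^ 2 * q) r n‖ ≤ C2 * (C2 * C3) := by
    intro r n
    rcases lt_or_ge n r with h | h
    · rw [eB_of_lt h, norm_zero]; positivity
    · rw [eB, if_pos h, div_eq_mul_inv, mul_inv, norm_mul, norm_mul]
      gcongr
      · exact h2 _
      · exact h2' _
      · exact h3' _
  have hsum : Summable (Function.uncurry fun n r : ℕ =>
      qPoch q x (n + 1) * x ^ n * (D r * eB q (x ^ 2 * q) r n)) := by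
    have hg := (summable_geometric_of_lt_one (norm_nonneg x) hx).mul_of_nonneg
      (summable_geometric_of_lt_one (norm_nonneg x) hx) (fun n => by positivity)
      (fun n => by positivity)
    refine Summable.of_norm_bounded
      (hg.mul_left (C1 * (C3 * C2 * 2) * (C2 * (C2 * C3)))) ?_
    rintro ⟨n, r⟩
    simp only [Function.uncurry]
    rw [norm_mul, norm_mul (D r)]
    calc _ ≤ (C1 * ‖x‖ ^ n) * ((C3 * C2 * 2 * ‖x‖ ^ r) * (C2 * (C2 * C3))) := by
          gcongr
          · exact hφ n
          · exact hDb r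
          · exact heb r n
      _ = _ := by ring
  have s1 : Hm q (a + 1 + M) a x
      = ∑' n, qPoch q x (n + 1) * x ^ n * gI q x a (a + 1 + M) n := by
    rw [Hm, ← term_tsum hq hx a (a + 1 + M) (fun n => qPoch q x (n + 1) * x ^ n) ⟨C1, hφ⟩]
    apply tsum_congr
    intro k
    rw [Hterm_eq hq (by omega)]
  have s2 : ∀ n, qPoch q x (n + 1) * x ^ n * gI q x a (a + 1 + M) n
      = ∑' r, qPoch q x (n + 1) * x ^ n * (D r * eB q (x ^ 2 * q) r n) := by
    intro n
    rw [tsum_mul_left, tsum_eq_sum (s := Finset.range (n + 1)),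
      gI_high hq hx a M n (n + 1) (Nat.lt_succ_self n)]
    intro r hr
    rw [eB_of_lt (by simpa [Nat.lt_succ_iff] using hr), mul_zero]
  rw [s1, tsum_congr s2, ← hsum.tsum_comm]
  apply tsum_congr
  intro r
  have s3 : ∀ n, qPoch q x (n + 1) * x ^ n * (D r * eB q (x ^ 2 * q) r n)
      = D r * (qPoch q x (n + 1) * x ^ n * eB q (x ^ 2 * q) r n) := fun n => by ring
  rw [tsum_congr s3, tsum_mul_left, L_eB hq hx]
  simp only [hD, sT, yB]
  have n1 := qPoch_ne hq hq r
  have n2 := qPoch_ne hq hA r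
  generalize qPoch q (x ^ 2 * q) r = W at *
  field_simp

lemma sT_zero (q x : ℂ) (a M : ℕ) : sT q x a M 0 = 1 - q ^ (a + 1) * x ^ (2 * a + 2) := by
  simp [sT, lam]
  ring

lemma sT_succ (q x : ℂ) (a M r : ℕ) : sT q x a M (r + 1)
    = - (q ^ (2 * M + a + 2) * x ^ (2 * (a + 1 + M) + 1)) * sT q (q * x) a M r := by
  have l1 : ∀ s, lam q (x ^ 2) (s + 1) = x ^ 2 * q * lam q ((q * x) ^ 2) s := by
    intro s
    simp only [lam]
    ring
  have l2 : lam q (x ^ 2 * q) (r + 1) = x ^ 2 * q ^ 2 * lam q ((q * x) ^ 2 * q) r := by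
    simp only [lam]
    ring
  rw [sT, sT, l1, l1, l2, choose_two_succ (r + 1)]
  generalize lam q ((q * x) ^ 2 * q) r = L1
  generalize lam q ((q * x) ^ 2) r = L2
  generalize lam q ((q * x) ^ 2) (r + 1) = L3
  simp only [mul_pow, pow_add]
  ring

theorem stmt_9 (m a : ℕ) (hm : 1 ≤ m) (ha : a < m) (q x : ℂ)
    (hq : ‖q‖ < 1) (hx : ‖x‖ < 1) :
    Hm q m a x
      = 1 - q ^ (a + 1) * x ^ (2 * a + 2)
        - q ^ (2 * m - a) * x ^ (2 * m + 1) * Hm q m a (q * x) := by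
  obtain ⟨M, rfl⟩ := Nat.exists_eq_add_of_le (show a + 1 ≤ m from ha)
  have hqx : ‖q * x‖ < 1 := norm_mul_lt hx hq
  rw [Hm_eq hq hx, Hm_eq hq hqx, (sT_summable hq hx a M).tsum_eq_zero_add, sT_zero,
    tsum_congr (sT_succ q x a M), tsum_mul_left,
    show 2 * (a + 1 + M) - a = 2 * M + a + 2 by omega]
  ring
end
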